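/- arXiv:math/0606027 — 3 statements merged into one kernel-verified Lean document; each statement's English description precedes it below -/
import Mathlib

section
/- Let n ≥ 1 be odd, let G be a finite group acting freely and continuously on the unit sphere Sⁿ ⊂ ℝⁿ⁺¹, and let N = Sⁿ/G be the orbit space with the quotient topology. Let m > 1 and let f₁, f₂ : Sᵐ → N be continuous maps that are NOT homotopic to each other. Then MCC(f₁, f₂) equals the order of G (equivalently, the order of π₁(N)); i.e., the minimum over all f₁' homotopic to f₁ and f₂' homotopic to f₂ of the number of connected components of the coincidence set C(f₁', f₂') equals |G|. -/
/-- The minimum number of coincidence components: the infimum, over all pairs of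
continuous maps homotopic to `f₁` and `f₂` respectively, of the (extended-natural)
number of connected components of the coincidence set. -/
noncomputable def MCC {M N : Type*} [TopologicalSpace M] [TopologicalSpace N]
    (f₁ f₂ : C(M, N)) : ℕ∞ :=
  ⨅ (g₁ : C(M, N)) (_ : g₁.Homotopic f₁) (g₂ : C(M, N)) (_ : g₂.Homotopic f₂),
    ENat.card (ConnectedComponents {x : M // g₁ x = g₂ x})

/-!
Lift both maps to the universal cover `Sⁿ`. The coincidence set of `f₁` and `f₂` is then the
disjoint union, over `g ∈ G`, of the closed sets `C g = {F₁ = g • F₂}`. If some `C g` were empty,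
`F₁` would be homotopic to `-(g • F₂)`, hence to `g • F₂` because `n` is odd, and `f₁` would be
homotopic to `f₂`; so every coincidence set has at least `|G|` components.

Conversely all the sets `C g` can be made connected. For `n = 1` any two maps are homotopic. For
`n ≥ 3`, deform `F₂` to a constant `q` on the upper hemisphere of `Sᵐ` and `F₁` to agree with `F₂`
on the lower one. It remains to deform `F₁` on the upper hemisphere, a ball, relative to its
boundary, until the preimages of the finitely many points `g • q` are connected. Approximate `F₁`
by a piecewise affine map, in a chart `Sⁿ = V ∪ {∞}`, and choose a regular value `b`. The fibres
over finitely many points of a small sphere around `b` consist of finitely many convex pieces, one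
in each cell that meets the fibre over `b`. Lifts of the rays from `b` lead from these pieces to
points from which segments to a common hub, in general position, avoid the fibre over `b` and one
another. This turns the fibres into disjoint connected sets, and after a homotopy away from `b`
these are the full preimages of the chosen points. Finally a homotopy of `Sⁿ` moves the chosen
points to the points `g • q`.
-/

namespace SpaceForm

open Set Metric Topology Filter
open scoped unitInterval

/-! ### Maps to spheres -/

section RadialProjection

variable {E X : Type*} [NormedAddCommGroup E] [NormedSpace ℝ E] [TopologicalSpace X]

/-- The composition of a nowhere vanishing map to a normed space with the radial projection to
the unit sphere. -/
noncomputable def radialProjection (f : C(X, E)) (hf : ∀ x, f x ≠ 0) :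
    C(X, sphere (0 : E) 1) where
  toFun x := ⟨‖f x‖⁻¹ • f x, by
    simpa using norm_smul_inv_norm (𝕜 := ℝ) (hf x)⟩
  continuous_toFun := by
    have := fun x => norm_ne_zero_iff.2 (hf x)
    fun_prop (disch := assumption)

lemma coe_radialProjection (f : C(X, E)) (hf : ∀ x, f x ≠ 0) (x : X) :
    (radialProjection f hf x : E) = ‖f x‖⁻¹ • f x := rfl

lemma radialProjection_eq_of_apply_eq {f : C(X, E)} (hf : ∀ x, f x ≠ 0) {x : X}
    {y : sphere (0 : E) 1} (h : f x = y) : radialProjection f hf x = y :=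
  Subtype.ext (by simp [coe_radialProjection, h])

lemma norm_smul_radialProjection (f : C(X, E)) (hf : ∀ x, f x ≠ 0) (x : X) :
    ‖f x‖ • (radialProjection f hf x : E) = f x :=
  smul_inv_smul₀ (norm_ne_zero_iff.2 (hf x)) _

lemma lineMap_ne_zero_of_ne_neg {a b : E} (hnorm : ‖a‖ = ‖b‖) (ha : a ≠ 0) (hab : a ≠ -b)
    {t : ℝ} (ht : t ∈ Icc (0 : ℝ) 1) : AffineMap.lineMap a b t ≠ 0 := by
  intro h
  rw [AffineMap.lineMap_apply_module] at h
  have hneg : (1 - t) • a = -(t • b) := eq_neg_of_add_eq_zero_left h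
  have ht' : 1 - t = t := by
    have := congrArg norm hneg
    rw [norm_neg, norm_smul, norm_smul, ← hnorm, Real.norm_of_nonneg ht.1,
      Real.norm_of_nonneg (sub_nonneg.2 ht.2)] at this
    exact mul_right_cancel₀ (norm_ne_zero_iff.2 ha) this
  have ht0 : t ≠ 0 := fun h0 => by norm_num [h0] at ht'
  rw [ht', ← smul_neg] at hneg
  exact hab (smul_right_injective E ht0 hneg)

lemma homotopicRel_of_ne_neg {f g : C(X, sphere (0 : E) 1)} {S : Set X} (hS : EqOn f g S)
    (hne : ∀ x, f x ≠ -g x) : f.HomotopicRel g S := by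
  let H := ContinuousMap.Homotopy.affine (⟨fun x => f x, by fun_prop⟩ : C(X, E))
    ⟨fun x => g x, by fun_prop⟩
  have hH : ∀ p, H p ≠ 0 := fun p =>
    lineMap_ne_zero_of_ne_neg (by simp) (ne_zero_of_mem_unit_sphere _)
      (fun h => hne p.2 (Subtype.ext h)) p.1.2
  exact ⟨{
    toContinuousMap := radialProjection H hH
    map_zero_left x := radialProjection_eq_of_apply_eq hH (H.apply_zero x)
    map_one_left x := radialProjection_eq_of_apply_eq hH (H.apply_one x)
    prop' t x hx := radialProjection_eq_of_apply_eq hH <| by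
      simp [H, ContinuousMap.Homotopy.affine, hS hx] }⟩

lemma radialProjection_ne_neg_of_norm_sub_lt_one {f : C(X, E)} (hf : ∀ x, f x ≠ 0) {x : X}
    {y : sphere (0 : E) 1} (hfy : ‖f x - y‖ < 1) : y ≠ -radialProjection f hf x := by
  intro h
  have hy : f x - y = (‖f x‖ + 1) • (radialProjection f hf x : E) := by
    rw [h, coe_neg_sphere, sub_neg_eq_add, add_smul, one_smul, norm_smul_radialProjection]
  rw [hy, norm_smul, norm_eq_of_mem_sphere, mul_one, Real.norm_of_nonneg (by positivity)] at hfy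
  linarith [norm_nonneg (f x)]

end RadialProjection

section HomotopyExtension

variable {E X : Type*} [NormedAddCommGroup E] [NormedSpace ℝ E] [FiniteDimensional ℝ E]
variable [TopologicalSpace X] [CompactSpace X] [T2Space X]
variable {A : Set X} {K : I × X → sphere (0 : E) 1} {f : C(X, sphere (0 : E) 1)}

lemma exists_extension_to_ambient (hA : IsClosed A) (hK : ContinuousOn K (univ ×ˢ A))
    (hK0 : ∀ a ∈ A, K (0, a) = f a) :
    ∃ Φ : C(I × X, E), (∀ x, Φ (0, x) = f x) ∧ ∀ a ∈ A, ∀ t, Φ (t, a) = K (t, a) := by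
  have : TietzeExtension.{_, _} E := TietzeExtension.of_tvs ℝ
  obtain ⟨Ψ, hΨ⟩ := ContinuousMap.exists_restrict_eq (Y := E)
    ((isClosed_univ (X := I)).prod hA)
    ⟨fun p => (K p.1 : E), continuous_subtype_val.comp
      (continuousOn_iff_continuous_domRestrict.1 hK)⟩
  have hΨA : ∀ a ∈ A, ∀ t, Ψ (t, a) = K (t, a) := fun a ha t =>
    DFunLike.congr_fun hΨ ⟨(t, a), mem_univ _, ha⟩
  refine ⟨⟨fun p => Ψ p + f p.2 - Ψ (0, p.2), by fun_prop⟩, fun x => by simp, fun a ha t => ?_⟩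
  simp [hΨA a ha, hK0 a ha]

/-- **Borsuk's homotopy extension property** for maps to a sphere. -/
theorem exists_homotopy_extension (hA : IsClosed A) (hK : ContinuousOn K (univ ×ˢ A))
    (hK0 : ∀ a ∈ A, K (0, a) = f a) :
    ∃ (g : C(X, sphere (0 : E) 1)) (H : f.Homotopy g), ∀ a ∈ A, ∀ t, H (t, a) = K (t, a) := by
  obtain ⟨Φ, hΦ0, hΦA⟩ := exists_extension_to_ambient hA hK hK0
  have hopen : IsOpen {x | ∀ t, Φ (t, x) ≠ 0} := by
    have hclosed : IsClosed (Prod.snd '' {p : I × X | Φ p = 0}) :=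
      isClosedMap_snd_of_compactSpace _ (isClosed_eq (by fun_prop) continuous_const)
    convert hclosed.isOpen_compl using 1
    ext x
    simp
  obtain ⟨u, hu0, hu1, hu⟩ := exists_continuous_zero_one_of_isClosed hopen.isClosed_compl hA
    (disjoint_left.2 fun x hx hxA => hx fun t => by
      rw [hΦA x hxA]; exact ne_zero_of_mem_unit_sphere _)
  -- Slowing time down by `u` stops the homotopy where it would run through the origin.
  let τ : C(I × X, I) := ⟨fun p => ⟨u p.2, hu p.2⟩ * p.1, by fun_prop⟩
  let Φ' : C(I × X, E) := ⟨fun p => Φ (τ p, p.2), by fun_prop⟩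
  have hne : ∀ p, Φ' p ≠ 0 := by
    rintro ⟨t, x⟩
    by_cases hx : ∀ t, Φ (t, x) ≠ 0
    · exact hx _
    · have hτ : τ (t, x) = 0 := Subtype.ext (by simp [τ, hu0 hx])
      simpa [Φ', hτ, hΦ0] using ne_zero_of_mem_unit_sphere (f x)
  refine ⟨⟨fun x => radialProjection Φ' hne (1, x), by fun_prop⟩,
    { toContinuousMap := radialProjection Φ' hne
      map_zero_left x := radialProjection_eq_of_apply_eq hne ?_
      map_one_left x := rfl }, fun a ha t => radialProjection_eq_of_apply_eq hne ?_⟩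
  · have hτ : τ (0, x) = 0 := by simp [τ]
    simp [Φ', hτ, hΦ0]
  · have hτ : τ (t, a) = t := Subtype.ext (by simp [τ, hu1 ha])
    simp [Φ', hτ, hΦA a ha]

end HomotopyExtension

section SimplyConnected

lemma homotopic_refl_of_notMem_range {E : Type*} [NormedAddCommGroup E]
    [InnerProductSpace ℝ E] {x v : sphere (0 : E) 1} (γ : Path x x) (hv : v ∉ range γ) :
    γ.Homotopic (Path.refl x) := by
  let e := stereographic (norm_eq_of_mem_sphere v)
  have hsource : ∀ t, γ t ∈ e.source := fun t => by
    rw [stereographic_source]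
    exact fun h => hv ⟨t, Subtype.ext (congrArg Subtype.val h)⟩
  have hx : x ∈ e.source := by simpa using hsource 0
  have hsymm : Continuous e.symm := by
    rw [← continuousOn_univ, ← stereographic_target (norm_eq_of_mem_sphere v)]
    exact e.continuousOn_symm
  let eγ : C(I, (ℝ ∙ (v : E))ᗮ) :=
    ⟨fun t => e (γ t), e.continuousOn.comp_continuous γ.continuous hsource⟩
  let H := ContinuousMap.Homotopy.affine eγ (.const I (e x))
  refine ⟨{ toFun p := e.symm (H p)
            map_zero_left t := ?_
            map_one_left t := ?_
            prop' s t ht := ?_ }⟩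
  · simpa [eγ] using e.left_inv (hsource t)
  · simpa using e.left_inv hx
  · have hγ : γ t = x := by rcases ht with rfl | rfl <;> simp
    change e.symm (AffineMap.lineMap (e (γ t)) (e x) (s : ℝ)) = γ t
    rw [hγ, AffineMap.lineMap_same_apply, e.left_inv hx]

variable {E : Type*} [NormedAddCommGroup E]

lemma exists_contDiff_homotopic [NormedSpace ℝ E] {x y : sphere (0 : E) 1} (γ : Path x y) :
    ∃ q : ℝ → E, ContDiff ℝ 1 q ∧
      ∃ γ' : Path x y, γ.Homotopic γ' ∧ ∀ t : I, (γ' t : E) = ‖q t‖⁻¹ • q t := by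
  -- Waiting at both ends makes the path smooth near its end points.
  let φ : ℝ → I := fun t => projIcc 0 1 zero_le_one (3 * t - 1)
  have hφ0 : ∀ t < 1 / 3, φ t = 0 := fun t ht => projIcc_of_le_left _ (by linarith)
  have hφ1 : ∀ t > 2 / 3, φ t = 1 := fun t ht => projIcc_of_right_le _ (by linarith)
  have hφ : Continuous φ := by fun_prop
  let γφ : Path x y :=
    γ.reparam (fun t => φ t) (by fun_prop) (hφ0 _ (by norm_num)) (hφ1 _ (by norm_num))
  have hsmooth : ContDiffOn ℝ 1 (fun t => (γ (φ t) : E)) (Iio (1 / 3) ∪ Ioi (2 / 3)) :=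
    ContDiffOn.union_of_isOpen
      ((contDiffOn_const (c := (x : E))).congr fun t ht => by rw [hφ0 t ht, γ.source])
      ((contDiffOn_const (c := (y : E))).congr fun t ht => by rw [hφ1 t ht, γ.target])
      isOpen_Iio isOpen_Ioi
  have hnhds : Iio (1 / 3) ∪ Ioi (2 / 3) ∈ 𝓝ˢ ({0, 1} : Set ℝ) :=
    (isOpen_Iio.union isOpen_Ioi).mem_nhdsSet.2 (by
      rintro t (rfl | rfl)
      · left; norm_num
      · right; norm_num)
  obtain ⟨q, hq, hqγ, hq01, -⟩ := (by fun_prop : Continuous fun t => (γ (φ t) : E))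
    |>.exists_contDiff_approx_and_eqOn 1 (continuous_const (y := 1)) (fun _ => one_pos)
      (toFinite _).isClosed hnhds hsmooth
  let qI : C(I, E) := ⟨fun t => q t, hq.continuous.comp (by fun_prop)⟩
  have hqI : ∀ t, ‖qI t - γφ t‖ < 1 := fun t => by
    simpa [dist_eq_norm, qI, γφ] using hqγ t
  have hne : ∀ t, qI t ≠ 0 := fun t h => by simpa [h] using hqI t
  have hq0 : qI 0 = x := (hq01 (by simp)).trans (congrArg Subtype.val γφ.source)
  have hq1 : qI 1 = y := (hq01 (by simp)).trans (congrArg Subtype.val γφ.target)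
  let γ' : Path x y :=
    { toContinuousMap := radialProjection qI hne
      source' := radialProjection_eq_of_apply_eq hne hq0
      target' := radialProjection_eq_of_apply_eq hne hq1 }
  have hγ' : γφ.Homotopic γ' := homotopicRel_of_ne_neg
    (by
      rintro t (rfl | rfl)
      exacts [γφ.source.trans γ'.source.symm, γφ.target.trans γ'.target.symm])
    fun t => radialProjection_ne_neg_of_norm_sub_lt_one hne (hqI t)
  exact ⟨q, hq, γ', .trans ⟨.reparam γ _ _ _ _⟩ hγ', fun t => rfl⟩

lemma exists_mem_sphere_ne_of_contDiff [NormedSpace ℝ E] [FiniteDimensional ℝ E]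
    (hE : 2 < Module.finrank ℝ E) {q : ℝ → E} (hq : ContDiff ℝ 1 q) :
    ∃ v : sphere (0 : E) 1, ∀ t, (v : E) ≠ ‖q t‖⁻¹ • q t := by
  -- The cone over a `C¹` curve has dimension at most two.
  have hcone : ContDiff ℝ 1 fun z : ℝ × ℝ => z.1 • q z.2 := by fun_prop
  obtain ⟨w, hw⟩ := (hcone.dense_compl_range_of_finrank_lt_finrank (by simpa using hE)).nonempty
  have hw0 : w ≠ 0 := by
    rintro rfl
    exact hw ⟨(0, 0), by simp⟩
  refine ⟨⟨‖w‖⁻¹ • w, by simpa using norm_smul_inv_norm (𝕜 := ℝ) hw0⟩, fun t ht => ?_⟩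
  refine hw ⟨(‖w‖ * ‖q t‖⁻¹, t), ?_⟩
  simp only at ht ⊢
  rw [mul_smul, ← ht, smul_inv_smul₀ (norm_ne_zero_iff.2 hw0)]

theorem simplyConnectedSpace_sphere [InnerProductSpace ℝ E] [FiniteDimensional ℝ E]
    (hE : 2 < Module.finrank ℝ E) : SimplyConnectedSpace (sphere (0 : E) 1) := by
  rw [simply_connected_iff_loops_nullhomotopic]
  refine ⟨isPathConnected_iff_pathConnectedSpace.1 (isPathConnected_sphere ?_ 0 zero_le_one),
    fun x γ => ?_⟩
  · rw [← Module.finrank_eq_rank]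
    exact_mod_cast one_lt_two.trans hE
  · obtain ⟨q, hq, γ', hγ, hγ'⟩ := exists_contDiff_homotopic γ
    obtain ⟨v, hv⟩ := exists_mem_sphere_ne_of_contDiff hE hq
    exact hγ.trans <| homotopic_refl_of_notMem_range γ' (v := v) (by
      rintro ⟨t, rfl⟩
      exact hv t (hγ' t))

instance (k : ℕ) :
    LocallyPathConnectedSpace (sphere (0 : EuclideanSpace ℝ (Fin (k + 1))) 1) :=
  ChartedSpace.locallyPathConnectedSpace (EuclideanSpace ℝ (Fin k)) _

end SimplyConnected

/-! ### Homotopies of maps to odd spheres -/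

lemma id_homotopic_neg_sphere {n : ℕ} (hn : Odd n) :
    (ContinuousMap.id (sphere (0 : EuclideanSpace ℝ (Fin (n + 1))) 1)).Homotopic
      ⟨fun x => -x, continuous_neg⟩ := by
  obtain ⟨k, rfl⟩ := hn
  let S := sphere (0 : EuclideanSpace ℝ (Fin (2 * k + 1 + 1))) 1
  let e : EuclideanSpace ℝ (Fin (2 * k + 1 + 1)) ≃L[ℝ] (Fin (k + 1) → ℂ) :=
    ContinuousLinearEquiv.ofFinrankEq (by
      simp [Module.finrank_pi_fintype, Complex.finrank_real_complex]; omega)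
  let Φ : C(I × S, EuclideanSpace ℝ (Fin (2 * k + 1 + 1))) :=
    ⟨fun p => e.symm (Complex.exp (Real.pi * (p.1 : ℝ) * Complex.I) • e p.2), by fun_prop⟩
  have hΦ : ∀ p, Φ p ≠ 0 := fun p => by
    simp [Φ, ne_zero_of_mem_unit_sphere p.2]
  exact ⟨{
    toContinuousMap := radialProjection Φ hΦ
    map_zero_left x := radialProjection_eq_of_apply_eq hΦ (by simp [Φ])
    map_one_left x := radialProjection_eq_of_apply_eq hΦ (by simp [Φ]) }⟩

lemma homotopic_of_forall_ne {X : Type*} [TopologicalSpace X] {n : ℕ} (hn : Odd n)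
    {f g : C(X, sphere (0 : EuclideanSpace ℝ (Fin (n + 1))) 1)} (hfg : ∀ x, f x ≠ g x) :
    f.Homotopic g := by
  have hneg : f.Homotopic ⟨fun x => -g x, by fun_prop⟩ :=
    (homotopicRel_of_ne_neg (eqOn_empty _ _) fun x hx => hfg x (by simpa using hx)).homotopic
  exact hneg.trans (.comp (id_homotopic_neg_sphere hn).symm (.refl g))

lemma homotopic_sphere_one {X : Type*} [TopologicalSpace X] [SimplyConnectedSpace X]
    [LocallyPathConnectedSpace X] (f g : C(X, sphere (0 : EuclideanSpace ℝ (Fin 2)) 1)) :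
    f.Homotopic g := by
  let e : EuclideanSpace ℝ (Fin 2) ≃ₗᵢ[ℝ] ℂ := Complex.orthonormalBasisOneI.repr.symm
  let toCircle : C(sphere (0 : EuclideanSpace ℝ (Fin 2)) 1, Circle) :=
    ⟨fun x => ⟨e x, by simp [Submonoid.unitSphere]⟩, by fun_prop⟩
  let ofCircle : C(Circle, sphere (0 : EuclideanSpace ℝ (Fin 2)) 1) :=
    ⟨fun z => ⟨e.symm z, by simp [Circle.norm_coe]⟩, by fun_prop⟩
  have hlift : ∀ f : C(X, sphere (0 : EuclideanSpace ℝ (Fin 2)) 1),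
      ∃ φ : C(X, ℝ), (ofCircle.comp (Circle.exp : C(ℝ, Circle))).comp φ = f := fun f => by
    obtain ⟨x₀⟩ : Nonempty X := inferInstance
    obtain ⟨t₀, ht₀⟩ := Circle.isAddQuotientCoveringMap_exp.surjective (toCircle (f x₀))
    obtain ⟨φ, ⟨-, hφ⟩, -⟩ :=
      Circle.isCoveringMap_exp.existsUnique_continuousMap_lifts (toCircle.comp f) x₀ t₀ ht₀
    refine ⟨φ, ContinuousMap.ext fun x => Subtype.ext ?_⟩
    have hφx : Circle.exp (φ x) = toCircle (f x) := congrFun hφ x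
    change e.symm (Circle.exp (φ x)) = f x
    rw [hφx]
    exact e.symm_apply_apply _
  obtain ⟨φ, rfl⟩ := hlift f
  obtain ⟨ψ, rfl⟩ := hlift g
  exact .comp (.refl _) ⟨ContinuousMap.Homotopy.affine φ ψ⟩

/-! ### Piecewise affine maps -/

/-- A continuous map between normed spaces which is affine on the closures of open convex cells,
indexed by `ι`, whose closures cover the space. -/
structure PiecewiseAffine (ι P V : Type*) [NormedAddCommGroup P] [NormedSpace ℝ P]
    [NormedAddCommGroup V] [NormedSpace ℝ V] extends C(P, V) where
  /-- The open cells. -/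
  cell : ι → Set P
  /-- The affine map with which the map agrees on a cell. -/
  piece : ι → P →ᴬ[ℝ] V
  isOpen_cell : ∀ i, IsOpen (cell i)
  convex_cell : ∀ i, Convex ℝ (cell i)
  iUnion_closure_cell : ⋃ i, closure (cell i) = univ
  eqOn_closure_cell : ∀ i, EqOn toFun (piece i) (closure (cell i))

section AffineSelection

variable {P : Type*} [NormedAddCommGroup P] [NormedSpace ℝ P]

/-- A continuous function which agrees at each point with some member of the set `S` of affine
functions. With `S` finite, such functions form a lattice, and they are the scalar piecewise
affine functions. -/
structure IsAffineSelection (h : P → ℝ) (S : Set (P →ᴬ[ℝ] ℝ)) : Prop where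
  continuous : Continuous h
  exists_eq : ∀ x, ∃ a ∈ S, h x = a x

variable {h h' : P → ℝ} {S S' : Set (P →ᴬ[ℝ] ℝ)}

lemma IsAffineSelection.mono (hh : IsAffineSelection h S) (hS : S ⊆ S') :
    IsAffineSelection h S' :=
  ⟨hh.continuous, fun x => let ⟨a, ha, hax⟩ := hh.exists_eq x; ⟨a, hS ha, hax⟩⟩

lemma IsAffineSelection.of_mem_or (hh : IsAffineSelection h S) (hh' : IsAffineSelection h' S')
    {f : P → ℝ} (hf : Continuous f) (hor : ∀ x, f x = h x ∨ f x = h' x) :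
    IsAffineSelection f (S ∪ S') where
  continuous := hf
  exists_eq x := by
    rcases hor x with hx | hx
    · exact hx ▸ (hh.mono subset_union_left).exists_eq x
    · exact hx ▸ (hh'.mono subset_union_right).exists_eq x

lemma isAffineSelection_singleton (a : P →ᴬ[ℝ] ℝ) : IsAffineSelection a {a} :=
  ⟨a.continuous, fun _ => ⟨a, rfl, rfl⟩⟩

lemma exists_continuousAffineMap_apply_eq [SeparatingDual ℝ P] {x y : P} (hxy : x ≠ y)
    (s t : ℝ) : ∃ a : P →ᴬ[ℝ] ℝ, a x = s ∧ a y = t := by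
  obtain ⟨ℓ, hℓ⟩ := SeparatingDual.exists_eq_one (R := ℝ) (sub_ne_zero.2 hxy.symm)
  refine ⟨s • ContinuousAffineMap.const ℝ P 1 +
    (t - s) • (ℓ.toContinuousAffineMap - ContinuousAffineMap.const ℝ P (ℓ x)), ?_, ?_⟩
  · simp
  · simp [← map_sub, hℓ]

/-- The lattice form of the Stone–Weierstrass theorem applies to affine selections. -/
lemma exists_isAffineSelection_near [SeparatingDual ℝ P] {K : Set P} (hK : IsCompact K)
    (φ : C(K, ℝ)) {ε : ℝ} (hε : 0 < ε) :
    ∃ (h : P → ℝ) (S : Set (P →ᴬ[ℝ] ℝ)), S.Finite ∧ IsAffineSelection h S ∧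
      ∀ x : K, |h x - φ x| < ε := by
  have : CompactSpace K := isCompact_iff_compactSpace.1 hK
  let L : Set C(K, ℝ) := {f | ∃ (h : P → ℝ) (S : Set (P →ᴬ[ℝ] ℝ)), S.Finite ∧
    IsAffineSelection h S ∧ ∀ x : K, f x = h x}
  have affine_mem (a : P →ᴬ[ℝ] ℝ) : (⟨fun x => a x, by fun_prop⟩ : C(K, ℝ)) ∈ L :=
    ⟨a, {a}, finite_singleton a, isAffineSelection_singleton a, fun _ => rfl⟩
  have hL : closure L = ⊤ := by
    refine ContinuousMap.sublattice_closure_eq_top L ⟨_, affine_mem 0⟩ ?_ ?_ ?_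
    · rintro f ⟨h, S, hS, hh, hf⟩ g ⟨h', S', hS', hh', hg⟩
      exact ⟨fun x => min (h x) (h' x), S ∪ S', hS.union hS',
        hh.of_mem_or hh' (hh.continuous.min hh'.continuous) fun x => min_choice _ _,
        fun x => by simp [hf, hg]⟩
    · rintro f ⟨h, S, hS, hh, hf⟩ g ⟨h', S', hS', hh', hg⟩
      exact ⟨fun x => max (h x) (h' x), S ∪ S', hS.union hS',
        hh.of_mem_or hh' (hh.continuous.max hh'.continuous) fun x => max_choice _ _,
        fun x => by simp [hf, hg]⟩
    · intro v x y
      rcases eq_or_ne x y with rfl | hxy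
      · exact ⟨_, affine_mem (ContinuousAffineMap.const ℝ P (v x)), by simp⟩
      · obtain ⟨a, hx, hy⟩ :=
          exists_continuousAffineMap_apply_eq (Subtype.coe_ne_coe.2 hxy) (v x) (v y)
        exact ⟨_, affine_mem a, hx, hy⟩
  obtain ⟨f, ⟨h, S, hS, hh, hf⟩, hd⟩ :=
    Metric.mem_closure_iff.1 (hL ▸ mem_univ φ : φ ∈ closure L) ε hε
  refine ⟨h, S, hS, hh, fun x => ?_⟩
  rw [← hf, ← Real.dist_eq, dist_comm]
  exact (ContinuousMap.dist_apply_le_dist x).trans_lt hd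

lemma dense_setOf_affine_ne {a b : P →ᴬ[ℝ] ℝ} (hab : a ≠ b) : Dense {x | a x ≠ b x} := by
  obtain ⟨y, hy⟩ : ∃ y, a y ≠ b y := by
    by_contra! h
    exact hab (ContinuousAffineMap.ext h)
  intro x
  by_cases hx : a x = b x
  · have ht : Tendsto (AffineMap.lineMap x y : ℝ → P) (𝓝[≠] 0) (𝓝 x) := by
      have : Continuous (AffineMap.lineMap x y : ℝ → P) := AffineMap.lineMap_continuous
      simpa using (this.tendsto 0).mono_left nhdsWithin_le_nhds
    refine mem_closure_of_tendsto ht ?_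
    filter_upwards [self_mem_nhdsWithin] with t (ht : t ≠ 0) h
    rw [a.apply_lineMap, b.apply_lineMap, hx] at h
    simp only [AffineMap.lineMap_apply_ring', add_left_inj, mul_eq_mul_left_iff, sub_left_inj,
      hy, ht, or_self] at h
  · exact subset_closure hx

lemma IsAffineSelection.exists_eqOn (hh : IsAffineSelection h S) (hS : S.Finite) {Q : Set P}
    (hQ : IsPreconnected Q) (hne : ∀ x ∈ Q, ∀ a ∈ S, ∀ b ∈ S, a x = b x → a = b) :
    ∃ a : P →ᴬ[ℝ] ℝ, EqOn h a Q := by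
  rcases Q.eq_empty_or_nonempty with rfl | ⟨z, hz⟩
  · exact ⟨0, eqOn_empty _ _⟩
  obtain ⟨a, ha, haz⟩ := hh.exists_eq z
  refine ⟨a, fun x hx => by_contra fun hxa => ?_⟩
  have hclosed (b : P →ᴬ[ℝ] ℝ) : IsClosed {x | h x = b x} :=
    isClosed_eq hh.continuous b.continuous
  have hcover (y : P) (hya : h y ≠ a y) : y ∈ ⋃ b ∈ S \ {a}, {x | h x = b x} := by
    obtain ⟨b, hb, hyb⟩ := hh.exists_eq y
    exact mem_biUnion ⟨hb, fun hba => hya (hyb.trans (congrArg (fun c => c y) hba))⟩ hyb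
  obtain ⟨y, hyQ, hya, hyb⟩ := isPreconnected_closed_iff.1 hQ {x | h x = a x}
    (⋃ b ∈ S \ {a}, {x | h x = b x}) (hclosed a)
    ((hS.subset sdiff_subset).isClosed_biUnion fun b _ => hclosed b)
    (fun y _ => or_iff_not_imp_left.2 (hcover y)) ⟨z, hz, haz⟩ ⟨x, hx, hcover x hxa⟩
  obtain ⟨b, ⟨hb, hba⟩, hyb⟩ := mem_iUnion₂.1 hyb
  exact hba (hne y hyQ b hb a ha (hyb.symm.trans hya))

end AffineSelection

section SortedCell

variable {P : Type*} [NormedAddCommGroup P] [NormedSpace ℝ P] {N : ℕ}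

/-- The cell on which the values of the affine functions `a` are distinct and sorted by `τ`. -/
def sortedCell (a : Fin N → P →ᴬ[ℝ] ℝ) (τ : Equiv.Perm (Fin N)) : Set P :=
  {x | StrictMono fun k => a (τ k) x}

variable (a : Fin N → P →ᴬ[ℝ] ℝ)

lemma sortedCell_eq_iInter (τ : Equiv.Perm (Fin N)) :
    sortedCell a τ = ⋂ p : {p : Fin N × Fin N // p.1 < p.2},
      (a (τ p.1.2) - a (τ p.1.1)) ⁻¹' Ioi 0 := by
  ext x
  simp [sortedCell, StrictMono]

lemma isOpen_sortedCell (τ : Equiv.Perm (Fin N)) : IsOpen (sortedCell a τ) := by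
  rw [sortedCell_eq_iInter]
  exact isOpen_iInter_of_finite fun p => isOpen_Ioi.preimage (ContinuousAffineMap.continuous _)

lemma convex_sortedCell (τ : Equiv.Perm (Fin N)) : Convex ℝ (sortedCell a τ) := by
  rw [sortedCell_eq_iInter]
  exact convex_iInter fun p => (convex_Ioi 0).affine_preimage
    (a (τ p.1.2) - a (τ p.1.1)).toAffineMap

variable {a}

lemma injective_apply_of_mem_sortedCell {τ : Equiv.Perm (Fin N)} {x : P}
    (hx : x ∈ sortedCell a τ) : Function.Injective fun k => a k x :=
  (Equiv.injective_comp τ _).1 (StrictMono.injective hx)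

lemma mem_sortedCell_sort {x : P} (hx : Function.Injective fun k => a k x) :
    x ∈ sortedCell a (Tuple.sort fun k => a k x) :=
  (Tuple.monotone_sort fun k => a k x).strictMono_of_injective
    (hx.comp (Tuple.sort fun k => a k x).injective)

lemma dense_setOf_injective_apply (ha : Function.Injective a) :
    Dense {x | Function.Injective fun k => a k x} := by
  have hset : {x | Function.Injective fun k => a k x} =
      ⋂ p : {p : Fin N × Fin N // p.1 ≠ p.2}, {x | a p.1.1 x ≠ a p.1.2 x} := by
    ext x
    simp [Function.Injective, not_imp_not]
  rw [hset, ← sInter_range]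
  refine (finite_range _).dense_sInter (forall_mem_range.2 fun p => ?_)
    (forall_mem_range.2 fun p => dense_setOf_affine_ne (ha.ne p.2))
  exact isOpen_ne_fun (a p.1.1).continuous (a p.1.2).continuous

lemma iUnion_closure_sortedCell (ha : Function.Injective a) :
    ⋃ τ, closure (sortedCell a τ) = univ := by
  rw [← closure_iUnion_of_finite]
  exact ((dense_setOf_injective_apply ha).mono fun x hx =>
    mem_iUnion.2 ⟨_, mem_sortedCell_sort hx⟩).closure_eq

end SortedCell

section Approximation

variable {P V : Type*} [NormedAddCommGroup P] [NormedSpace ℝ P] [NormedAddCommGroup V]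
  [NormedSpace ℝ V]

lemma exists_piecewiseAffine_of_isAffineSelection {d N : ℕ} (e : V ≃L[ℝ] (Fin d → ℝ))
    {a : Fin N → P →ᴬ[ℝ] ℝ} (ha : Function.Injective a) {h : Fin d → P → ℝ}
    (hsel : ∀ i, IsAffineSelection (h i) (range a)) :
    ∃ Φ : PiecewiseAffine (Equiv.Perm (Fin N)) P V,
      ∀ x, Φ.toContinuousMap x = e.symm fun i => h i x := by
  have hdistinct {τ : Equiv.Perm (Fin N)} : ∀ x ∈ sortedCell a τ, ∀ b ∈ range a, ∀ c ∈ range a,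
      b x = c x → b = c := by
    rintro x hx _ ⟨k, rfl⟩ _ ⟨l, rfl⟩ hkl
    exact congrArg a (injective_apply_of_mem_sortedCell hx hkl)
  choose A hA using fun τ i => (hsel i).exists_eqOn (finite_range a)
    (convex_sortedCell a τ).isPreconnected hdistinct
  have hcont (i : Fin d) : Continuous (h i) := (hsel i).continuous
  refine ⟨{ toFun := fun x => e.symm fun i => h i x
            continuous_toFun := by fun_prop
            cell := sortedCell a
            piece := fun τ => e.symm.toContinuousLinearMap.toContinuousAffineMap.comp
              ⟨AffineMap.pi fun i => (A τ i).toAffineMap,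
                continuous_pi fun i => (A τ i).continuous⟩
            isOpen_cell := isOpen_sortedCell a
            convex_cell := convex_sortedCell a
            iUnion_closure_cell := iUnion_closure_sortedCell ha
            eqOn_closure_cell := fun τ => EqOn.closure (fun x hx => ?_) (by fun_prop)
              (ContinuousAffineMap.continuous _) }, fun x => rfl⟩
  exact congrArg e.symm (funext fun i => hA τ i hx)

theorem exists_piecewiseAffine_near [SeparatingDual ℝ P] [FiniteDimensional ℝ V] {K : Set P}
    (hK : IsCompact K) (φ : C(K, V)) {ε : ℝ} (hε : 0 < ε) :
    ∃ (N : ℕ) (Φ : PiecewiseAffine (Equiv.Perm (Fin N)) P V),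
      ∀ x : K, ‖Φ.toContinuousMap x - φ x‖ < ε := by
  let e : V ≃L[ℝ] (Fin (Module.finrank ℝ V) → ℝ) := (Module.finBasis ℝ V).equivFunL
  obtain ⟨C, hC, hbound⟩ := e.symm.toContinuousLinearMap.bound
  choose h S hS hsel hnear using fun i => exists_isAffineSelection_near hK
    (⟨fun x => e (φ x) i, by fun_prop⟩ : C(K, ℝ)) (div_pos hε hC)
  have : Finite (⋃ i, S i) := finite_iUnion hS
  let a := fun k => ((Finite.equivFin (⋃ i, S i)).symm k : P →ᴬ[ℝ] ℝ)
  have hrange : range a = ⋃ i, S i :=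
    ((Finite.equivFin (⋃ i, S i)).symm.surjective.range_comp _).trans Subtype.range_coe
  obtain ⟨Φ, hΦ⟩ := exists_piecewiseAffine_of_isAffineSelection e (a := a)
    (Subtype.val_injective.comp (Finite.equivFin _).symm.injective)
    fun i => (hsel i).mono ((subset_iUnion S i).trans hrange.ge)
  refine ⟨_, Φ, fun x => ?_⟩
  have hcoord : ‖(fun i => h i x) - e (φ x)‖ < ε / C :=
    (pi_norm_lt_iff (div_pos hε hC)).2 fun i => hnear i x
  calc ‖Φ.toContinuousMap x - φ x‖ = ‖e.symm ((fun i => h i x) - e (φ x))‖ := by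
        rw [hΦ, map_sub, e.symm_apply_apply]
    _ ≤ C * ‖(fun i => h i x) - e (φ x)‖ := hbound _
    _ < ε := (lt_div_iff₀' hC).1 hcoord

end Approximation

/-! ### Hubs -/

/-- Greedy choice: a family with pairwise compatible members exists as soon as every member can be
chosen compatibly with all the others. -/
lemma exists_pairwise_of_forall_exists {J α : Type*} [Finite J] {p : J → α → Prop}
    {r : J → J → α → α → Prop} (hr : ∀ i j x y, r i j x y → r j i y x)
    (hp : ∀ j, ∃ x, p j x)
    (h : ∀ f : J → α, (∀ i, p i (f i)) → ∀ j, ∃ x, p j x ∧ ∀ i, i ≠ j → r i j (f i) x) :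
    ∃ f : J → α, (∀ j, p j (f j)) ∧ Pairwise fun i j => r i j (f i) (f j) := by
  classical
  suffices H : ∀ s : Set J, s.Finite → ∃ f : J → α, (∀ j, p j (f j)) ∧
      s.Pairwise fun i j => r i j (f i) (f j) by
    simpa [Set.pairwise_univ] using H univ (toFinite _)
  intro s hs
  induction s, hs using Set.Finite.induction_on with
  | empty => exact ⟨fun j => (hp j).choose, fun j => (hp j).choose_spec, pairwise_empty _⟩
  | @insert j s hj _ ih =>
    obtain ⟨f, hf, hfs⟩ := ih
    obtain ⟨x, hx, hxf⟩ := h f hf j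
    refine ⟨Function.update f j x, fun i => ?_, ?_⟩
    · rcases eq_or_ne i j with rfl | hij
      · simpa using hx
      · simpa [hij] using hf i
    · refine (pairwise_insert_of_notMem hj).2 ⟨fun i hi k hk hik => ?_, fun i hi => ?_⟩
      · simpa [ne_of_mem_of_not_mem hi hj, ne_of_mem_of_not_mem hk hj] using hfs hi hk hik
      · have hij : i ≠ j := ne_of_mem_of_not_mem hi hj
        simpa [hij] using And.intro (hr _ _ _ _ (hxf i hij)) (hxf i hij)

section Hubs

variable {P : Type*} [NormedAddCommGroup P] [NormedSpace ℝ P]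

/-- A point `h` is a hub for the points of `S`, relative to a set `B` of obstacles, if the
segments joining `S` to `h` do not meet the obstacles, except possibly at their ends in `S`. -/
def IsHub (S : Set P) (B : Set (AffineSubspace ℝ P)) (h : P) : Prop :=
  ∀ p ∈ S, ∀ s ∈ B, ∀ z ∈ segment ℝ p h, z ∈ s → z = p

lemma IsHub.mono {S : Set P} {B B' : Set (AffineSubspace ℝ P)} {h : P} (hh : IsHub S B' h)
    (hB : B ⊆ B') : IsHub S B h :=
  fun p hp s hs => hh p hp s (hB hs)

lemma mem_affineSpan_insert_of_mem_segment {p h z : P} (hz : z ∈ segment ℝ p h) (hzp : z ≠ p)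
    {s : AffineSubspace ℝ P} (hzs : z ∈ s) : h ∈ affineSpan ℝ (insert p (s : Set P)) := by
  have hline : line[ℝ, p, z] ≤ affineSpan ℝ (insert p (s : Set P)) :=
    affineSpan_mono ℝ (insert_subset_insert (singleton_subset_iff.2 hzs))
  exact hline (Wbtw.right_mem_affineSpan_of_left_ne (mem_segment_iff_wbtw.1 hz) hzp.symm)

/-- The points that fail to be hubs lie in finitely many proper affine subspaces. -/
theorem exists_isHub [FiniteDimensional ℝ P] {S : Set P} (hS : S.Finite)
    {B : Set (AffineSubspace ℝ P)} (hB : B.Finite)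
    (hcodim : ∀ s ∈ B, Module.finrank ℝ s.direction + 2 ≤ Module.finrank ℝ P) {O : Set P}
    (hO : IsOpen O) (hne : O.Nonempty) : ∃ h ∈ O, IsHub S B h := by
  borelize P
  let μ : MeasureTheory.Measure P := MeasureTheory.Measure.addHaar
  have hnull : μ (⋃ p ∈ S, ⋃ s ∈ B, affineSpan ℝ (insert p (s : Set P))) = 0 := by
    refine (MeasureTheory.measure_biUnion_null_iff hS.countable).2 fun p _ =>
      (MeasureTheory.measure_biUnion_null_iff hB.countable).2 fun s hs =>
        MeasureTheory.Measure.addHaar_affineSubspace μ _ fun htop => ?_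
    have hle := finrank_vectorSpan_insert_le s p
    rw [← direction_affineSpan, htop, AffineSubspace.direction_top, finrank_top] at hle
    have := hcodim s hs
    omega
  obtain ⟨h, hhO, hh⟩ : ∃ h ∈ O, h ∉ ⋃ p ∈ S, ⋃ s ∈ B, affineSpan ℝ (insert p (s : Set P)) := by
    by_contra! hcon
    exact (hO.measure_pos μ hne).ne' (MeasureTheory.measure_mono_null hcon hnull)
  exact ⟨h, hhO, fun p hp s hs z hz hzs => by_contra fun hzp => hh <| mem_biUnion hp <|
    mem_biUnion hs <| mem_affineSpan_insert_of_mem_segment hz hzp hzs⟩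

lemma finrank_direction_line_le_one (p q : P) :
    Module.finrank ℝ line[ℝ, p, q].direction ≤ 1 := by
  rw [direction_affineSpan]
  exact collinear_iff_finrank_le_one.1 (collinear_pair ℝ p q)

/-- The hubs are chosen one after the other, the lines through the earlier segments being
obstacles for the later ones. -/
theorem exists_isHub_pairwise_disjoint [FiniteDimensional ℝ P] (hdim : 3 ≤ Module.finrank ℝ P)
    {J : Type*} [Finite J] {S : J → Set P} (hS : ∀ j, (S j).Finite)
    (hdisj : Pairwise (Function.onFun Disjoint S)) {B : Set (AffineSubspace ℝ P)} (hB : B.Finite)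
    (hcodim : ∀ s ∈ B, Module.finrank ℝ s.direction + 2 ≤ Module.finrank ℝ P) {O : Set P}
    (hO : IsOpen O) (hne : O.Nonempty) :
    ∃ h : J → P, (∀ j, h j ∈ O ∧ IsHub (S j) B (h j)) ∧
      Pairwise fun i j => ∀ p ∈ S i, ∀ q ∈ S j,
        Disjoint (segment ℝ p (h i)) (segment ℝ q (h j)) := by
  let points : Set (AffineSubspace ℝ P) := ⋃ i, (fun q => line[ℝ, q, q]) '' S i
  let lines (h : J → P) : Set (AffineSubspace ℝ P) := ⋃ i, (fun q => line[ℝ, q, h i]) '' S i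
  have exists_isHub' (h : J → P) (j : J) :
      ∃ w, (w ∈ O ∧ IsHub (S j) (B ∪ points) w) ∧ IsHub (S j) (lines h) w := by
    have hfin : (B ∪ points ∪ lines h).Finite :=
      (hB.union (finite_iUnion fun i => (hS i).image _)).union
        (finite_iUnion fun i => (hS i).image _)
    have hcodim' : ∀ s ∈ B ∪ points ∪ lines h,
        Module.finrank ℝ s.direction + 2 ≤ Module.finrank ℝ P := by
      simp only [points, lines, mem_union, mem_iUnion, mem_image]
      rintro s ((hs | ⟨i, q, -, rfl⟩) | ⟨i, q, -, rfl⟩)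
      · exact hcodim s hs
      · linarith [finrank_direction_line_le_one q q]
      · linarith [finrank_direction_line_le_one q (h i)]
    obtain ⟨w, hwO, hw⟩ := exists_isHub (hS j) hfin hcodim' hO hne
    exact ⟨w, ⟨hwO, hw.mono subset_union_left⟩, hw.mono subset_union_right⟩
  obtain ⟨h, hh, hpair⟩ := exists_pairwise_of_forall_exists
    (p := fun j w => w ∈ O ∧ IsHub (S j) (B ∪ points) w)
    (r := fun i j x y => ∀ p ∈ S i, ∀ q ∈ S j, Disjoint (segment ℝ p x) (segment ℝ q y))
    (fun i j x y hxy p hp q hq => (hxy q hq p hp).symm)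
    (fun j => (exists_isHub' (fun _ => 0) j).imp fun w hw => hw.1) fun h hh j => by
      obtain ⟨w, hw, hwlines⟩ := exists_isHub' h j
      refine ⟨w, hw, fun i hij q hq p hp => disjoint_left.2 fun z hzq hzp => ?_⟩
      obtain rfl : z = p := hwlines p hp _ (mem_iUnion_of_mem i ⟨q, hq, rfl⟩) z hzp
        (mem_segment_iff_wbtw.1 hzq).mem_affineSpan
      obtain rfl : z = q := (hh i).2 q hq _ (Or.inr (mem_iUnion_of_mem j ⟨z, hp, rfl⟩)) z hzq
        (left_mem_affineSpan_pair ℝ z z)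
      exact disjoint_left.1 (hdisj hij) hq hp
  exact ⟨h, fun j => ⟨(hh j).1, (hh j).2.mono subset_union_left⟩, hpair⟩

end Hubs

/-! ### Regular values of piecewise affine maps -/

namespace PiecewiseAffine

variable {ι P V : Type*} [NormedAddCommGroup P] [NormedSpace ℝ P] [NormedAddCommGroup V]
  [NormedSpace ℝ V] (Φ : PiecewiseAffine ι P V)

lemma exists_mem_closure_cell (x : P) : ∃ i, x ∈ closure (Φ.cell i) :=
  mem_iUnion.1 (Φ.iUnion_closure_cell ▸ mem_univ x)

/-- The part of the fibre over `y` in the closure of a cell. -/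
def fiber (i : ι) (y : V) : Set P :=
  closure (Φ.cell i) ∩ Φ.piece i ⁻¹' {y}

variable {Φ}

lemma mem_fiber_iff {i : ι} {y : V} {x : P} :
    x ∈ Φ.fiber i y ↔ x ∈ closure (Φ.cell i) ∧ Φ.toContinuousMap x = y :=
  and_congr_right fun hx => by
    rw [mem_preimage, mem_singleton_iff, ← Φ.eqOn_closure_cell i hx]
    rfl

variable (Φ)

lemma isClosed_fiber (i : ι) (y : V) : IsClosed (Φ.fiber i y) :=
  isClosed_closure.inter (isClosed_singleton.preimage (Φ.piece i).continuous)

lemma convex_fiber (i : ι) (y : V) : Convex ℝ (Φ.fiber i y) :=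
  (Φ.convex_cell i).closure.inter ((convex_singleton y).affine_preimage (Φ.piece i).toAffineMap)

variable {Φ} {D : Set P}

lemma fiber_subset_interior (hD : IsClosed D) {y : V}
    (hy : ∀ x ∈ D, Φ.toContinuousMap x = y → x ∈ interior D) {i : ι}
    (hne : (Φ.fiber i y ∩ D).Nonempty) : Φ.fiber i y ⊆ interior D := by
  obtain ⟨x, hx, hxD⟩ := hne
  refine (Φ.convex_fiber i y).isPreconnected.subset_left_of_subset_union isOpen_interior
    hD.isOpen_compl (disjoint_compl_right.mono_left interior_subset) (fun z hz => ?_)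
    ⟨x, hx, hy x hxD (mem_fiber_iff.1 hx).2⟩
  exact or_iff_not_imp_right.2 fun hzD => hy z (notMem_compl_iff.1 hzD) (mem_fiber_iff.1 hz).2

/-- Over a regular value, every piece that attains it does so in its open cell and is
submersive. -/
def IsRegularValue (Φ : PiecewiseAffine ι P V) (b : V) : Prop :=
  ∀ i, (Φ.fiber i b).Nonempty →
    (Φ.fiber i b ∩ Φ.cell i).Nonempty ∧ Function.Surjective (Φ.piece i).contLinear

lemma IsRegularValue.finrank_le [FiniteDimensional ℝ P] {b : V} (hb : Φ.IsRegularValue b) {x : P}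
    (hx : Φ.toContinuousMap x = b) : Module.finrank ℝ V ≤ Module.finrank ℝ P := by
  obtain ⟨i, hi⟩ := Φ.exists_mem_closure_cell x
  exact LinearMap.finrank_le_finrank_of_surjective (f := (Φ.piece i).contLinear.toLinearMap)
    (hb i ⟨x, mem_fiber_iff.2 ⟨hi, hx⟩⟩).2

lemma surjective_contLinear_of_mem_interior (i : ι) {b : V}
    (hb : b ∈ interior (Φ.piece i '' Φ.cell i)) :
    Function.Surjective (Φ.piece i).contLinear := by
  let f : P →ᵃ[ℝ] V := (Φ.piece i).toAffineMap
  have htop : AffineSubspace.map f ⊤ = ⊤ := by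
    rw [← AffineSubspace.affineSpan_coe (AffineSubspace.map f ⊤)]
    refine affineSpan_eq_top_of_nonempty_interior ⟨b, interior_mono ?_ hb⟩
    exact (image_mono (subset_univ _)).trans (subset_convexHull ℝ _)
  have hsurj : Function.Surjective f := fun y => by
    obtain ⟨x, -, hx⟩ := AffineSubspace.mem_map.1 (htop ▸ AffineSubspace.mem_top ℝ V y)
    exact ⟨x, hx⟩
  exact f.linear_surjective_iff.2 hsurj

/-- The images of the cells are convex, so their frontiers have measure zero. -/
theorem exists_isRegularValue_mem [FiniteDimensional ℝ V] [Finite ι] {O : Set V} (hO : IsOpen O)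
    (hne : O.Nonempty) : ∃ b ∈ O, Φ.IsRegularValue b := by
  borelize V
  let μ : MeasureTheory.Measure V := MeasureTheory.Measure.addHaar
  have hnull : μ (⋃ i, frontier (Φ.piece i '' Φ.cell i)) = 0 :=
    MeasureTheory.measure_iUnion_null fun i =>
      ((Φ.convex_cell i).affine_image (Φ.piece i).toAffineMap).addHaar_frontier μ
  obtain ⟨b, hbO, hb⟩ : ∃ b ∈ O, b ∉ ⋃ i, frontier (Φ.piece i '' Φ.cell i) := by
    by_contra! hcon
    exact (hO.measure_pos μ hne).ne' (MeasureTheory.measure_mono_null hcon hnull)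
  refine ⟨b, hbO, fun i ⟨x, hx, hxb⟩ => ?_⟩
  have hcl : b ∈ closure (Φ.piece i '' Φ.cell i) :=
    hxb ▸ image_closure_subset_closure_image (Φ.piece i).continuous ⟨x, hx, rfl⟩
  have hint : b ∈ interior (Φ.piece i '' Φ.cell i) := by
    by_contra h
    exact hb (mem_iUnion_of_mem i ⟨hcl, h⟩)
  obtain ⟨z, hz, hzb⟩ := interior_subset hint
  exact ⟨⟨z, ⟨subset_closure hz, hzb⟩, hz⟩, surjective_contLinear_of_mem_interior i hint⟩

/-- The cells whose closures meet the fibre over `b` in `D`. -/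
def activeCells (Φ : PiecewiseAffine ι P V) (D : Set P) (b : V) : Set ι :=
  {i | (Φ.fiber i b ∩ D).Nonempty}

lemma IsRegularValue.exists_mem_cell_inter_interior {b : V} (hb : Φ.IsRegularValue b)
    (hD : IsClosed D) (hDb : ∀ x ∈ D, Φ.toContinuousMap x = b → x ∈ interior D) {i : ι}
    (hi : i ∈ Φ.activeCells D b) : ∃ x ∈ Φ.cell i ∩ interior D, Φ.piece i x = b := by
  obtain ⟨x, hx, hxi⟩ := (hb i hi.left).1
  exact ⟨x, ⟨hxi, fiber_subset_interior hD hDb hi hx⟩, hx.2⟩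

end PiecewiseAffine

/-! ### Connecting the fibres over a small sphere -/

lemma smul_eq_smul_of_norm_eq_one {V : Type*} [NormedAddCommGroup V] [NormedSpace ℝ V] {e e' : V}
    (he : ‖e‖ = 1) (he' : ‖e'‖ = 1) {s t : ℝ} (hs : 0 < s) (ht : 0 < t) (h : s • e = t • e') :
    s = t ∧ e = e' := by
  have hee' : e = e' := (sameRay_iff_of_norm_eq (he.trans he'.symm)).1 (Or.inr (Or.inr
    ⟨s, t, hs, ht, h⟩))
  subst hee'
  have he0 : e ≠ 0 := norm_ne_zero_iff.1 (he.trans_ne one_ne_zero)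
  exact ⟨smul_left_injective ℝ he0 h, rfl⟩

/-- The union of the segments joining a set to a point. -/
def star {P : Type*} [AddCommGroup P] [Module ℝ P] (S : Set P) (h : P) : Set P :=
  ⋃ p ∈ S, segment ℝ p h

section Star

variable {P : Type*} [NormedAddCommGroup P] [NormedSpace ℝ P] {S : Set P} {h : P}

lemma segment_subset_star {p : P} (hp : p ∈ S) : segment ℝ p h ⊆ star S h :=
  subset_biUnion_of_mem (u := fun p => segment ℝ p h) hp

lemma subset_star : S ⊆ star S h :=
  fun _ hp => segment_subset_star hp (left_mem_segment ℝ _ _)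

lemma star_subset {C : Set P} (hC : Convex ℝ C) (hS : S ⊆ C) (hh : h ∈ C) : star S h ⊆ C :=
  iUnion₂_subset fun _ hp => hC.segment_subset (hS hp) hh

lemma isCompact_star (hS : S.Finite) : IsCompact (star S h) :=
  hS.isCompact_biUnion fun p _ => by
    rw [segment_eq_image']
    exact isCompact_Icc.image (by fun_prop)

end Star

/-- A family of disjoint connected compact sets `Z j` such that, in `D`, the set `Z j` contains the
fibre of `f` over the point `b + r • e j`, but no other points over `closedBall b r`. -/
structure IsConnectingFamily {P V J : Type*} [TopologicalSpace P] [NormedAddCommGroup V]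
    [NormedSpace ℝ V] (f : P → V) (D : Set P) (b : V) (r : ℝ) (e : J → V) (Z : J → Set P) :
    Prop where
  isCompact : ∀ j, IsCompact (Z j)
  pairwise_disjoint : Pairwise (Function.onFun Disjoint Z)
  isPreconnected : ∀ j, IsPreconnected (Z j)
  apply_eq : ∀ j, ∀ x ∈ Z j, x ∈ D → f x ∈ closedBall b r → f x = b + r • e j
  mem : ∀ j, ∀ x ∈ D, f x = b + r • e j → x ∈ Z j

section IsConnectingFamily

variable {P V J : Type*} [TopologicalSpace P] [NormedAddCommGroup V] [NormedSpace ℝ V]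
  {f : P → V} {D : Set P} {b : V} {r : ℝ} {e : J → V} {Z : J → Set P}

lemma isConnectingFamily_empty (he : ∀ j, ‖e j‖ = 1) (hr : 0 ≤ r)
    (h : ∀ x ∈ D, f x ∉ closedBall b r) : IsConnectingFamily f D b r e fun _ => ∅ where
  isCompact _ := isCompact_empty
  pairwise_disjoint _ _ _ := disjoint_empty ∅
  isPreconnected _ := isPreconnected_empty
  apply_eq _ _ hx := hx.elim
  mem j x hx hxj := h x hx <| by
    simp [hxj, norm_smul, he, abs_of_nonneg hr]

lemma IsConnectingFamily.union_of_disjoint (hZ : IsConnectingFamily f D b r e Z) {T : Set P}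
    (hT : IsCompact T) (hTD : Disjoint T D) (j₀ : J) (hTZ : ∀ j ≠ j₀, Disjoint T (Z j))
    (hpre : IsPreconnected (Z j₀ ∪ T)) :
    IsConnectingFamily f D b r e fun j => Z j ∪ {x | j = j₀ ∧ x ∈ T} where
  isCompact j := (hZ.isCompact j).union <| by
    by_cases hj : j = j₀ <;> simp [hj, hT]
  pairwise_disjoint i j hij := by
    refine disjoint_left.2 ?_
    rintro x (hx | ⟨rfl, hx⟩) (hx' | ⟨rfl, hx'⟩)
    · exact disjoint_left.1 (hZ.pairwise_disjoint hij) hx hx'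
    · exact disjoint_left.1 (hTZ i hij) hx' hx
    · exact disjoint_left.1 (hTZ j hij.symm) hx hx'
    · exact hij rfl
  isPreconnected j := by
    by_cases hj : j = j₀
    · subst hj
      simpa using hpre
    · simpa [hj] using hZ.isPreconnected j
  apply_eq j x hx hxD := by
    rcases hx with hx | ⟨-, hx⟩
    · exact hZ.apply_eq j x hx hxD
    · exact absurd hxD (disjoint_left.1 hTD hx)
  mem j x hxD hx := Or.inl (hZ.mem j x hxD hx)

end IsConnectingFamily

namespace PiecewiseAffine

variable {ι P V J : Type*} [NormedAddCommGroup P] [NormedSpace ℝ P] [NormedAddCommGroup V]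
  [NormedSpace ℝ V]

/-- Lifts to the active cells, up to a common length, of the rays from `b` in the directions
`e j`, the lifts to a cell emanating from a common base point. -/
structure RaySystem (Φ : PiecewiseAffine ι P V) (D : Set P) (b : V) (e : J → V) where
  /-- The point over `b` in an active cell from which the lifted rays emanate. -/
  base : Φ.activeCells D b → P
  /-- The direction of the lift of a ray. -/
  dir : Φ.activeCells D b → J → P
  /-- The length of the rays. -/
  length : ℝ
  length_pos : 0 < length
  piece_base : ∀ i : Φ.activeCells D b, Φ.piece i (base i) = b
  contLinear_dir : ∀ (i : Φ.activeCells D b) j, (Φ.piece i).contLinear (dir i j) = e j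
  add_smul_mem : ∀ (i : Φ.activeCells D b) j, ∀ t ∈ Icc 0 length,
    base i + t • dir i j ∈ Φ.cell i ∩ interior D

variable {Φ : PiecewiseAffine ι P V} {D : Set P} {b : V} {e : J → V}

theorem IsRegularValue.nonempty_raySystem [Finite ι] [Finite J] (hb : Φ.IsRegularValue b)
    (hD : IsClosed D) (hDb : ∀ x ∈ D, Φ.toContinuousMap x = b → x ∈ interior D) (e : J → V) :
    Nonempty (RaySystem Φ D b e) := by
  choose a ha hab using fun i : Φ.activeCells D b => hb.exists_mem_cell_inter_interior hD hDb i.2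
  choose v hv using fun (i : Φ.activeCells D b) (j : J) => (hb i i.2.left).2 (e j)
  have hmem : ∀ᶠ t : ℝ in 𝓝 0, ∀ (i : Φ.activeCells D b) (j : J),
      a i + t • v i j ∈ Φ.cell i ∩ interior D := by
    refine eventually_all.2 fun i => eventually_all.2 fun j => ?_
    have hc : Continuous fun t : ℝ => a i + t • v i j := by fun_prop
    refine hc.continuousAt.eventually (((Φ.isOpen_cell i).inter isOpen_interior).mem_nhds ?_)
    simpa using ha i
  obtain ⟨δ, hδ, hmem⟩ := nhds_basis_closedBall.eventually_iff.1 hmem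
  exact ⟨⟨a, v, δ, hδ, hab, hv, fun i j t ht => hmem (by simpa [abs_of_nonneg ht.1] using ht.2)
    i j⟩⟩

namespace RaySystem

variable (R : RaySystem Φ D b e)

/-- The point at parameter `t` on the lift of a ray. -/
def point (i : Φ.activeCells D b) (j : J) (t : ℝ) : P :=
  R.base i + t • R.dir i j

lemma continuous_point (i : Φ.activeCells D b) (j : J) : Continuous (R.point i j) := by
  unfold point
  fun_prop

lemma piece_point (i : Φ.activeCells D b) (j : J) (t : ℝ) :
    Φ.piece i (R.point i j t) = b + t • e j := by
  have h := (Φ.piece i).map_vadd (R.base i) (t • R.dir i j)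
  rw [map_smul, R.contLinear_dir, R.piece_base] at h
  simpa only [point, vadd_eq_add, add_comm] using h

lemma point_mem_fiber (i : Φ.activeCells D b) (j : J) {t : ℝ} (ht : t ∈ Icc 0 R.length) :
    R.point i j t ∈ Φ.fiber i (b + t • e j) :=
  ⟨subset_closure (R.add_smul_mem i j t ht).1, R.piece_point i j t⟩

lemma apply_point (i : Φ.activeCells D b) (j : J) {t : ℝ} (ht : t ∈ Icc 0 R.length) :
    Φ.toContinuousMap (R.point i j t) = b + t • e j :=
  (mem_fiber_iff.1 (R.point_mem_fiber i j ht)).2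

lemma point_mem_interior (i : Φ.activeCells D b) (j : J) {t : ℝ} (ht : t ∈ Icc 0 R.length) :
    R.point i j t ∈ interior D :=
  (R.add_smul_mem i j t ht).2

lemma length_mem : R.length ∈ Icc 0 R.length :=
  right_mem_Icc.2 R.length_pos.le

/-- The ends of the lifts of one ray. -/
def tips (j : J) : Set P :=
  range fun i => R.point i j R.length

/-- The affine subspaces which the stars have to avoid: the fibres of the pieces over `b`, and the
lines carrying the lifted rays. -/
def obstacles : Set (AffineSubspace ℝ P) :=
  (range fun i : Φ.activeCells D b => AffineSubspace.mk' (R.base i) (Φ.piece i).contLinear.ker) ∪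
    range fun i : Φ.activeCells D b × J => line[ℝ, R.base i.1, R.point i.1 i.2 R.length]

lemma tips_subset_interior (j : J) : R.tips j ⊆ interior D :=
  range_subset_iff.2 fun i => R.point_mem_interior i j R.length_mem

lemma apply_of_mem_tips {j : J} {p : P} (hp : p ∈ R.tips j) :
    Φ.toContinuousMap p = b + R.length • e j := by
  obtain ⟨i, rfl⟩ := hp
  exact R.apply_point i j R.length_mem

lemma finite_tips [Finite ι] (j : J) : (R.tips j).Finite :=
  finite_range _

lemma finite_obstacles [Finite ι] [Finite J] : R.obstacles.Finite :=
  (finite_range _).union (finite_range _)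

lemma mem_obstacle_of_mem_fiber (i : Φ.activeCells D b) {z : P} (hz : z ∈ Φ.fiber i b) :
    z ∈ AffineSubspace.mk' (R.base i) (Φ.piece i).contLinear.ker := by
  have h := (Φ.piece i).contLinear_map_vsub z (R.base i)
  rw [hz.2, R.piece_base, vsub_self] at h
  exact AffineSubspace.mem_mk'.2 h

lemma point_mem_line (i : Φ.activeCells D b) (j : J) (t : ℝ) :
    R.point i j t ∈ line[ℝ, R.base i, R.point i j R.length] := by
  have h := AffineMap.lineMap_mem_affineSpan_pair (t / R.length) (R.base i)
    (R.point i j R.length)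
  rwa [AffineMap.lineMap_apply, vsub_eq_sub, point, add_sub_cancel_left, smul_smul,
    div_mul_cancel₀ _ R.length_pos.ne', vadd_eq_add, add_comm (_ • _)] at h

lemma finrank_direction_add_two_le [FiniteDimensional ℝ P] [FiniteDimensional ℝ V]
    (hb : Φ.IsRegularValue b) (hV : 3 ≤ Module.finrank ℝ V) {s : AffineSubspace ℝ P}
    (hs : s ∈ R.obstacles) : Module.finrank ℝ s.direction + 2 ≤ Module.finrank ℝ P := by
  have hker : ∀ i : Φ.activeCells D b, Module.finrank ℝ (Φ.piece i).contLinear.ker +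
      Module.finrank ℝ V = Module.finrank ℝ P := fun i => by
    have h := LinearMap.finrank_range_add_finrank_ker (Φ.piece i).contLinear.toLinearMap
    rwa [LinearMap.range_eq_top.2 (hb i i.2.left).2, finrank_top, add_comm] at h
  rcases hs with ⟨i, rfl⟩ | ⟨⟨i, j⟩, rfl⟩
  · have := hker i
    rw [AffineSubspace.direction_mk']
    omega
  · have := hker i
    have := finrank_direction_line_le_one (R.base i) (R.point i j R.length)
    simp only
    omega

end RaySystem

end PiecewiseAffine

lemma eventually_forall_notMem_closedBall {P V : Type*} [TopologicalSpace P]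
    [PseudoMetricSpace V] [T2Space V] {K : Set P} (hK : IsCompact K) (f : C(P, V)) {b : V}
    (hb : ∀ x ∈ K, f x ≠ b) : ∀ᶠ r : ℝ in 𝓝 0, ∀ x ∈ K, f x ∉ closedBall b r := by
  have hmem : (f '' K)ᶜ ∈ 𝓝 b :=
    (hK.image f.continuous).isClosed.isOpen_compl.mem_nhds fun ⟨x, hx, hxb⟩ => hb x hx hxb
  filter_upwards [eventually_closedBall_subset hmem] with r hr x hx hxr
  exact hr hxr (mem_image_of_mem f hx)

namespace PiecewiseAffine.RaySystem

variable {ι P V J : Type*} [NormedAddCommGroup P] [NormedSpace ℝ P] [NormedAddCommGroup V]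
  [NormedSpace ℝ V] {Φ : PiecewiseAffine ι P V} {D : Set P} {b : V} {e : J → V}
  (R : RaySystem Φ D b e)

/-- The fibre of a piece over `b + r • e j` together with the part of the lifted ray beyond it. -/
def branch (r : ℝ) (i : Φ.activeCells D b) (j : J) : Set P :=
  Φ.fiber i (b + r • e j) ∪ R.point i j '' Icc r R.length

/-- The hubs `h j` join the tips of the `j`-th rays and further points `A j` by stars which are
disjoint and stay off the obstacles, and `r` is so small that `closedBall b r` only meets the
images of `D` under active cells, and not the images of the stars. -/
structure IsNetwork (A : J → Set P) (h : J → P) (r : ℝ) : Prop where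
  radius_pos : 0 < r
  radius_le : r ≤ R.length
  isHub : ∀ j, IsHub (R.tips j ∪ A j) R.obstacles (h j)
  pairwise_disjoint_star : Pairwise (Function.onFun Disjoint fun j => star (R.tips j ∪ A j) (h j))
  mem_interior : ∀ x ∈ D, Φ.toContinuousMap x ∈ closedBall b r → x ∈ interior D
  mem_activeCells : ∀ i, ∀ x ∈ D ∩ closure (Φ.cell i), Φ.toContinuousMap x ∈ closedBall b r →
    i ∈ Φ.activeCells D b
  notMem_closedBall : ∀ j, ∀ x ∈ D ∩ star (R.tips j ∪ A j) (h j),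
    Φ.toContinuousMap x ∉ closedBall b r

/-- The `j`-th connecting set of a network. -/
def carrier (A : J → Set P) (h : J → P) (r : ℝ) (j : J) : Set P :=
  (⋃ i, R.branch r i j) ∪ star (R.tips j ∪ A j) (h j)

variable {R} {A : J → Set P} {h : J → P} {r : ℝ}

section Hub

variable (he : ∀ j, ‖e j‖ = 1) (hAD : ∀ j, Disjoint (A j) D)
include he hAD

lemma apply_ne_of_mem_star {j : J} (hh : IsHub (R.tips j ∪ A j) R.obstacles (h j)) {z : P}
    (hz : z ∈ star (R.tips j ∪ A j) (h j)) (hzD : z ∈ D) : Φ.toContinuousMap z ≠ b := fun hzb => by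
  obtain ⟨p, hp, hzp⟩ := mem_iUnion₂.1 hz
  obtain ⟨i, hi⟩ := Φ.exists_mem_closure_cell z
  have hzi : z ∈ Φ.fiber i b := mem_fiber_iff.2 ⟨hi, hzb⟩
  obtain rfl : z = p := hh p hp _ (Or.inl ⟨⟨i, z, hzi, hzD⟩, rfl⟩) z hzp
    (R.mem_obstacle_of_mem_fiber ⟨i, z, hzi, hzD⟩ hzi)
  rcases hp with hp | hp
  · have h0 : R.length • e j = 0 := left_eq_add.1 (hzb.symm.trans (R.apply_of_mem_tips hp))
    have := congrArg norm h0
    rw [norm_smul, he, mul_one, norm_zero, norm_eq_zero] at this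
    exact R.length_pos.ne' this
  · exact disjoint_left.1 (hAD j) hp hzD

lemma point_notMem_star (hinj : Function.Injective e) {j k : J} (hjk : j ≠ k)
    (hh : IsHub (R.tips k ∪ A k) R.obstacles (h k)) (i : Φ.activeCells D b) {t : ℝ}
    (ht : t ∈ Ioc 0 R.length) : R.point i j t ∉ star (R.tips k ∪ A k) (h k) := fun hz => by
  obtain ⟨p, hp, hzp⟩ := mem_iUnion₂.1 hz
  have hIcc := Ioc_subset_Icc_self ht
  have hpz := hh p hp _ (Or.inr ⟨(i, j), rfl⟩) _ hzp (R.point_mem_line i j t)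
  rw [← hpz] at hp
  rcases hp with hp | hp
  · have := add_left_cancel ((R.apply_point i j hIcc).symm.trans (R.apply_of_mem_tips hp))
    exact hjk (hinj (smul_eq_smul_of_norm_eq_one (he j) (he k) ht.1 R.length_pos this).2)
  · exact disjoint_left.1 (hAD k) hp (interior_subset (R.point_mem_interior i j hIcc))

lemma pairwise_disjoint_tips_union (hinj : Function.Injective e)
    (hA : Pairwise (Function.onFun Disjoint A)) :
    Pairwise (Function.onFun Disjoint fun j => R.tips j ∪ A j) := fun j k hjk => by
  have htips : Disjoint (R.tips j) (R.tips k) := disjoint_left.2 fun p hp hp' => by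
    have := add_left_cancel ((R.apply_of_mem_tips hp).symm.trans (R.apply_of_mem_tips hp'))
    exact hjk (hinj (smul_eq_smul_of_norm_eq_one (he j) (he k) R.length_pos R.length_pos this).2)
  have hD (j k : J) : Disjoint (R.tips j) (A k) :=
    (hAD k).symm.mono_left ((R.tips_subset_interior j).trans interior_subset)
  exact disjoint_union_left.2 ⟨disjoint_union_right.2 ⟨htips, hD j k⟩,
    disjoint_union_right.2 ⟨(hD k j).symm, hA hjk⟩⟩

theorem exists_isNetwork [Finite ι] [Finite J] [FiniteDimensional ℝ P] [FiniteDimensional ℝ V]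
    (hb : Φ.IsRegularValue b) (hV : 3 ≤ Module.finrank ℝ V) (hP : 3 ≤ Module.finrank ℝ P)
    (hinj : Function.Injective e) (hD : IsCompact D) {U : Set V} (hU : U ∈ 𝓝 b)
    (hDU : ∀ x ∈ D, Φ.toContinuousMap x ∈ U → x ∈ interior D)
    (hA : ∀ j, (A j).Finite) (hAdisj : Pairwise (Function.onFun Disjoint A)) {O : Set P}
    (hO : IsOpen O) (hne : O.Nonempty) :
    ∃ h r, (∀ j, h j ∈ O) ∧ closedBall b r ⊆ U ∧ R.IsNetwork A h r := by
  obtain ⟨h, hh, hdisj⟩ := exists_isHub_pairwise_disjoint hP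
    (fun j => (R.finite_tips j).union (hA j)) (pairwise_disjoint_tips_union he hAD hinj hAdisj)
    R.finite_obstacles (fun s hs => R.finrank_direction_add_two_le hb hV hs) hO hne
  have hinactive : ∀ᶠ r : ℝ in 𝓝 0, ∀ x ∈ ⋃ i ∈ (Φ.activeCells D b)ᶜ, D ∩ closure (Φ.cell i),
      Φ.toContinuousMap x ∉ closedBall b r := by
    refine eventually_forall_notMem_closedBall ((toFinite _).isCompact_biUnion fun i _ =>
      hD.inter_right isClosed_closure) _ fun x hx hxb => ?_
    obtain ⟨i, hi, hxD, hxi⟩ := mem_iUnion₂.1 hx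
    exact hi ⟨x, mem_fiber_iff.2 ⟨hxi, hxb⟩, hxD⟩
  have hstar : ∀ᶠ r : ℝ in 𝓝 0, ∀ j, ∀ x ∈ D ∩ star (R.tips j ∪ A j) (h j),
      Φ.toContinuousMap x ∉ closedBall b r :=
    eventually_all.2 fun j => eventually_forall_notMem_closedBall
      (hD.inter (isCompact_star ((R.finite_tips j).union (hA j)))) _ fun x hx =>
        apply_ne_of_mem_star he hAD (hh j).2 hx.2 hx.1
  have hsmall := ((eventually_closedBall_subset hU).and (hinactive.and hstar)).filter_mono
    (nhdsWithin_le_nhds (s := Ioi 0))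
  obtain ⟨r, ⟨hrU, hrcell, hrstar⟩, hr⟩ := (hsmall.and (Ioc_mem_nhdsGT R.length_pos)).exists
  refine ⟨h, r, fun j => (hh j).1, hrU, hr.1, hr.2, fun j => (hh j).2, fun j k hjk => ?_,
    fun x hx hxr => hDU x hx (hrU hxr), fun i x hx hxr => ?_, hrstar⟩
  · exact disjoint_iUnion₂_left.2 fun p hp => disjoint_iUnion₂_right.2 (hdisj hjk p hp)
  · by_contra hi
    exact hrcell x (mem_biUnion hi hx) hxr

end Hub

lemma anchors_subset_carrier (j : J) : A j ⊆ R.carrier A h r j :=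
  subset_union_right.trans (subset_star.trans subset_union_right)

namespace IsNetwork

variable (N : R.IsNetwork A h r)
include N

lemma radius_mem : r ∈ Icc 0 R.length :=
  ⟨N.radius_pos.le, N.radius_le⟩

lemma branch_subset_interior (hD : IsClosed D) (he : ∀ j, ‖e j‖ = 1) (i : Φ.activeCells D b)
    (j : J) : R.branch r i j ⊆ interior D := by
  have hmem : b + r • e j ∈ closedBall b r := by
    simp [norm_smul, he, abs_of_nonneg N.radius_pos.le]
  refine union_subset (fiber_subset_interior hD (fun x hx hxj => N.mem_interior x hx (hxj ▸ hmem))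
    ⟨_, R.point_mem_fiber i j N.radius_mem,
      interior_subset (R.point_mem_interior i j N.radius_mem)⟩) ?_
  rintro _ ⟨t, ht, rfl⟩
  exact R.point_mem_interior i j (Icc_subset_Icc_left N.radius_pos.le ht)

lemma exists_apply_eq_of_mem_branch {i : Φ.activeCells D b} {j : J} {x : P}
    (hx : x ∈ R.branch r i j) : ∃ t, r ≤ t ∧ Φ.toContinuousMap x = b + t • e j := by
  rcases hx with hx | ⟨t, ht, rfl⟩
  · exact ⟨r, le_rfl, (mem_fiber_iff.1 hx).2⟩
  · exact ⟨t, ht.1, R.apply_point i j (Icc_subset_Icc_left N.radius_pos.le ht)⟩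

lemma isPreconnected_branch (i : Φ.activeCells D b) (j : J) : IsPreconnected (R.branch r i j) :=
  IsPreconnected.union (R.point i j r) (R.point_mem_fiber i j N.radius_mem)
    ⟨r, left_mem_Icc.2 N.radius_le, rfl⟩ (Φ.convex_fiber _ _).isPreconnected
    (isPreconnected_Icc.image _ (R.continuous_point i j).continuousOn)

lemma isPreconnected_carrier (j : J) : IsPreconnected (R.carrier A h r j) := by
  refine isPreconnected_of_forall (h j) fun x hx => ?_
  rcases hx with hx | hx
  · obtain ⟨i, hx⟩ := mem_iUnion.1 hx
    have htip : R.point i j R.length ∈ R.tips j ∪ A j := Or.inl ⟨i, rfl⟩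
    refine ⟨R.branch r i j ∪ segment ℝ (R.point i j R.length) (h j),
      union_subset_union (subset_iUnion (fun i => R.branch r i j) i) (segment_subset_star htip),
      Or.inr (right_mem_segment ℝ _ _), Or.inl hx, ?_⟩
    exact (N.isPreconnected_branch i j).union (R.point i j R.length)
      (Or.inr ⟨R.length, right_mem_Icc.2 N.radius_le, rfl⟩) (left_mem_segment ℝ _ _)
      (convex_segment _ _).isPreconnected
  · obtain ⟨p, hp, hxp⟩ := mem_iUnion₂.1 hx
    exact ⟨segment ℝ p (h j), (segment_subset_star hp).trans subset_union_right,
      right_mem_segment ℝ _ _, hxp, (convex_segment _ _).isPreconnected⟩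

lemma disjoint_branch (he : ∀ j, ‖e j‖ = 1) (hinj : Function.Injective e) {j k : J} (hjk : j ≠ k)
    (i l : Φ.activeCells D b) : Disjoint (R.branch r i j) (R.branch r l k) :=
  disjoint_left.2 fun x hx hx' => by
    obtain ⟨s, hs, hxs⟩ := N.exists_apply_eq_of_mem_branch hx
    obtain ⟨t, ht, hxt⟩ := N.exists_apply_eq_of_mem_branch hx'
    exact hjk (hinj (smul_eq_smul_of_norm_eq_one (he j) (he k) (N.radius_pos.trans_le hs)
      (N.radius_pos.trans_le ht) (add_left_cancel (hxs.symm.trans hxt))).2)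

lemma disjoint_branch_star (he : ∀ j, ‖e j‖ = 1) (hinj : Function.Injective e)
    (hD : IsClosed D) (hAD : ∀ j, Disjoint (A j) D) {j k : J} (hjk : j ≠ k)
    (i : Φ.activeCells D b) : Disjoint (R.branch r i j) (star (R.tips k ∪ A k) (h k)) := by
  refine disjoint_left.2 fun x hx hxs => ?_
  have hxD : x ∈ D := interior_subset (N.branch_subset_interior hD he i j hx)
  rcases hx with hx | ⟨t, ht, rfl⟩
  · refine N.notMem_closedBall k x ⟨hxD, hxs⟩ ?_
    simp [(mem_fiber_iff.1 hx).2, norm_smul, he, abs_of_nonneg N.radius_pos.le]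
  · exact point_notMem_star he hAD hinj hjk (N.isHub k) i ⟨N.radius_pos.trans_le ht.1, ht.2⟩ hxs

theorem isConnectingFamily_carrier [Finite ι] (he : ∀ j, ‖e j‖ = 1)
    (hinj : Function.Injective e) (hD : IsCompact D) (hA : ∀ j, (A j).Finite)
    (hAD : ∀ j, Disjoint (A j) D) :
    IsConnectingFamily Φ.toContinuousMap D b r e (R.carrier A h r) where
  isCompact j := by
    refine (isCompact_iUnion fun i => ?_).union (isCompact_star ((R.finite_tips j).union (hA j)))
    refine .union ?_ (isCompact_Icc.image (R.continuous_point i j))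
    exact hD.of_isClosed_subset (Φ.isClosed_fiber _ _)
      (subset_union_left.trans ((N.branch_subset_interior hD.isClosed he i j).trans
        interior_subset))
  pairwise_disjoint j k hjk := by
    refine disjoint_union_left.2 ⟨disjoint_iUnion_left.2 fun i => disjoint_union_right.2
      ⟨disjoint_iUnion_right.2 fun l => N.disjoint_branch he hinj hjk i l,
        N.disjoint_branch_star he hinj hD.isClosed hAD hjk i⟩, disjoint_union_right.2
      ⟨disjoint_iUnion_right.2 fun i =>
        (N.disjoint_branch_star he hinj hD.isClosed hAD hjk.symm i).symm,
        N.pairwise_disjoint_star hjk⟩⟩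
  isPreconnected := N.isPreconnected_carrier
  apply_eq j x hx hxD hxr := by
    rcases hx with hx | hx
    · obtain ⟨i, hx⟩ := mem_iUnion.1 hx
      obtain ⟨t, ht, hxt⟩ := N.exists_apply_eq_of_mem_branch hx
      rw [hxt, mem_closedBall_iff_norm, add_sub_cancel_left, norm_smul, he, mul_one,
        Real.norm_of_nonneg (N.radius_pos.le.trans ht)] at hxr
      rw [hxt, le_antisymm hxr ht]
    · exact absurd hxr (N.notMem_closedBall j x ⟨hxD, hx⟩)
  mem j x hxD hx := by
    obtain ⟨i, hi⟩ := Φ.exists_mem_closure_cell x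
    have hact := N.mem_activeCells i x ⟨hxD, hi⟩ <| by
      simp [hx, norm_smul, he, abs_of_nonneg N.radius_pos.le]
    exact Or.inl (mem_iUnion_of_mem ⟨i, hact⟩ (Or.inl (mem_fiber_iff.2 ⟨hi, hx⟩)))

lemma carrier_subset (he : ∀ j, ‖e j‖ = 1) (hD : IsClosed D) {C : Set P} (hC : Convex ℝ C)
    (hDC : D ⊆ C) {j : J} (hAC : A j ⊆ C) (hh : h j ∈ C) : R.carrier A h r j ⊆ C := by
  have hDC' := interior_subset.trans hDC
  exact union_subset
    (iUnion_subset fun i => (N.branch_subset_interior hD he i j).trans hDC')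
    (star_subset hC (union_subset ((R.tips_subset_interior j).trans hDC') hAC) hh)

end IsNetwork

end PiecewiseAffine.RaySystem

section ConnectingFamily

variable {ι P V J : Type*} [Finite ι] [Finite J] [NormedAddCommGroup P] [NormedSpace ℝ P]
  [FiniteDimensional ℝ P] [NormedAddCommGroup V] [NormedSpace ℝ V] [FiniteDimensional ℝ V]
  {Φ : PiecewiseAffine ι P V} {D : Set P} {b : V} {e : J → V}

lemma PiecewiseAffine.IsRegularValue.exists_isConnectingFamily_sphere_subset
    (hb : Φ.IsRegularValue b) (hV : 3 ≤ Module.finrank ℝ V) (hD : IsCompact D)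
    (hDball : D ⊆ ball 0 1) (hbD : ∃ x ∈ D, Φ.toContinuousMap x = b) {U : Set V} (hU : U ∈ 𝓝 b)
    (hDU : ∀ x ∈ D, Φ.toContinuousMap x ∈ U → x ∈ interior D) (j₀ : J)
    (he : ∀ j, ‖e j‖ = 1) (hinj : Function.Injective e) :
    ∃ r > 0, closedBall b r ⊆ U ∧ ∃ Z, IsConnectingFamily Φ.toContinuousMap D b r e Z ∧
      (∀ j, Z j ⊆ closedBall 0 1) ∧ sphere 0 1 ⊆ Z j₀ := by
  obtain ⟨R⟩ := hb.nonempty_raySystem hD.isClosed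
    (fun x hx hxb => hDU x hx (hxb ▸ mem_of_mem_nhds hU)) e
  have hP : 3 ≤ Module.finrank ℝ P := by
    obtain ⟨x, -, hxb⟩ := hbD
    exact hV.trans (hb.finrank_le hxb)
  have : Nontrivial P := Module.nontrivial_of_finrank_pos (R := ℝ) (by omega)
  obtain ⟨p, hp⟩ : (sphere (0 : P) 1).Nonempty := NormedSpace.sphere_nonempty.2 zero_le_one
  have hsphere : Disjoint (sphere (0 : P) 1) D := sphere_disjoint_ball.mono_right hDball
  let A (j : J) : Set P := {q | j = j₀ ∧ q = p}
  have hAp (j : J) : A j ⊆ {p} := fun q hq => hq.2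
  obtain ⟨h, r, hh, hrU, N⟩ := PiecewiseAffine.RaySystem.exists_isNetwork
    (R := R) (A := A) (O := ball 0 1) he
    (fun j => hsphere.mono_left ((hAp j).trans (singleton_subset_iff.2 hp))) hb hV hP hinj hD hU
    hDU (fun j => (finite_singleton p).subset (hAp j))
    (fun i j hij => disjoint_left.2 fun q hqi hqj => hij (hqi.1.trans hqj.1.symm))
    isOpen_ball (nonempty_ball.2 (zero_lt_one' ℝ))
  have hZ := N.isConnectingFamily_carrier he hinj hD
    (fun j => (finite_singleton p).subset (hAp j))
    (fun j => hsphere.mono_left ((hAp j).trans (singleton_subset_iff.2 hp)))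
  have hcarrier (j : J) {C : Set P} (hC : Convex ℝ C) (hball : ball 0 1 ⊆ C) (hAC : A j ⊆ C) :
      R.carrier A h r j ⊆ C :=
    N.carrier_subset he hD.isClosed hC (hDball.trans hball) hAC (hball (hh j))
  have hinter (j : J) (hj : j ≠ j₀) : Disjoint (sphere 0 1) (R.carrier A h r j) :=
    sphere_disjoint_ball.mono_right
      (hcarrier j (convex_ball 0 1) Subset.rfl fun q hq => absurd hq.1 hj)
  have hpre : IsPreconnected (R.carrier A h r j₀ ∪ sphere 0 1) :=
    (hZ.isPreconnected j₀).union p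
      (PiecewiseAffine.RaySystem.anchors_subset_carrier j₀ ⟨rfl, rfl⟩) hp
      (isPreconnected_sphere (Module.one_lt_rank_of_one_lt_finrank (by omega)) 0 1)
  refine ⟨r, N.radius_pos, hrU, _,
    hZ.union_of_disjoint (isCompact_sphere 0 1) hsphere j₀ hinter hpre,
    fun j => union_subset (hcarrier j (convex_closedBall 0 1) ball_subset_closedBall
      ((hAp j).trans (singleton_subset_iff.2 (sphere_subset_closedBall hp))))
      fun x hx => sphere_subset_closedBall hx.2, fun x hx => Or.inr ⟨rfl, hx⟩⟩

theorem exists_isConnectingFamily_sphere_subset (hP : 2 ≤ Module.finrank ℝ P)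
    (hV : 3 ≤ Module.finrank ℝ V) (Φ : PiecewiseAffine ι P V) (hD : IsCompact D)
    (hDball : D ⊆ ball 0 1) {O : Set V} (hO : IsOpen O) (hne : O.Nonempty)
    (hDO : ∀ x ∈ D, Φ.toContinuousMap x ∈ O → x ∈ interior D) (j₀ : J)
    (he : ∀ j, ‖e j‖ = 1) (hinj : Function.Injective e) :
    ∃ b, ∃ r > 0, closedBall b r ⊆ O ∧ ∃ Z, IsConnectingFamily Φ.toContinuousMap D b r e Z ∧
      (∀ j, Z j ⊆ closedBall 0 1) ∧ sphere 0 1 ⊆ Z j₀ := by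
  obtain ⟨b, hbO, hb⟩ := Φ.exists_isRegularValue_mem hO hne
  refine ⟨b, ?_⟩
  by_cases hbD : ∃ x ∈ D, Φ.toContinuousMap x = b
  · exact hb.exists_isConnectingFamily_sphere_subset hV hD hDball hbD (hO.mem_nhds hbO) hDO j₀ he
      hinj
  · push Not at hbD
    have hsmall := ((eventually_closedBall_subset (hO.mem_nhds hbO)).and
      (eventually_forall_notMem_closedBall hD Φ.toContinuousMap hbD)).filter_mono
        (nhdsWithin_le_nhds (s := Ioi 0))
    obtain ⟨r, ⟨hrO, hrD⟩, hr⟩ := (hsmall.and self_mem_nhdsWithin).exists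
    have hsphere : IsPreconnected (sphere (0 : P) 1) :=
      isPreconnected_sphere (Module.one_lt_rank_of_one_lt_finrank hP) 0 1
    refine ⟨r, hr, hrO, _, (isConnectingFamily_empty he (le_of_lt hr) hrD).union_of_disjoint
      (isCompact_sphere 0 1) (sphere_disjoint_ball.mono_right hDball) j₀
      (fun _ _ => disjoint_empty _) ((empty_union (sphere (0 : P) 1)).symm ▸ hsphere),
      fun j => union_subset (empty_subset _) fun x hx => sphere_subset_closedBall hx.2,
      fun x hx => Or.inr ⟨rfl, hx⟩⟩

end ConnectingFamily

lemma exists_glue {X Y : Type*} [TopologicalSpace X] [TopologicalSpace Y] {A B : Set X}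
    (hA : IsClosed A) (hB : IsClosed B) (hAB : A ∪ B = univ) {f g : X → Y}
    (hf : ContinuousOn f A) (hg : ContinuousOn g B) (hfg : ∀ x ∈ A, x ∈ B → f x = g x) :
    ∃ F : C(X, Y), EqOn F f A ∧ EqOn F g B := by
  classical
  have hFA : EqOn (A.piecewise f g) f A := piecewise_eqOn A f g
  have hFB : EqOn (A.piecewise f g) g B := fun x hx => by
    by_cases hxA : x ∈ A
    · rw [hFA hxA, hfg x hxA hx]
    · exact piecewise_eq_of_notMem _ _ _ hxA
  refine ⟨⟨A.piecewise f g, ?_⟩, hFA, hFB⟩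
  rw [← continuousOn_univ, ← hAB]
  exact (hf.congr hFA).union_of_isClosed (hg.congr hFB) hA hB

/-- Constancy on the set `A`. A homotopy with this property is a homotopy between maps on the
quotient `X/A`. -/
def ConstOn {X Y : Type*} [TopologicalSpace X] [TopologicalSpace Y] (A : Set X) (f : C(X, Y)) :
    Prop :=
  ∀ x ∈ A, ∀ x' ∈ A, f x = f x'

section ConstOn

variable {X Y : Type*} [TopologicalSpace X] [TopologicalSpace Y] {A : Set X} {f g : C(X, Y)}

lemma ConstOn.of_forall_eq {y : Y} (h : ∀ x ∈ A, f x = y) : ConstOn A f :=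
  fun x hx x' hx' => (h x hx).trans (h x' hx').symm

lemma homotopicWith_constOn (H : C(I × X, Y)) (h0 : ∀ x, H (0, x) = f x)
    (h1 : ∀ x, H (1, x) = g x) (hA : ∀ t, ∀ x ∈ A, ∀ x' ∈ A, H (t, x) = H (t, x')) :
    f.HomotopicWith g (ConstOn A) :=
  ⟨{ toContinuousMap := H
     map_zero_left := h0
     map_one_left := h1
     prop' := fun t x hx x' hx' => hA t x hx x' hx' }⟩

lemma constOn_of_homotopicWith (h : f.HomotopicWith g (ConstOn A)) :
    ConstOn A g := by
  obtain ⟨H⟩ := h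
  intro x hx x' hx'
  simpa using H.prop' 1 x hx x' hx'

end ConstOn

/-! ### The one-point compactification of a normed space -/

section OnePoint

open OnePoint

variable {V : Type*} [NormedAddCommGroup V]

lemma tendsto_nhds_infty_of_norm {α : Type*} {l : Filter α} {f : α → OnePoint V}
    (h : ∀ R : ℝ, ∀ᶠ x in l, ∀ v : V, f x = v → R < ‖v‖) : Tendsto f l (𝓝 ∞) := by
  rw [hasBasis_nhds_infty.tendsto_right_iff]
  rintro s ⟨-, hs⟩
  obtain ⟨R, hR⟩ := hs.isBounded.exists_norm_le
  filter_upwards [h R] with x hx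
  induction hfx : f x using OnePoint.rec with
  | infty => exact Or.inr rfl
  | coe v => exact Or.inl ⟨v, fun hv => (hR v hv).not_gt (hx v hfx), rfl⟩

lemma isOpen_coe_ball (b : V) (r : ℝ) : IsOpen ((↑) '' ball b r : Set (OnePoint V)) :=
  isOpen_image_coe.2 isOpen_ball

lemma isClosed_coe_closedBall [ProperSpace V] (b : V) (r : ℝ) :
    IsClosed ((↑) '' closedBall b r : Set (OnePoint V)) :=
  isClosed_image_coe.2 ⟨isClosed_closedBall, isCompact_closedBall b r⟩

lemma eventually_nhds_infty_lt_norm [ProperSpace V] (R : ℝ) :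
    ∀ᶠ z : OnePoint V in 𝓝 ∞, ∀ v : V, z = v → R < ‖v‖ := by
  filter_upwards [(isClosed_coe_closedBall (0 : V) R).isOpen_compl.mem_nhds
    infty_notMem_image_coe] with z hz v hzv
  by_contra hv
  exact hz ⟨v, by simpa using hv, hzv.symm⟩

lemma compl_coe_ball_union_coe_closedBall (b : V) (r : ℝ) :
    ((↑) '' ball b r : Set (OnePoint V))ᶜ ∪ (↑) '' closedBall b r = univ :=
  compl_subset_iff_union.1 ((compl_compl _).trans_subset (image_mono ball_subset_closedBall))

/-- The point itself for a point of `V`; the value at `∞` is the junk value `0`. -/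
def finitePart (z : OnePoint V) : V := z.elim 0 id

@[simp] lemma finitePart_coe (v : V) : finitePart (v : OnePoint V) = v := rfl

lemma continuousAt_finitePart {z : OnePoint V} (hz : z ≠ ∞) : ContinuousAt finitePart z := by
  obtain ⟨v, rfl⟩ := ne_infty_iff_exists.1 hz
  exact continuousAt_coe.2 continuousAt_id

end OnePoint

section Inversion

open OnePoint EuclideanGeometry

variable {V : Type*} [NormedAddCommGroup V] [InnerProductSpace ℝ V] {b : V} {r : ℝ}

/-- The inversion in the sphere of radius `r` about `b`, extended by sending `∞` to `b`; it is
meaningful away from `b`, which a total inversion would send to `∞`. -/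
noncomputable def onePointInversion (b : V) (r : ℝ) (z : OnePoint V) : V :=
  z.elim b (inversion b r)

/-- The inversion in the sphere of radius `r` about `b`, as a map from `V` sending `b` to `∞`. -/
noncomputable def onePointInversionSymm (b : V) (r : ℝ) (w : V) : OnePoint V :=
  open Classical in if w = b then ∞ else ↑(inversion b r w)

lemma onePointInversion_coe (y : V) : onePointInversion b r y = inversion b r y := rfl

lemma onePointInversion_infty : onePointInversion b r ∞ = b := rfl

lemma onePointInversionSymm_center : onePointInversionSymm b r b = ∞ := if_pos rfl

lemma onePointInversionSymm_of_ne {w : V} (hw : w ≠ b) :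
    onePointInversionSymm b r w = ↑(inversion b r w) := if_neg hw

lemma onePointInversionSymm_onePointInversion (hr : r ≠ 0) {z : OnePoint V} (hz : z ≠ b) :
    onePointInversionSymm b r (onePointInversion b r z) = z := by
  induction z using OnePoint.rec with
  | infty => rw [onePointInversion_infty, onePointInversionSymm_center]
  | coe y =>
    have hy : inversion b r y ≠ b := (inversion_eq_center hr).not.2 fun h => hz (by rw [h])
    rw [onePointInversion_coe, onePointInversionSymm_of_ne hy, inversion_inversion b hr]

lemma onePointInversion_onePointInversionSymm (hr : r ≠ 0) (w : V) :
    onePointInversion b r (onePointInversionSymm b r w) = w := by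
  by_cases hw : w = b
  · rw [hw, onePointInversionSymm_center, onePointInversion_infty]
  · rw [onePointInversionSymm_of_ne hw, onePointInversion_coe, inversion_inversion b hr]

lemma onePointInversionSymm_eq_coe_iff (hr : 0 < r) {y : V} (hy : y ∈ sphere b r) {w : V} :
    onePointInversionSymm b r w = y ↔ w = y := by
  have hyb : y ≠ b := ne_of_mem_sphere hy hr.ne'
  have hinv : onePointInversion b r y = y := inversion_of_mem_sphere hy
  refine ⟨fun h => ?_, fun h => ?_⟩
  · rw [← onePointInversion_onePointInversionSymm hr.ne' w, h, hinv]
  · rw [h, ← onePointInversionSymm_onePointInversion hr.ne' (coe_eq_coe.not.2 hyb), hinv]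

lemma onePointInversion_mem_closedBall (hr : 0 < r) {z : OnePoint V}
    (hz : z ∉ ((↑) '' ball b r : Set (OnePoint V))) :
    onePointInversion b r z ∈ closedBall b r := by
  induction z using OnePoint.rec with
  | infty => exact mem_closedBall_self hr.le
  | coe y =>
    have hy : r ≤ dist y b := not_lt.1 fun h => hz ⟨y, h, rfl⟩
    rw [onePointInversion_coe, mem_closedBall, dist_inversion_center,
      div_le_iff₀ (hr.trans_le hy), sq]
    exact mul_le_mul_of_nonneg_left hy hr.le

lemma continuous_onePointInversionSymm (hr : r ≠ 0) : Continuous (onePointInversionSymm b r) := by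
  classical
  have hupdate : onePointInversionSymm b r = Function.update (fun u => ↑(inversion b r u)) b ∞ :=
    funext fun u => by simp only [Function.update_apply, onePointInversionSymm]
  rw [hupdate, continuous_iff_continuousAt]
  intro w
  rcases eq_or_ne w b with rfl | hw
  · rw [continuousAt_update_same]
    refine tendsto_nhds_infty_of_norm fun R => ?_
    filter_upwards [(tendsto_norm_cobounded_atTop.comp
      (tendsto_inversion_nhdsNE_center_cobounded hr)).eventually_gt_atTop R] with u hu v hv
    rwa [← coe_eq_coe.1 hv]
  · exact (continuousAt_update_of_ne hw).2 (continuous_coe.continuousAt.comp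
      (continuousAt_const.inversion continuousAt_const continuousAt_id hw))

lemma continuousAt_onePointInversion [ProperSpace V] {z : OnePoint V} (hz : z ≠ b) :
    ContinuousAt (onePointInversion b r) z := by
  induction z using OnePoint.rec with
  | infty =>
    rw [continuousAt_infty', onePointInversion_infty, coclosedCompact_eq_cocompact,
      tendsto_iff_dist_tendsto_zero]
    simp only [Function.comp_def, onePointInversion_coe, dist_inversion_center]
    exact (tendsto_dist_right_cocompact_atTop b).const_div_atTop _
  | coe y =>
    exact continuousAt_coe.2 (continuousAt_const.inversion continuousAt_const continuousAt_id
      fun h => hz (by rw [h]))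

end Inversion

/-! ### Prescribing the preimages of finitely many points -/

lemma exists_continuousOn_union_iUnion {X V J : Type*} [TopologicalSpace X] [TopologicalSpace V]
    [Finite J] {Y : Set X} (hY : IsClosed Y) {β : X → V} (hβ : ContinuousOn β Y)
    {Z : J → Set X} (hZ : ∀ j, IsClosed (Z j)) (hdisj : Pairwise (Function.onFun Disjoint Z))
    {y : J → V}
    (hβZ : ∀ j, ∀ x ∈ Z j, x ∈ Y → β x = y j) :
    ∃ g : X → V, ContinuousOn g (Y ∪ ⋃ j, Z j) ∧ EqOn g β Y ∧ ∀ j, ∀ x ∈ Z j, g x = y j := by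
  classical
  set g : X → V := fun x => if h : ∃ j, x ∈ Z j then y h.choose else β x with hg
  have hgZ : ∀ j, ∀ x ∈ Z j, g x = y j := fun j x hx => by
    have h : ∃ j, x ∈ Z j := ⟨j, hx⟩
    have hj : h.choose = j := hdisj.eq (not_disjoint_iff.2 ⟨x, h.choose_spec, hx⟩)
    simp only [hg, dif_pos h, hj]
  have hgY : EqOn g β Y := fun x hx => by
    by_cases h : ∃ j, x ∈ Z j
    · obtain ⟨j, hj⟩ := h
      rw [hgZ j x hj, hβZ j x hj hx]
    · simp only [hg, dif_neg h]
  refine ⟨g, (hβ.congr hgY).union_of_isClosed ?_ hY (isClosed_iUnion_of_finite hZ), hgY, hgZ⟩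
  exact (locallyFinite_of_finite Z).continuousOn_iUnion hZ
    fun j => (continuousOn_const (c := y j)).congr (hgZ j)

section Extension

variable {X V J : Type*} [PseudoMetricSpace X] [NormedAddCommGroup V] [NormedSpace ℝ V]
  {b : V} {r : ℝ}

lemma exists_extension_mapsTo_ball [FiniteDimensional ℝ V] (hr : 0 < r) {C : Set X}
    (hC : IsClosed C) {g : X → V} (hg : ContinuousOn g C) (hgC : MapsTo g C (closedBall b r)) :
    ∃ T : C(X, V), EqOn T g C ∧ MapsTo T Cᶜ (ball b r) := by
  rcases C.eq_empty_or_nonempty with rfl | hne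
  · exact ⟨.const X b, fun x hx => hx.elim, fun _ _ => mem_ball_self hr⟩
  have := Metric.instTietzeExtensionClosedBall ℝ b hr
  obtain ⟨T, hTr, hTg⟩ := ContinuousMap.exists_forall_mem_restrict_eq hC
    (f := ⟨C.domRestrict g, continuousOn_iff_continuous_domRestrict.1 hg⟩) fun x => hgC x.2
  -- Dividing by `1 + infDist x C` pushes the values off `C` into the open ball.
  have hden : ∀ x, 0 < 1 + infDist x C := fun x => by linarith [infDist_nonneg (x := x) (s := C)]
  have hdist : ∀ x, dist (b + (1 + infDist x C)⁻¹ • (T x - b)) b =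
      dist (T x) b / (1 + infDist x C) := fun x => by
    rw [dist_self_add_left, norm_smul, norm_inv, Real.norm_of_nonneg (hden x).le, dist_eq_norm,
      inv_mul_eq_div]
  refine ⟨⟨fun x => b + (1 + infDist x C)⁻¹ • (T x - b), ?_⟩, fun x hx => ?_, fun x hx => ?_⟩
  · exact continuous_const.add (((continuous_const.add (continuous_infDist_pt C)).inv₀
      fun x => (hden x).ne').smul (by fun_prop))
  · have hTx : T x = g x := DFunLike.congr_fun hTg ⟨x, hx⟩
    simp only [ContinuousMap.coe_mk, infDist_zero_of_mem hx, add_zero, inv_one, one_smul,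
      add_sub_cancel, hTx]
  · rw [mem_ball, ContinuousMap.coe_mk, hdist, div_lt_iff₀ (hden x)]
    nlinarith [mem_closedBall.1 (hTr x), (hC.notMem_iff_infDist_pos hne).1 hx]

lemma exists_extension_eq_iff_mem [FiniteDimensional ℝ V] [Finite J] (hr : 0 < r) {Y : Set X}
    (hY : IsClosed Y) {β : X → V} (hβ : ContinuousOn β Y) (hβr : MapsTo β Y (closedBall b r))
    {Z : J → Set X} (hZ : ∀ j, IsClosed (Z j)) (hdisj : Pairwise (Function.onFun Disjoint Z))
    {y : J → V} (hy : ∀ j, y j ∈ sphere b r) (hinj : Function.Injective y)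
    (hβZ : ∀ j, ∀ x ∈ Z j, x ∈ Y → β x = y j) :
    ∃ T : C(X, V), EqOn T β Y ∧ (∀ j, ∀ x ∈ Z j, T x = y j) ∧
      ∀ j, ∀ x ∉ Y, T x = y j → x ∈ Z j := by
  obtain ⟨g, hg, hgY, hgZ⟩ := exists_continuousOn_union_iUnion hY hβ hZ hdisj hβZ
  have hgr : MapsTo g (Y ∪ ⋃ j, Z j) (closedBall b r) := by
    rintro x (hx | hx)
    · exact hgY hx ▸ hβr hx
    · obtain ⟨j, hj⟩ := mem_iUnion.1 hx
      exact hgZ j x hj ▸ sphere_subset_closedBall (hy j)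
  obtain ⟨T, hTg, hTball⟩ :=
    exists_extension_mapsTo_ball hr (hY.union (isClosed_iUnion_of_finite hZ)) hg hgr
  have hTZ : ∀ j, ∀ x ∈ Z j, T x = y j := fun j x hx =>
    (hTg (Or.inr (mem_iUnion.2 ⟨j, hx⟩))).trans (hgZ j x hx)
  refine ⟨T, fun x hx => (hTg (Or.inl hx)).trans (hgY hx), hTZ, fun j x hxY hx => ?_⟩
  have hxC : x ∈ Y ∪ ⋃ j, Z j := by
    by_contra hxC
    exact disjoint_left.1 sphere_disjoint_ball (hy j) (hx ▸ hTball hxC)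
  obtain ⟨i, hi⟩ := mem_iUnion.1 (hxC.resolve_left hxY)
  rwa [← hinj ((hTZ i x hi).symm.trans hx)]

end Extension

section Preimage

open OnePoint

variable {X V J : Type*} [NormedAddCommGroup V] [InnerProductSpace ℝ V] {b : V} {r : ℝ}

/-- In the inverted coordinate, the part of `F` off the ball is `V`-valued and can be moved along
segments. -/
lemma exists_homotopy_onePointInversionSymm_lineMap [TopologicalSpace X] [ProperSpace V]
    (hr : 0 < r) (F : C(X, OnePoint V)) (T : C(X, V))
    (hT : ∀ x, F x ∉ ((↑) '' ball b r : Set (OnePoint V)) →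
      F x ∈ ((↑) '' closedBall b r : Set (OnePoint V)) → T x = onePointInversion b r (F x)) :
    ∃ H : C(I × X, OnePoint V),
      (∀ t x, F x ∉ ((↑) '' ball b r : Set (OnePoint V)) → H (t, x) = onePointInversionSymm b r
        (AffineMap.lineMap (onePointInversion b r (F x)) (T x) (t : ℝ))) ∧
      ∀ t x, F x ∈ ((↑) '' closedBall b r : Set (OnePoint V)) → H (t, x) = F x := by
  have hcenter : ∀ x, F x ∉ ((↑) '' ball b r : Set (OnePoint V)) → F x ≠ b :=
    fun x hx h => hx ⟨b, mem_ball_self hr, h.symm⟩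
  have hF : Continuous fun p : I × X => F p.2 := by fun_prop
  have hcont : ContinuousOn (fun p : I × X => onePointInversion b r (F p.2))
      {p | F p.2 ∉ ((↑) '' ball b r : Set (OnePoint V))} := fun p hp =>
    (ContinuousAt.comp' (f := fun p : I × X => F p.2) (continuousAt_onePointInversion
      (hcenter p.2 hp)) hF.continuousAt).continuousWithinAt
  obtain ⟨H, hout, hin⟩ := exists_glue (X := I × X)
    (A := {p | F p.2 ∉ ((↑) '' ball b r : Set (OnePoint V))})
    (B := {p | F p.2 ∈ ((↑) '' closedBall b r : Set (OnePoint V))})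
    ((isOpen_coe_ball b r).isClosed_compl.preimage hF) ((isClosed_coe_closedBall b r).preimage hF)
    (by rw [← preimage_univ (f := fun p : I × X => F p.2),
      ← compl_coe_ball_union_coe_closedBall b r]; rfl)
    (f := fun p => onePointInversionSymm b r
      (AffineMap.lineMap (onePointInversion b r (F p.2)) (T p.2) (p.1 : ℝ)))
    (g := fun p => F p.2) ((continuous_onePointInversionSymm hr.ne').comp_continuousOn <| by
      simp only [AffineMap.lineMap_apply_module]
      fun_prop) hF.continuousOn fun p hp hp' => by
      simp only [hT p.2 hp hp', AffineMap.lineMap_same_apply]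
      exact onePointInversionSymm_onePointInversion hr.ne' (hcenter p.2 hp)
  exact ⟨H, fun t x hx => hout (x := (t, x)) hx, fun t x hx => hin (x := (t, x)) hx⟩

theorem exists_homotopicWith_preimage_eq [PseudoMetricSpace X] [FiniteDimensional ℝ V] [Finite J]
    (hr : 0 < r) {y : J → V} (hy : ∀ j, y j ∈ sphere b r) (hinj : Function.Injective y)
    (F : C(X, OnePoint V)) {Z : J → Set X} (hZ : ∀ j, IsClosed (Z j))
    (hdisj : Pairwise (Function.onFun Disjoint Z))
    (hZF : ∀ j, ∀ x ∈ Z j, F x ∈ ((↑) '' closedBall b r : Set (OnePoint V)) → F x = y j)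
    (hFZ : ∀ j x, F x = y j → x ∈ Z j) {A : Set X} {j₀ : J} (hA : A ⊆ Z j₀) (hFA : ConstOn A F) :
    ∃ F' : C(X, OnePoint V), F.HomotopicWith F' (ConstOn A) ∧
      ∀ j x, F' x = y j ↔ x ∈ Z j := by
  have := FiniteDimensional.proper_real V
  set β : X → V := fun x => onePointInversion b r (F x) with hβ
  set out : Set X := F ⁻¹' ((↑) '' ball b r : Set (OnePoint V))ᶜ
  set inn : Set X := F ⁻¹' ((↑) '' closedBall b r : Set (OnePoint V))
  have hcover : ∀ x, x ∈ out ∨ x ∈ inn := fun x =>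
    eq_univ_iff_forall.1 (compl_coe_ball_union_coe_closedBall b r) (F x)
  have hcenter : ∀ x ∈ out, F x ≠ b := fun x hx h => hx ⟨b, mem_ball_self hr, h.symm⟩
  obtain ⟨T, hTβ, hTZ, hZT⟩ := exists_extension_eq_iff_mem hr
    (((isOpen_coe_ball b r).isClosed_compl.preimage F.continuous).inter
      ((isClosed_coe_closedBall b r).preimage F.continuous)) (β := β)
    (fun x hx => (ContinuousAt.comp' (continuousAt_onePointInversion (hcenter x hx.1))
      F.continuous.continuousAt).continuousWithinAt)
    (fun x hx => onePointInversion_mem_closedBall hr hx.1) hZ hdisj hy hinj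
    fun j x hx hxY => by
      simp only [hβ, hZF j x hx hxY.2]
      exact EuclideanGeometry.inversion_of_mem_sphere (hy j)
  obtain ⟨H, hHout, hHin⟩ := exists_homotopy_onePointInversionSymm_lineMap hr F T
    fun x hx hx' => hTβ ⟨hx, hx'⟩
  refine ⟨H.comp ((ContinuousMap.const X 1).prodMk (.id X)),
    homotopicWith_constOn H (fun x => ?_) (fun x => rfl) fun t x hx x' hx' => ?_, fun j x => ?_⟩
  · rcases hcover x with h | h
    · rw [hHout 0 x h, Icc.coe_zero, AffineMap.lineMap_apply_zero]
      exact onePointInversionSymm_onePointInversion hr.ne' (hcenter x h)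
    · exact hHin 0 x h
  · have hxx' : F x = F x' := hFA x hx x' hx'
    rcases hcover x with h | h
    · rw [hHout t x h, hHout t x' (hxx' ▸ h), hxx', hTZ j₀ x (hA hx), hTZ j₀ x' (hA hx')]
    · rw [hHin t x h, hHin t x' (hxx' ▸ h), hxx']
  · change H (1, x) = y j ↔ x ∈ Z j
    by_cases h : x ∈ inn
    · rw [hHin 1 x h]
      exact ⟨hFZ j x, fun hx => hZF j x hx h⟩
    · rw [hHout 1 x ((hcover x).resolve_right h), Icc.coe_one, AffineMap.lineMap_apply_one,
        onePointInversionSymm_eq_coe_iff hr (hy j)]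
      exact ⟨hZT j x fun hx => h hx.2, hTZ j x⟩

end Preimage

/-! ### Moving finitely many points to prescribed directions -/

open OnePoint in
lemma continuous_onePoint_elim {V T : Type*} [NormedAddCommGroup V] [ProperSpace V]
    [TopologicalSpace T] {k : T × V → V}
    (hk : Continuous k) {c C : ℝ} (hc : 0 < c) (hkn : ∀ p, c * ‖p.2‖ - C ≤ ‖k p‖) :
    Continuous fun p : T × OnePoint V => p.2.elim ∞ fun x => ((k (p.1, x) : V) : OnePoint V) := by
  rw [continuous_iff_continuousAt]
  rintro ⟨t, z⟩
  induction z using OnePoint.rec with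
  | infty =>
    refine tendsto_nhds_infty_of_norm fun R => ?_
    have hsnd : Tendsto Prod.snd (𝓝 (t, (∞ : OnePoint V))) (𝓝 ∞) := continuous_snd.tendsto _
    filter_upwards [hsnd.eventually (eventually_nhds_infty_lt_norm ((R + C) / c))]
    rintro ⟨s, z⟩ hz v hv
    induction z using OnePoint.rec with
    | infty => exact absurd hv (infty_ne_coe _)
    | coe x =>
      rw [← (coe_eq_coe.1 hv : k (s, x) = v)]
      linarith [(div_lt_iff₀' hc).1 (hz x rfl), hkn (s, x)]
  | coe x =>
    have hopen : IsOpenEmbedding (Prod.map id ((↑) : V → OnePoint V) : T × V → T × OnePoint V) :=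
      IsOpenEmbedding.id.prodMap isOpenEmbedding_coe
    change ContinuousAt _ (Prod.map id ((↑) : V → OnePoint V) (t, x))
    rw [← hopen.continuousAt_iff]
    exact (continuous_coe.comp hk).continuousAt

section Directions

variable {V : Type*} [NormedAddCommGroup V] [NormedSpace ℝ V]

lemma exists_injective_directions [FiniteDimensional ℝ V] {J : Type*} [Finite J]
    (hV : 2 ≤ Module.finrank ℝ V) {y : J → V} (hy : Function.Injective y) :
    ∃ o : V, (∀ j, y j ≠ o) ∧ Function.Injective fun j => ‖y j - o‖⁻¹ • (y j - o) := by
  have hfin : (range y).Finite := finite_range y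
  have : Nontrivial V := Module.nontrivial_of_finrank_pos (R := ℝ) (by lia)
  have : Infinite V := Module.Free.infinite ℝ V
  have hrank : ∀ j, Module.finrank ℝ line[ℝ, y j, y j].direction = 0 := fun j => by
    rw [pair_eq_singleton, direction_affineSpan, vectorSpan_singleton, finrank_bot]
  obtain ⟨o, ho, hhub⟩ := exists_isHub hfin (B := range fun j => line[ℝ, y j, y j])
    (finite_range _) (forall_mem_range.2 fun j => (congrArg (· + 2) (hrank j)).trans_le hV)
    hfin.isClosed.isOpen_compl hfin.infinite_compl.nonempty
  have hne : ∀ j, y j ≠ o := fun j h => ho ⟨j, h⟩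
  have hwbtw : ∀ i j, Wbtw ℝ o (y i) (y j) → i = j := fun i j h =>
    hy (hhub (y j) ⟨j, rfl⟩ _ ⟨i, rfl⟩ (y i) (mem_segment_iff_wbtw.2 h.symm)
      (left_mem_affineSpan_pair ℝ _ _))
  refine ⟨o, hne, fun i j hij => ?_⟩
  have hray : SameRay ℝ (y i - o) (y j - o) :=
    (sameRay_iff_inv_norm_smul_eq_of_ne (sub_ne_zero.2 (hne i)) (sub_ne_zero.2 (hne j))).2 hij
  exact (wbtw_total_of_sameRay_vsub_left hray).elim (hwbtw i j) fun h => (hwbtw j i h).symm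

lemma exists_continuousMap_pos_eq {X J : Type*} [TopologicalSpace X] [T4Space X] [Finite J]
    {e : J → X} (he : Function.Injective e) {d : J → ℝ} (hd : ∀ j, 0 < d j) :
    ∃ μ : C(X, ℝ), (∀ x, 0 < μ x) ∧ ∀ j, μ (e j) = d j := by
  have hfin : (range e).Finite := finite_range e
  have : Finite (range e) := hfin
  obtain ⟨ℓ, hℓ⟩ := ContinuousMap.exists_restrict_eq hfin.isClosed
    (⟨fun x => Function.extend e (Real.log ∘ d) 0 (x : X), continuous_of_discreteTopology⟩ :
      C(range e, ℝ))
  refine ⟨⟨fun x => Real.exp (ℓ x), by fun_prop⟩, fun x => Real.exp_pos _, fun j => ?_⟩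
  have hℓj : ℓ (e j) = Real.log (d j) := by
    simpa [he.extend_apply] using DFunLike.congr_fun hℓ ⟨e j, j, rfl⟩
  rw [ContinuousMap.coe_mk, hℓj, Real.exp_log (hd j)]

/-- The radial map of `V` stretching each ray from the origin by the value of `μ` at its unit
vector. -/
noncomputable def radialScaling (μ : C(V, ℝ)) (w : V) : V := μ (‖w‖⁻¹ • w) • w

section RadialScaling

variable {μ : C(V, ℝ)}

lemma inv_norm_smul_mem_closedBall (w : V) : ‖w‖⁻¹ • w ∈ closedBall (0 : V) 1 := by
  rw [mem_closedBall_zero_iff, norm_smul, norm_inv, norm_norm]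
  exact inv_mul_le_one

lemma continuous_radialScaling [ProperSpace V] : Continuous (radialScaling μ) := by
  obtain ⟨C, hC⟩ :=
    (isCompact_closedBall (0 : V) 1).exists_bound_of_continuousOn μ.continuous.continuousOn
  rw [continuous_iff_continuousAt]
  intro w
  rcases eq_or_ne w 0 with rfl | hw
  · rw [ContinuousAt, radialScaling, smul_zero]
    refine squeeze_zero_norm (a := fun w => C * ‖w‖) (fun w => ?_) ?_
    · exact (norm_smul_le _ _).trans
        (mul_le_mul_of_nonneg_right (hC _ (inv_norm_smul_mem_closedBall w)) (norm_nonneg w))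
    · exact (by fun_prop : Continuous fun w : V => C * ‖w‖).tendsto' 0 0 (by simp)
  · exact (μ.continuous.continuousAt.comp' ((continuousAt_id.norm.inv₀
      (norm_ne_zero_iff.2 hw)).smul continuousAt_id)).smul continuousAt_id

lemma radialScaling_eq_smul_iff (hμ : ∀ v, 0 < μ v) {e : V} (he : ‖e‖ = 1) {s : ℝ} (hs : 0 < s)
    {w : V} : radialScaling μ w = s • e ↔ w = (s / μ e) • e := by
  constructor
  · intro h
    have hw : w ≠ 0 := by
      rintro rfl
      rw [radialScaling, smul_zero] at h
      exact (smul_ne_zero hs.ne' (norm_ne_zero_iff.1 (he.trans_ne one_ne_zero))) h.symm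
    have hwpos : 0 < ‖w‖ := norm_pos_iff.2 hw
    have hsplit : (μ (‖w‖⁻¹ • w) * ‖w‖) • ‖w‖⁻¹ • w = s • e := by
      rw [mul_smul, smul_inv_smul₀ hwpos.ne', ← h, radialScaling]
    have hunit : ‖‖w‖⁻¹ • w‖ = 1 := norm_smul_inv_norm (𝕜 := ℝ) hw
    obtain ⟨hlen, hdir⟩ := smul_eq_smul_of_norm_eq_one hunit he (mul_pos (hμ _) hwpos) hs hsplit
    rw [hdir] at hlen
    rw [← hlen, mul_div_cancel_left₀ _ (hμ e).ne', ← hdir, smul_inv_smul₀ hwpos.ne']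
  · rintro rfl
    have hpos : 0 < s / μ e := div_pos hs (hμ e)
    rw [radialScaling, norm_smul, he, mul_one, Real.norm_of_nonneg hpos.le,
      inv_smul_smul₀ hpos.ne', smul_smul, mul_div_cancel₀ _ (hμ e).ne']

lemma exists_le_norm_lineMap_radialScaling [ProperSpace V] (hμ : ∀ v, 0 < μ v) (b o : V) :
    ∃ c > 0, ∃ C, ∀ p : I × V,
      c * ‖p.2‖ - C ≤ ‖AffineMap.lineMap p.2 (o + radialScaling μ (p.2 - b)) (p.1 : ℝ)‖ := by
  obtain ⟨v₀, -, hv₀⟩ := (isCompact_closedBall (0 : V) 1).exists_isMinOn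
    (nonempty_closedBall.2 zero_le_one) μ.continuous.continuousOn
  set c := min 1 (μ v₀)
  have hc : 0 < c := lt_min one_pos (hμ v₀)
  refine ⟨c, hc, c * ‖b‖ + (‖b‖ + ‖o‖), fun ⟨t, x⟩ => ?_⟩
  obtain ⟨ht0, ht1⟩ := t.2
  set w := x - b
  set m := (1 - (t : ℝ)) + t * μ (‖w‖⁻¹ • w)
  have hsplit : AffineMap.lineMap x (o + radialScaling μ w) (t : ℝ) =
      m • w - -((1 - (t : ℝ)) • b + (t : ℝ) • o) := by
    simp only [AffineMap.lineMap_apply_module, radialScaling, m, w]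
    module
  have hcm : c ≤ m := by
    have hc1 : c ≤ 1 := min_le_left _ _
    have hcμ : c ≤ μ (‖w‖⁻¹ • w) :=
      (min_le_right _ _).trans (hv₀ (inv_norm_smul_mem_closedBall w))
    nlinarith
  have hcenter : ‖(1 - (t : ℝ)) • b + (t : ℝ) • o‖ ≤ ‖b‖ + ‖o‖ := by
    refine (norm_add_le _ _).trans (add_le_add ?_ ?_) <;> rw [norm_smul, Real.norm_of_nonneg]
    exacts [mul_le_of_le_one_left (norm_nonneg _) (by linarith), by linarith,
      mul_le_of_le_one_left (norm_nonneg _) ht1, ht0]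
  have hmw : c * ‖w‖ ≤ ‖m • w‖ := by
    rw [norm_smul, Real.norm_of_nonneg (hc.le.trans hcm)]
    exact mul_le_mul_of_nonneg_right hcm (norm_nonneg w)
  have hw : c * (‖x‖ - ‖b‖) ≤ c * ‖w‖ := mul_le_mul_of_nonneg_left (norm_sub_norm_le x b) hc.le
  have htriangle := norm_sub_norm_le (m • w) (-((1 - (t : ℝ)) • b + (t : ℝ) • o))
  rw [norm_neg, ← hsplit] at htriangle
  dsimp only
  linarith

end RadialScaling

/-- Seen from a suitable point `o`, the points `y j` lie in distinct directions `e j`, so that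
stretching the rays moves the points `b + r • e j` to them. -/
theorem exists_radial_homotopy [FiniteDimensional ℝ V] {J : Type*} [Finite J]
    (hV : 2 ≤ Module.finrank ℝ V) {y : J → V} (hy : Function.Injective y) :
    ∃ e : J → V, (∀ j, ‖e j‖ = 1) ∧ Function.Injective e ∧ ∀ (b : V) (r : ℝ), 0 < r →
      ∃ K : C(I × OnePoint V, OnePoint V), (∀ z, K (0, z) = z) ∧
        ∀ j z, K (1, z) = y j ↔ z = ((b + r • e j : V) : OnePoint V) := by
  have := FiniteDimensional.proper_real V
  obtain ⟨o, ho, hinj⟩ := exists_injective_directions hV hy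
  have hpos : ∀ j, 0 < ‖y j - o‖ := fun j => norm_pos_iff.2 (sub_ne_zero.2 (ho j))
  set e : J → V := fun j => ‖y j - o‖⁻¹ • (y j - o) with he_def
  have he : ∀ j, ‖e j‖ = 1 := fun j => norm_smul_inv_norm (𝕜 := ℝ) (sub_ne_zero.2 (ho j))
  have hye : ∀ j, y j = o + ‖y j - o‖ • e j := fun j => by
    rw [he_def, smul_inv_smul₀ (hpos j).ne', add_sub_cancel]
  refine ⟨e, he, hinj, fun b r hr => ?_⟩
  obtain ⟨μ, hμ, hμe⟩ := exists_continuousMap_pos_eq (d := fun j => ‖y j - o‖ / r) hinj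
    fun j => div_pos (hpos j) hr
  obtain ⟨c, hc, C, hcC⟩ := exists_le_norm_lineMap_radialScaling hμ b o
  have hcont := continuous_radialScaling (μ := μ)
  refine ⟨⟨_, continuous_onePoint_elim (by simp only [AffineMap.lineMap_apply_module]; fun_prop)
    hc hcC⟩, fun z => ?_, fun j z => ?_⟩ <;> induction z using OnePoint.rec with
  | infty => simp
  | coe x => ?_
  · simp
  · have hdiv : ‖y j - o‖ / μ (e j) = r := by
      rw [hμe, div_div_cancel₀ (hpos j).ne']
    simp only [ContinuousMap.coe_mk, OnePoint.elim_some, Icc.coe_one,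
      AffineMap.lineMap_apply_one, OnePoint.coe_eq_coe]
    conv_lhs => rw [hye j]
    rw [add_right_inj, radialScaling_eq_smul_iff hμ (he j) (hpos j), hdiv, sub_eq_iff_eq_add']

end Directions

/-! ### Maps of balls into the one-point compactification -/

section BallMaps

open OnePoint

variable {V : Type*} [NormedAddCommGroup V]

section FinitePart

variable {s : Set V} {z : OnePoint V}

lemma coe_finitePart (hz : z ∈ ((↑) '' s : Set (OnePoint V))) :
    ((finitePart z : V) : OnePoint V) = z := by
  obtain ⟨v, -, rfl⟩ := hz
  rfl

lemma finitePart_mem (hz : z ∈ ((↑) '' s : Set (OnePoint V))) : finitePart z ∈ s := by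
  obtain ⟨v, hv, rfl⟩ := hz
  exact hv

lemma continuousOn_finitePart : ContinuousOn finitePart ((↑) '' s : Set (OnePoint V)) := by
  rintro _ ⟨v, -, rfl⟩
  exact (continuousAt_finitePart (coe_ne_infty v)).continuousWithinAt

end FinitePart

/-- A continuous cutoff function equal to `1` on `(-∞, 3/4]` and vanishing on `[1, ∞)`. -/
noncomputable def cutoff (s : ℝ) : ℝ := min 1 (max 0 (4 * (1 - s)))

@[fun_prop]
lemma continuous_cutoff : Continuous cutoff := by
  unfold cutoff
  fun_prop

lemma cutoff_eq_one {s : ℝ} (hs : s ≤ 3 / 4) : cutoff s = 1 := by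
  rw [cutoff, max_eq_right (by linarith), min_eq_left (by linarith)]

lemma cutoff_one : cutoff 1 = 0 := by simp [cutoff]

lemma norm_cutoff_le_one (s : ℝ) : ‖cutoff s‖ ≤ 1 := by
  rw [cutoff, Real.norm_of_nonneg (le_min zero_le_one (le_max_left _ _))]
  exact min_le_left _ _

lemma lineMap_cutoff_eq_iff [NormedSpace ℝ V] {a c g v : V} (hg : dist a g ≤ 1 / 4)
    (hv : dist v c < 1 / 2) : AffineMap.lineMap a g (cutoff (dist a c)) = v ↔ g = v := by
  have key : dist a v ≤ 1 / 4 → AffineMap.lineMap a g (cutoff (dist a c)) = g := fun hav => by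
    rw [cutoff_eq_one (by linarith [dist_triangle a v c]), AffineMap.lineMap_apply_one]
  refine ⟨fun h => ?_, fun h => (key (h ▸ hg)).trans h⟩
  rw [← h, key]
  rw [← h, dist_left_lineMap]
  exact (mul_le_of_le_one_left dist_nonneg (norm_cutoff_le_one _)).trans hg

lemma exists_homotopy_lineMap_cutoff [NormedSpace ℝ V] [ProperSpace V] {X : Type*}
    [TopologicalSpace X] (E : C(X, OnePoint V)) (c : V) {g : X → V} (hg : Continuous g) :
    ∃ H : C(I × X, OnePoint V),
      (∀ t x, E x ∉ ((↑) '' ball c 1 : Set (OnePoint V)) → H (t, x) = E x) ∧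
      ∀ t x, E x ∈ ((↑) '' closedBall c 1 : Set (OnePoint V)) → H (t, x) = (AffineMap.lineMap
        (finitePart (E x)) (g x) (t * cutoff (dist (finitePart (E x)) c)) : V) := by
  set φ : X → V := fun x => finitePart (E x)
  set X₀ : Set X := E ⁻¹' ((↑) '' ball c 1 : Set (OnePoint V))ᶜ
  set X₁ : Set X := E ⁻¹' ((↑) '' closedBall c 1 : Set (OnePoint V))
  have hφ : ContinuousOn (fun p : I × X => φ p.2) (Prod.snd ⁻¹' X₁) :=
    continuousOn_finitePart.comp (E.continuous.comp continuous_snd).continuousOn fun _ hp => hp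
  have hcoeff := (by fun_prop : ContinuousOn (fun p : I × X => (p.1 : ℝ)) _).mul
    ((by fun_prop : Continuous fun a : V => cutoff (dist a c)).comp_continuousOn hφ)
  obtain ⟨H, hH₀, hH₁⟩ := exists_glue (X := I × X) (A := Prod.snd ⁻¹' X₀) (B := Prod.snd ⁻¹' X₁)
    (((isOpen_coe_ball c 1).isClosed_compl.preimage E.continuous).preimage continuous_snd)
    (((isClosed_coe_closedBall c 1).preimage E.continuous).preimage continuous_snd)
    (by rw [← preimage_union, ← preimage_union, compl_coe_ball_union_coe_closedBall,
      preimage_univ, preimage_univ]) (f := fun p => E p.2)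
    (g := fun p => (AffineMap.lineMap (φ p.2) (g p.2) (p.1 * cutoff (dist (φ p.2) c)) : V))
    (by fun_prop) (by
      simp only [AffineMap.lineMap_apply_module]
      exact continuous_coe.comp_continuousOn (((continuousOn_const.sub hcoeff).smul hφ).add
        (hcoeff.smul (hg.comp continuous_snd).continuousOn))) (by
      rintro ⟨t, x⟩ hx₀ hx₁
      have hdist : dist (φ x) c = 1 := le_antisymm (finitePart_mem hx₁) <| not_lt.1 fun hlt =>
        hx₀ ⟨φ x, hlt, coe_finitePart hx₁⟩
      dsimp only
      rw [hdist, cutoff_one, mul_zero, AffineMap.lineMap_apply_zero, coe_finitePart hx₁])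
  exact ⟨H, fun t x hx => hH₀ (x := (t, x)) hx, fun t x hx => hH₁ (x := (t, x)) hx⟩

/-- A map `g` approximating `E` over a ball can replace `E` over a smaller concentric ball, by
interpolating linearly and letting the change die out towards the boundary. -/
lemma exists_homotopicWith_eq_coe_iff [NormedSpace ℝ V] [ProperSpace V] {X : Type*}
    [TopologicalSpace X] (E : C(X, OnePoint V)) (c : V) {g : X → V} (hg : Continuous g)
    (hgE : ∀ x, E x ∈ ((↑) '' closedBall c 1 : Set (OnePoint V)) →
      dist (finitePart (E x)) (g x) ≤ 1 / 4) {A : Set X}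
    (hEA : ConstOn A E) (hA : ∀ x ∈ A, E x ∉ ((↑) '' ball c 1 : Set (OnePoint V))) :
    ∃ F : C(X, OnePoint V), E.HomotopicWith F (ConstOn A) ∧ ∀ x, ∀ v ∈ ball c (1 / 2),
      F x = v ↔ E x ∈ ((↑) '' closedBall c 1 : Set (OnePoint V)) ∧ g x = v := by
  obtain ⟨H, hHout, hHin⟩ := exists_homotopy_lineMap_cutoff E c hg
  have hcover : ∀ x, E x ∉ ((↑) '' ball c 1 : Set (OnePoint V)) ∨
      E x ∈ ((↑) '' closedBall c 1 : Set (OnePoint V)) := fun x =>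
    eq_univ_iff_forall.1 (compl_coe_ball_union_coe_closedBall c 1) (E x)
  refine ⟨H.comp ((ContinuousMap.const _ 1).prodMk (.id _)), homotopicWith_constOn H (fun x => ?_)
    (fun x => rfl) (fun t x hx x' hx' => ?_), fun x v hv => ?_⟩
  · rcases hcover x with hx | hx
    · exact hHout 0 x hx
    · rw [hHin 0 x hx]
      simpa using coe_finitePart hx
  · rw [hHout t x (hA x hx), hHout t x' (hA x' hx')]
    exact hEA x hx x' hx'
  · change H (1, x) = v ↔ _
    by_cases hx : E x ∈ ((↑) '' closedBall c 1 : Set (OnePoint V))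
    · rw [hHin 1 x hx, coe_eq_coe]
      simpa only [Icc.coe_one, one_mul, hx, true_and] using lineMap_cutoff_eq_iff (hgE x hx) hv
    · have hx₀ := (hcover x).resolve_right hx
      rw [hHout 1 x hx₀]
      exact iff_of_false (fun h => hx₀ ⟨v, ball_subset_ball (by norm_num) hv, h.symm⟩)
        fun h => hx h.1

/-- The boundary sphere of the closed unit ball, as a subset of the ball. -/
def ballBoundary (P : Type*) [NormedAddCommGroup P] : Set (closedBall (0 : P) 1) :=
  {x | ‖(x : P)‖ = 1}

variable {P : Type*} [NormedAddCommGroup P] [NormedSpace ℝ P] [FiniteDimensional ℝ P]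
  [NormedSpace ℝ V] [FiniteDimensional ℝ V]

lemma exists_piecewiseAffine_homotopicWith (E : C(closedBall (0 : P) 1, OnePoint V)) (c : V)
    (hE : ConstOn (ballBoundary P) E)
    (hc : ∀ x ∈ ballBoundary P, E x ∉ ((↑) '' closedBall c 1 : Set (OnePoint V))) :
    ∃ (N : ℕ) (Φ : PiecewiseAffine (Equiv.Perm (Fin N)) P V)
      (F : C(closedBall (0 : P) 1, OnePoint V)) (D : Set P),
      E.HomotopicWith F (ConstOn (ballBoundary P)) ∧ IsCompact D ∧ D ⊆ ball 0 1 ∧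
      (∀ x ∈ D, Φ.toContinuousMap x ∈ ball c (1 / 2) → x ∈ interior D) ∧
      ∀ x : closedBall (0 : P) 1, ∀ v ∈ ball c (1 / 2),
        F x = v ↔ (x : P) ∈ D ∧ Φ.toContinuousMap x = v := by
  have := FiniteDimensional.proper_real P
  have := FiniteDimensional.proper_real V
  have : CompactSpace (closedBall (0 : P) 1) :=
    isCompact_iff_compactSpace.1 (isCompact_closedBall 0 1)
  set K : Set (closedBall (0 : P) 1) := E ⁻¹' ((↑) '' closedBall c 1)
  have hK : IsCompact K := ((isClosed_coe_closedBall c 1).preimage E.continuous).isCompact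
  have hKnorm : ∀ x ∈ K, ‖(x : P)‖ < 1 := fun x hx =>
    (mem_closedBall_zero_iff.1 x.2).lt_of_ne fun h => hc x h hx
  have hmem : ∀ x : closedBall (0 : P) 1, (x : P) ∈ ((↑) '' K : Set P) ↔ x ∈ K := fun x =>
    Subtype.val_injective.mem_set_image
  have hDball : ∀ x ∈ ((↑) '' K : Set P), x ∈ closedBall (0 : P) 1 := by
    rintro _ ⟨x, -, rfl⟩
    exact x.2
  obtain ⟨N, Φ, hΦ⟩ := exists_piecewiseAffine_near (hK.image continuous_subtype_val)
    ⟨fun x => finitePart (E ⟨x, hDball x x.2⟩), continuousOn_finitePart.comp_continuous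
      (by fun_prop) fun x => (hmem _).1 x.2⟩ (ε := 1 / 4) (by norm_num)
  have hnear : ∀ x ∈ K, dist (finitePart (E x)) (Φ.toContinuousMap x) < 1 / 4 := fun x hx => by
    simpa [dist_eq_norm_sub'] using hΦ ⟨x, (hmem x).2 hx⟩
  obtain ⟨F, hEF, hF⟩ := exists_homotopicWith_eq_coe_iff E c (by fun_prop)
    (fun x hx => (hnear x hx).le) hE fun x hx hEx => hc x hx (image_mono ball_subset_closedBall hEx)
  refine ⟨N, Φ, F, (↑) '' K, hEF, hK.image continuous_subtype_val, ?_, ?_, fun x v hv => ?_⟩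
  · rintro _ ⟨x, hx, rfl⟩
    exact mem_ball_zero_iff.2 (hKnorm x hx)
  · rintro _ ⟨x, hx, rfl⟩ hΦx
    have hEx : E x ∈ ((↑) '' ball c 1 : Set (OnePoint V)) := by
      refine ⟨finitePart (E x), ?_, coe_finitePart hx⟩
      have hdist := dist_triangle (finitePart (E x)) (Φ.toContinuousMap x) c
      rw [mem_ball] at hΦx ⊢
      linarith [hnear x hx]
    have hKx : K ∈ 𝓝 x := mem_of_superset
      (((isOpen_coe_ball c 1).preimage E.continuous).mem_nhds hEx)
      (preimage_mono (image_mono ball_subset_closedBall))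
    rw [mem_interior_iff_mem_nhds, ← map_nhds_subtype_coe_eq_nhds x.2
      (mem_of_superset (isOpen_ball.mem_nhds (mem_ball_zero_iff.2 (hKnorm x hx)))
        ball_subset_closedBall)]
    exact image_mem_map hKx
  · rw [hF x v hv, hmem]
    rfl

end BallMaps

section ConnectedPreimages

variable {P V J : Type*} [NormedAddCommGroup P] [NormedSpace ℝ P] [FiniteDimensional ℝ P]
  [NormedAddCommGroup V] [InnerProductSpace ℝ V] [FiniteDimensional ℝ V] [Finite J]

lemma exists_homotopicWith_preimage_eq_isConnectingFamily (hP : 2 ≤ Module.finrank ℝ P)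
    (hV : 3 ≤ Module.finrank ℝ V) {e : J → V} (he : ∀ j, ‖e j‖ = 1) (hinj : Function.Injective e)
    {v : V} (j₀ : J) (E : C(closedBall (0 : P) 1, OnePoint V))
    (hE : ∀ x ∈ ballBoundary P, E x = v) :
    ∃ (b : V) (r : ℝ), 0 < r ∧ ∃ Z : J → Set P, (∀ j, IsPreconnected (Z j)) ∧
      (∀ j, Z j ⊆ closedBall 0 1) ∧
      sphere 0 1 ⊆ Z j₀ ∧ ∃ F : C(closedBall (0 : P) 1, OnePoint V),
        E.HomotopicWith F (ConstOn (ballBoundary P)) ∧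
        ∀ j x, F x = (b + r • e j : V) ↔ (x : P) ∈ Z j := by
  have hv : ∀ x ∈ ballBoundary P,
      E x ∉ ((↑) '' closedBall (v + (2 : ℝ) • e j₀) 1 : Set (OnePoint V)) := by
    rintro x hx ⟨w, hw, hwx⟩
    rw [hE x hx, OnePoint.coe_eq_coe] at hwx
    rw [hwx, mem_closedBall, dist_self_add_right, norm_smul, he] at hw
    norm_num at hw
  obtain ⟨N, Φ, F, D, hEF, hD, hDball, hΦD, hF⟩ :=
    exists_piecewiseAffine_homotopicWith E (v + (2 : ℝ) • e j₀) (.of_forall_eq hE) hv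
  obtain ⟨b, r, hr, hbr, Z, hZ, hZ1, hZs⟩ := exists_isConnectingFamily_sphere_subset hP hV Φ hD
    hDball isOpen_ball (nonempty_ball.2 one_half_pos) hΦD j₀ he hinj
  have hbe : ∀ j, b + r • e j ∈ sphere b r := fun j => by
    rw [mem_sphere, dist_self_add_left, norm_smul, he, mul_one, Real.norm_of_nonneg hr.le]
  obtain ⟨F', hFF', hF'⟩ := exists_homotopicWith_preimage_eq hr hbe
    (fun i j hij => hinj (smul_right_injective V hr.ne' (add_left_cancel hij))) F
    (Z := fun j => (↑) ⁻¹' Z j)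
    (fun j => (hZ.isCompact j).isClosed.preimage continuous_subtype_val)
    (fun i j hij => (hZ.pairwise_disjoint hij).preimage _)
    (fun j x hx => by
      rintro ⟨w, hw, hwx⟩
      obtain ⟨hxD, rfl⟩ := (hF x w (hbr hw)).1 hwx.symm
      rw [← hwx, hZ.apply_eq j x hx hxD hw])
    (fun j x hx => by
      obtain ⟨hxD, hxb⟩ := (hF x _ (hbr (sphere_subset_closedBall (hbe j)))).1 hx
      exact hZ.mem j x hxD hxb)
    (fun x (hx : ‖(x : P)‖ = 1) => hZs (mem_sphere_zero_iff_norm.2 hx))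
    (constOn_of_homotopicWith hEF)
  exact ⟨b, r, hr, Z, hZ.isPreconnected, hZ1, hZs, F', hEF.trans hFF', hF'⟩

theorem exists_homotopicWith_isPreconnected_preimage (hP : 2 ≤ Module.finrank ℝ P)
    (hV : 3 ≤ Module.finrank ℝ V) {y : J → V} (hy : Function.Injective y) (j₀ : J)
    (E : C(closedBall (0 : P) 1, OnePoint V)) (hE : ∀ x ∈ ballBoundary P, E x = y j₀) :
    ∃ E' : C(closedBall (0 : P) 1, OnePoint V),
      E.HomotopicWith E' (ConstOn (ballBoundary P)) ∧ (∀ x ∈ ballBoundary P, E' x = y j₀) ∧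
      ∀ j, IsPreconnected {x | E' x = y j} := by
  obtain ⟨e, he, hinj, hK⟩ := exists_radial_homotopy (by lia) hy
  obtain ⟨b, r, hr, Z, hZ, hZ1, hZs, F, hEF, hF⟩ :=
    exists_homotopicWith_preimage_eq_isConnectingFamily hP hV he hinj j₀ E hE
  obtain ⟨K, hK0, hK1⟩ := hK b r hr
  have hKZ : ∀ j (x : closedBall (0 : P) 1), K (1, F x) = y j ↔ (x : P) ∈ Z j := fun j x =>
    (hK1 j _).trans (hF j x)
  have hFA := constOn_of_homotopicWith hEF
  refine ⟨K.comp ((ContinuousMap.const _ 1).prodMk F), hEF.trans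
    (homotopicWith_constOn (K.comp (.prodMap (.id I) F)) (fun x => hK0 _) (fun x => rfl)
      fun t x hx x' hx' => congrArg (fun z => K (t, z)) (hFA x hx x' hx')),
    fun x hx => (hKZ j₀ x).2 (hZs (mem_sphere_zero_iff_norm.2 hx)), fun j => ?_⟩
  have hpreimage : {x : closedBall (0 : P) 1 | K (1, F x) = y j} = (↑) ⁻¹' Z j := ext (hKZ j)
  change IsPreconnected {x : closedBall (0 : P) 1 | K (1, F x) = y j}
  rw [hpreimage, ← IsInducing.subtypeVal.isPreconnected_image,
    image_preimage_eq_of_subset (Subtype.range_coe.symm ▸ hZ1 j)]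
  exact hZ j

end ConnectedPreimages

/-! ### Maps of balls into spheres -/

section RelativeHomotopy

variable {E X : Type*} [NormedAddCommGroup E] [NormedSpace ℝ E] [FiniteDimensional ℝ E]
  [TopologicalSpace X] [CompactSpace X] [T2Space X] {A B : Set X} {f g : C(X, sphere (0 : E) 1)}

lemma exists_homotopy_extension_fixing (hA : IsClosed A) (hB : IsClosed B)
    {K : I × X → sphere (0 : E) 1} (hK : ContinuousOn K (univ ×ˢ A))
    (hK0 : ∀ a ∈ A, K (0, a) = f a) (hKB : ∀ t, ∀ a ∈ A, a ∈ B → K (t, a) = f a) :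
    ∃ (g : C(X, sphere (0 : E) 1)) (H : f.Homotopy g), (∀ a ∈ A, ∀ t, H (t, a) = K (t, a)) ∧
      ∀ b ∈ B, ∀ t, H (t, b) = f b := by
  classical
  set L : I × X → sphere (0 : E) 1 := fun p => if p.2 ∈ A then K p else f p.2
  have hLA : ∀ a ∈ A, ∀ t, L (t, a) = K (t, a) := fun a ha t => if_pos ha
  have hLB : ∀ b ∈ B, ∀ t, L (t, b) = f b := fun b hb t => by
    by_cases hbA : b ∈ A
    · rw [hLA b hbA, hKB t b hbA hb]
    · exact if_neg hbA
  have hL : ContinuousOn L (univ ×ˢ (A ∪ B)) := by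
    rw [prod_union]
    exact (hK.congr fun p hp => hLA p.2 hp.2 p.1).union_of_isClosed
      ((by fun_prop : ContinuousOn (fun p : I × X => f p.2) _).congr
        fun p hp => hLB p.2 hp.2 p.1) (isClosed_univ.prod hA) (isClosed_univ.prod hB)
  obtain ⟨g, H, hH⟩ := exists_homotopy_extension (hA.union hB) hL fun x hx =>
    hx.elim (fun ha => (hLA x ha 0).trans (hK0 x ha)) fun hb => hLB x hb 0
  exact ⟨g, H, fun a ha t => (hH a (.inl ha) t).trans (hLA a ha t),
    fun b hb t => (hH b (.inr hb) t).trans (hLB b hb t)⟩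

/-- The track of `A` is a loop; contracting it, and extending the contraction to the whole
homotopy with both ends fixed, makes the homotopy stationary on `A`. -/
lemma homotopicRel_of_homotopicWith_constOn [SimplyConnectedSpace (sphere (0 : E) 1)]
    (hA : IsClosed A) (h : f.HomotopicWith g (ConstOn A)) {q : sphere (0 : E) 1}
    (hf : ∀ a ∈ A, f a = q) (hg : ∀ a ∈ A, g a = q) : f.HomotopicRel g A := by
  obtain ⟨H⟩ := h
  rcases A.eq_empty_or_nonempty with rfl | ⟨a₀, ha₀⟩
  · exact ContinuousMap.homotopicRel_empty.2 ⟨H.toHomotopy⟩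
  have hHA : ∀ t, ∀ a ∈ A, H (t, a₀) = H (t, a) := fun t a ha => H.prop' t a₀ ha₀ a ha
  have hH0 : ∀ x, H (0, x) = f x := H.map_zero_left
  have hH1 : ∀ x, H (1, x) = g x := H.map_one_left
  obtain ⟨Γ⟩ := SimplyConnectedSpace.paths_homotopic
    { toFun := fun t => H (t, a₀), source' := (hH0 a₀).trans (hf a₀ ha₀),
      target' := (hH1 a₀).trans (hg a₀ ha₀) } (Path.refl q)
  have hΓ0 : ∀ t, Γ (0, t) = H (t, a₀) := Γ.map_zero_left
  have hΓ1 : ∀ t, Γ (1, t) = q := Γ.map_one_left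
  obtain ⟨H', Λ, hΛA, hΛends⟩ := exists_homotopy_extension_fixing (X := I × X)
    (A := Prod.snd ⁻¹' A) (B := Prod.fst ⁻¹' {0, 1}) (f := H.toContinuousMap)
    (K := fun p => Γ (p.1, p.2.1)) (hA.preimage continuous_snd)
    ((toFinite _).isClosed.preimage continuous_fst) (by fun_prop)
    (fun p hp => (hΓ0 p.1).trans (hHA p.1 p.2 hp)) (by
      rintro s ⟨t, x⟩ hx (rfl | rfl)
      · exact (Γ.source s).trans ((hH0 x).trans (hf x hx)).symm
      · exact (Γ.target s).trans ((hH1 x).trans (hg x hx)).symm)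
  have hΛ1 : ∀ p, Λ (1, p) = H' p := Λ.map_one_left
  refine ⟨{ toContinuousMap := H'
            map_zero_left := fun x => ?_
            map_one_left := fun x => ?_
            prop' := fun t x hx => ?_ }⟩
  · exact (hΛ1 _).symm.trans ((hΛends (0, x) (.inl rfl) 1).trans (hH0 x))
  · exact (hΛ1 _).symm.trans ((hΛends (1, x) (.inr rfl) 1).trans (hH1 x))
  · exact (hΛ1 _).symm.trans ((hΛA (t, x) hx 1).trans ((hΓ1 t).trans (hf x hx).symm))

end RelativeHomotopy

lemma infinite_sphere {E : Type*} [NormedAddCommGroup E] [NormedSpace ℝ E]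
    (hE : 1 < Module.finrank ℝ E) : (sphere (0 : E) 1).Infinite := by
  have : Nontrivial E := Module.nontrivial_of_finrank_pos (R := ℝ) (by lia)
  obtain ⟨v, hv⟩ := (NormedSpace.sphere_nonempty (x := (0 : E)) (r := 1)).2 zero_le_one
  exact (isPreconnected_sphere (Module.one_lt_rank_of_one_lt_finrank hE) 0 1).infinite_of_nontrivial
    ⟨v, hv, -v, by simpa using hv, Subtype.coe_ne_coe.2 (ne_neg_of_mem_unit_sphere ℝ ⟨v, hv⟩)⟩

theorem exists_homotopicRel_isPreconnected_preimage {P E J : Type*} [NormedAddCommGroup P]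
    [NormedSpace ℝ P] [FiniteDimensional ℝ P] [NormedAddCommGroup E] [InnerProductSpace ℝ E]
    [FiniteDimensional ℝ E] [Finite J] (hP : 2 ≤ Module.finrank ℝ P)
    (hE : 4 ≤ Module.finrank ℝ E) {y : J → sphere (0 : E) 1} (hy : Function.Injective y) (j₀ : J)
    (f : C(closedBall (0 : P) 1, sphere (0 : E) 1)) (hf : ∀ x ∈ ballBoundary P, f x = y j₀) :
    ∃ f' : C(closedBall (0 : P) 1, sphere (0 : E) 1),
      f.HomotopicRel f' (ballBoundary P) ∧ ∀ j, IsPreconnected {x | f' x = y j} := by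
  have := simplyConnectedSpace_sphere (E := E) (by lia)
  have : Infinite (sphere (0 : E) 1) := (infinite_sphere (by lia)).to_subtype
  have : CompactSpace (closedBall (0 : P) 1) :=
    have := FiniteDimensional.proper_real P
    isCompact_iff_compactSpace.1 (isCompact_closedBall 0 1)
  obtain ⟨v, hv⟩ := (finite_range y).infinite_compl.nonempty
  have hfact : Fact (Module.finrank ℝ E = (Module.finrank ℝ E - 1) + 1) := ⟨by lia⟩
  have hV : 3 ≤ Module.finrank ℝ (ℝ ∙ (v : E))ᗮ := by
    rw [Submodule.finrank_orthogonal_span_singleton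
      (n := Module.finrank ℝ E - 1) (ne_zero_of_mem_unit_sphere v)]
    lia
  let h : OnePoint (ℝ ∙ (v : E))ᗮ ≃ₜ sphere (0 : E) 1 :=
    onePointHyperplaneHomeoUnitSphere (norm_eq_of_mem_sphere v)
  have hinfty : h OnePoint.infty = v := OnePoint.equivOfIsEmbeddingOfRangeEq_apply_infty _ _ _ _
  have hyv : ∀ j, h.symm (y j) ≠ OnePoint.infty := fun j hj =>
    hv ⟨j, by rw [← hinfty, ← hj, h.apply_symm_apply]⟩
  choose z hz using fun j => OnePoint.ne_infty_iff_exists.1 (hyv j)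
  have hhz : ∀ j, h (z j) = y j := fun j => by rw [hz, h.apply_symm_apply]
  have hzinj : Function.Injective z := fun i j hij => hy (by rw [← hhz, ← hhz, hij])
  obtain ⟨k, hfk, hk, hpre⟩ := exists_homotopicWith_isPreconnected_preimage hP hV hzinj j₀
    ⟨fun x => h.symm (f x), by fun_prop⟩ fun x hx => (congrArg h.symm (hf x hx)).trans (hz j₀).symm
  have hiff : ∀ j x, h (k x) = y j ↔ k x = z j := fun j x => by
    rw [← hhz, h.injective.eq_iff]
  refine ⟨⟨fun x => h (k x), by fun_prop⟩, homotopicRel_of_homotopicWith_constOn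
    (isClosed_eq (by fun_prop) continuous_const) ?_ hf fun x hx => (hiff j₀ x).2 (hk x hx),
    fun j => ?_⟩
  · obtain ⟨H⟩ := hfk
    exact homotopicWith_constOn ⟨fun p => h (H p), by fun_prop⟩
      (fun x => (congrArg h (H.map_zero_left x)).trans (h.apply_symm_apply _))
      (fun x => congrArg h (H.map_one_left x))
      fun t x hx x' hx' => congrArg h (H.prop' t x hx x' hx')
  · change IsPreconnected {x | h (k x) = y j}
    simpa only [hiff] using hpre j

/-! ### Connected coincidence sets -/

/-- A presentation of `X` as two copies of the closed unit ball of `P` glued along their boundary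
spheres. The map `proj` folds the two copies onto the ball. -/
structure BallDouble (P X : Type*) [NormedAddCommGroup P] [TopologicalSpace X] where
  upper : C(closedBall (0 : P) 1, X)
  lower : C(closedBall (0 : P) 1, X)
  proj : C(X, closedBall (0 : P) 1)
  proj_upper (x : closedBall (0 : P) 1) : proj (upper x) = x
  proj_lower (x : closedBall (0 : P) 1) : proj (lower x) = x
  upper_proj_or_lower_proj (z : X) : upper (proj z) = z ∨ lower (proj z) = z
  upper_eq_lower_iff (x : closedBall (0 : P) 1) : upper x = lower x ↔ x ∈ ballBoundary P

section SphereDouble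

variable {E : Type*} [NormedAddCommGroup E] [InnerProductSpace ℝ E] {v : E}

lemma norm_sq_add_smul_of_mem_orthogonal (hv : ‖v‖ = 1) (x : (ℝ ∙ v)ᗮ) (c : ℝ) :
    ‖(x : E) + c • v‖ ^ 2 = ‖x‖ ^ 2 + c ^ 2 := by
  have horth : inner ℝ (x : E) v = 0 :=
    Submodule.mem_orthogonal_singleton_iff_inner_left.1 x.2
  rw [norm_add_sq_real, inner_smul_right, horth, norm_smul, hv, mul_one, Real.norm_eq_abs, sq_abs,
    Submodule.coe_norm]
  ring

lemma add_smul_mem_sphere (hv : ‖v‖ = 1) {x : (ℝ ∙ v)ᗮ} {c : ℝ} (hc : c ^ 2 = 1 - ‖x‖ ^ 2) :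
    (x : E) + c • v ∈ sphere (0 : E) 1 := by
  rw [mem_sphere_zero_iff_norm, ← pow_eq_one_iff_of_nonneg (norm_nonneg _) two_ne_zero,
    norm_sq_add_smul_of_mem_orthogonal hv, hc, add_sub_cancel]

lemma sq_sqrt_one_sub_norm_sq {P : Type*} [NormedAddCommGroup P] (x : closedBall (0 : P) 1) :
    √(1 - ‖(x : P)‖ ^ 2) ^ 2 = 1 - ‖(x : P)‖ ^ 2 :=
  Real.sq_sqrt (sub_nonneg.2 (pow_le_one₀ (norm_nonneg _) (mem_closedBall_zero_iff.1 x.2)))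

lemma orthogonalProjectionOnto_add_smul (x : (ℝ ∙ v)ᗮ) (c : ℝ) :
    (ℝ ∙ v)ᗮ.orthogonalProjectionOnto ((x : E) + c • v) = x := by
  rw [map_add, Submodule.orthogonalProjectionOnto_mem_subspace_eq_self,
    Submodule.orthogonalProjectionOnto_apply_of_mem_orthogonal, add_zero]
  exact Submodule.le_orthogonal_orthogonal _
    (Submodule.smul_mem _ c (Submodule.mem_span_singleton_self v))

lemma orthogonalProjectionOnto_add_inner_smul (hv : ‖v‖ = 1) (z : E) :
    ((ℝ ∙ v)ᗮ.orthogonalProjectionOnto z : E) + inner ℝ v z • v = z := by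
  rw [← Submodule.starProjection_unit_singleton ℝ hv]
  exact (add_comm _ _).trans
    (Submodule.starProjection_add_starProjection_orthogonal (K := ℝ ∙ v) z)

lemma orthogonalProjectionOnto_mem_closedBall (z : sphere (0 : E) 1) :
    (ℝ ∙ v)ᗮ.orthogonalProjectionOnto (z : E) ∈ closedBall (0 : (ℝ ∙ v)ᗮ) 1 :=
  mem_closedBall_zero_iff.2
    (((ℝ ∙ v)ᗮ.norm_orthogonalProjectionOnto_apply_le z).trans_eq (norm_eq_of_mem_sphere z))

lemma sqrt_one_sub_norm_orthogonalProjectionOnto_sq (hv : ‖v‖ = 1) (z : sphere (0 : E) 1) :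
    √(1 - ‖(ℝ ∙ v)ᗮ.orthogonalProjectionOnto (z : E)‖ ^ 2) = |inner ℝ v (z : E)| := by
  have hz := norm_sq_add_smul_of_mem_orthogonal hv
    ((ℝ ∙ v)ᗮ.orthogonalProjectionOnto (z : E)) (inner ℝ v (z : E))
  rw [orthogonalProjectionOnto_add_inner_smul hv, norm_eq_of_mem_sphere, one_pow] at hz
  rw [sub_eq_of_eq_add' hz, Real.sqrt_sq_eq_abs]

/-- The unit sphere as the union of the two hemispheres with poles `v` and `-v`, each of them the
graph of a function on the equatorial ball. -/
noncomputable def sphereDouble (hv : ‖v‖ = 1) : BallDouble (ℝ ∙ v)ᗮ (sphere (0 : E) 1) where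
  upper :=
    { toFun x := ⟨_, add_smul_mem_sphere hv (sq_sqrt_one_sub_norm_sq x)⟩ }
  lower :=
    { toFun x := ⟨_, add_smul_mem_sphere hv ((neg_sq _).trans (sq_sqrt_one_sub_norm_sq x))⟩ }
  proj := { toFun z := ⟨_, orthogonalProjectionOnto_mem_closedBall z⟩ }
  proj_upper x := Subtype.ext (orthogonalProjectionOnto_add_smul _ _)
  proj_lower x := Subtype.ext (orthogonalProjectionOnto_add_smul _ _)
  upper_proj_or_lower_proj z := by
    simp only [ContinuousMap.coe_mk, Subtype.ext_iff,
      sqrt_one_sub_norm_orthogonalProjectionOnto_sq hv]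
    refine (abs_choice (inner ℝ v (z : E))).imp (fun h => ?_) fun h => ?_
    · rw [h, orthogonalProjectionOnto_add_inner_smul hv]
    · rw [h, neg_neg, orthogonalProjectionOnto_add_inner_smul hv]
  upper_eq_lower_iff x := by
    have hv₀ : v ≠ 0 := norm_ne_zero_iff.1 (hv.trans_ne one_ne_zero)
    rw [Subtype.ext_iff]
    simp only [ContinuousMap.coe_mk, add_right_inj, (smul_left_injective ℝ hv₀).eq_iff,
      self_eq_neg]
    rw [← pow_eq_zero_iff two_ne_zero, sq_sqrt_one_sub_norm_sq, sub_eq_zero, eq_comm,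
      pow_eq_one_iff_of_nonneg (norm_nonneg _) two_ne_zero]
    rfl

end SphereDouble

lemma homotopic_of_contractibleSpace {X Y : Type*} [TopologicalSpace X] [TopologicalSpace Y]
    [ContractibleSpace X] [PathConnectedSpace Y] (f g : C(X, Y)) : f.Homotopic g := by
  obtain ⟨a, ha⟩ := (id_nullhomotopic X).comp_right f
  obtain ⟨b, hb⟩ := (id_nullhomotopic X).comp_right g
  exact (ha.trans (ContinuousMap.homotopic_const_iff.2 (PathConnectedSpace.joined a b))).trans
    hb.symm

lemma exists_homotopic_comp_eq {B X E : Type*} [TopologicalSpace B] [TopologicalSpace X]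
    [T2Space X] [CompactSpace X] [NormedAddCommGroup E] [NormedSpace ℝ E] [FiniteDimensional ℝ E]
    {s : C(B, X)} {π : C(X, B)} (hπ : Function.LeftInverse π s) (F : C(X, sphere (0 : E) 1))
    {f : C(B, sphere (0 : E) 1)} (h : (F.comp s).Homotopic f) :
    ∃ F' : C(X, sphere (0 : E) 1), F.Homotopic F' ∧ F'.comp s = f := by
  obtain ⟨H⟩ := h
  obtain ⟨F', K, hK⟩ := exists_homotopy_extension (f := F) (K := fun p => H (p.1, π p.2))
    (isClosed_eq (by fun_prop) continuous_id : IsClosed {z | s (π z) = z})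
    (by fun_prop) fun z hz => (H.apply_zero _).trans (congrArg F hz)
  refine ⟨F', ⟨K⟩, ContinuousMap.ext fun x => ?_⟩
  rw [ContinuousMap.comp_apply, ← K.apply_one, hK _ (congrArg s (hπ x)), hπ, H.apply_one]

namespace BallDouble

variable {P X : Type*} [NormedAddCommGroup P] [TopologicalSpace X] (D : BallDouble P X)

lemma proj_mem_ballBoundary {z : X} (hz : D.upper (D.proj z) = z) (hz' : D.lower (D.proj z) = z) :
    D.proj z ∈ ballBoundary P :=
  (D.upper_eq_lower_iff _).1 (hz.trans hz'.symm)

lemma exists_homotopic_comp_upper_eq [T2Space X] {Y : Type*} [TopologicalSpace Y] (F : C(X, Y))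
    {f : C(closedBall (0 : P) 1, Y)} (h : (F.comp D.upper).HomotopicRel f (ballBoundary P)) :
    ∃ F' : C(X, Y), F.Homotopic F' ∧ F'.comp D.upper = f ∧
      F'.comp D.lower = F.comp D.lower := by
  obtain ⟨H⟩ := h
  have hU : IsClosed {z | D.upper (D.proj z) = z} := isClosed_eq (by fun_prop) continuous_id
  have hL : IsClosed {z | D.lower (D.proj z) = z} := isClosed_eq (by fun_prop) continuous_id
  obtain ⟨K, hKU, hKL⟩ := exists_glue (X := I × X) (hU.preimage continuous_snd)
    (hL.preimage continuous_snd)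
    (eq_univ_of_forall fun p => D.upper_proj_or_lower_proj p.2)
    (f := fun p => H (p.1, D.proj p.2)) (g := fun p => F p.2) (by fun_prop) (by fun_prop)
    fun p hp hp' => (H.eq_fst p.1 (D.proj_mem_ballBoundary hp hp')).trans (congrArg F hp)
  refine ⟨⟨fun z => K (1, z), by fun_prop⟩, ⟨⟨K, fun z => ?_, fun z => rfl⟩⟩,
    ContinuousMap.ext fun x => ?_, ContinuousMap.ext fun x => ?_⟩
  · rcases D.upper_proj_or_lower_proj z with hz | hz
    · exact (hKU (x := (0, z)) hz).trans ((H.apply_zero _).trans (congrArg F hz))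
    · exact hKL (x := (0, z)) hz
  · refine (hKU (x := (1, D.upper x)) (congrArg D.upper (D.proj_upper x))).trans ?_
    exact (H.apply_one _).trans (congrArg f (D.proj_upper x))
  · exact hKL (x := (1, D.lower x)) (congrArg D.lower (D.proj_lower x))

lemma exists_homotopic_comp_lower_eq [T2Space X] [CompactSpace X] [NormedSpace ℝ P] {E : Type*}
    [NormedAddCommGroup E] [NormedSpace ℝ E] [FiniteDimensional ℝ E]
    [PathConnectedSpace (sphere (0 : E) 1)] (F₁ F₂ : C(X, sphere (0 : E) 1)) :
    ∃ F₁' F₂' : C(X, sphere (0 : E) 1), F₁.Homotopic F₁' ∧ F₂.Homotopic F₂' ∧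
      (∃ q, F₂'.comp D.upper = .const _ q) ∧ F₁'.comp D.lower = F₂'.comp D.lower := by
  have : ContractibleSpace (closedBall (0 : P) 1) :=
    (convex_closedBall 0 1).contractibleSpace ⟨0, mem_closedBall_self zero_le_one⟩
  obtain ⟨q⟩ : Nonempty (sphere (0 : E) 1) := inferInstance
  obtain ⟨F₂', h₂, hF₂⟩ := exists_homotopic_comp_eq D.proj_upper F₂
    (homotopic_of_contractibleSpace _ (.const _ q))
  obtain ⟨F₁', h₁, hF₁⟩ := exists_homotopic_comp_eq D.proj_lower F₁
    (homotopic_of_contractibleSpace _ (F₂'.comp D.lower))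
  exact ⟨F₁', F₂', h₁, h₂, ⟨q, hF₂⟩, hF₁⟩

section Coincidence

variable {D} {Y : Type*} [TopologicalSpace Y] {F₁ F₂ : C(X, Y)} {q : Y}

lemma apply_upper_eq_of_mem_ballBoundary (hlower : F₁.comp D.lower = F₂.comp D.lower)
    (hupper : F₂.comp D.upper = .const _ q) {x : closedBall (0 : P) 1} (hx : x ∈ ballBoundary P) :
    F₁ (D.upper x) = q := by
  have hx' : D.upper x = D.lower x := (D.upper_eq_lower_iff x).2 hx
  calc F₁ (D.upper x) = F₁ (D.lower x) := congrArg F₁ hx'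
    _ = F₂ (D.lower x) := DFunLike.congr_fun hlower x
    _ = F₂ (D.upper x) := congrArg F₂ hx'.symm
    _ = q := DFunLike.congr_fun hupper x

variable {G : Type*} [Group G] [MulAction G Y] [IsCancelSMul G Y]

lemma setOf_eq_smul_eq (hlower : F₁.comp D.lower = F₂.comp D.lower)
    (hupper : F₂.comp D.upper = .const _ q) (g : G) :
    {z | F₁ z = g • F₂ z} =
      {z | g = 1 ∧ z ∈ range D.lower} ∪ D.upper '' {x | F₁ (D.upper x) = g • q} := by
  have hlow : ∀ x, F₁ (D.lower x) = F₂ (D.lower x) := DFunLike.congr_fun hlower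
  have hup : ∀ x, F₂ (D.upper x) = q := DFunLike.congr_fun hupper
  ext z
  constructor
  · intro (hz : F₁ z = g • F₂ z)
    rcases D.upper_proj_or_lower_proj z with h | h <;> rw [← h] at hz ⊢
    · exact .inr ⟨D.proj z, by rwa [hup] at hz, rfl⟩
    · exact .inl ⟨IsCancelSMul.eq_one_of_smul (hz.symm.trans (hlow _)), mem_range_self _⟩
  · rintro (⟨rfl, x, rfl⟩ | ⟨x, hx, rfl⟩)
    · exact (hlow x).trans (one_smul G _).symm
    · exact hx.trans (congrArg (g • ·) (hup x).symm)

lemma isPreconnected_setOf_eq_smul [NormedSpace ℝ P] [Nontrivial P]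
    (hlower : F₁.comp D.lower = F₂.comp D.lower) (hupper : F₂.comp D.upper = .const _ q) {g : G}
    (hg : IsPreconnected {x | F₁ (D.upper x) = g • q}) : IsPreconnected {z | F₁ z = g • F₂ z} := by
  have himg := hg.image _ D.upper.continuous.continuousOn
  rw [setOf_eq_smul_eq hlower hupper]
  by_cases h1 : g = 1
  · subst h1
    have : PreconnectedSpace (closedBall (0 : P) 1) :=
      isPreconnected_iff_preconnectedSpace.1 (convex_closedBall 0 1).isPreconnected
    obtain ⟨a, ha⟩ := (NormedSpace.sphere_nonempty (x := (0 : P)) (r := 1)).2 zero_le_one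
    let x : closedBall (0 : P) 1 := ⟨a, sphere_subset_closedBall ha⟩
    have hx : x ∈ ballBoundary P := mem_sphere_zero_iff_norm.1 ha
    have hFx : F₁ (D.upper x) = (1 : G) • q :=
      (apply_upper_eq_of_mem_ballBoundary hlower hupper hx).trans (one_smul G q).symm
    simp only [true_and, ofPred_mem_eq]
    exact (isPreconnected_range D.lower.continuous).union (D.upper x)
      ⟨x, ((D.upper_eq_lower_iff x).2 hx).symm⟩ ⟨x, hFx, rfl⟩ himg
  · simpa only [h1, false_and, ofPred_false, empty_union] using himg

end Coincidence

theorem exists_homotopic_isPreconnected_eq_smul (D : BallDouble P X) [T2Space X]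
    [CompactSpace X] [NormedSpace ℝ P] [FiniteDimensional ℝ P] (hP : 2 ≤ Module.finrank ℝ P)
    {E G : Type*} [NormedAddCommGroup E] [InnerProductSpace ℝ E] [FiniteDimensional ℝ E]
    (hE : 4 ≤ Module.finrank ℝ E) [Group G] [Finite G]
    [MulAction G (sphere (0 : E) 1)] [IsCancelSMul G (sphere (0 : E) 1)]
    (F₁ F₂ : C(X, sphere (0 : E) 1)) :
    ∃ F₁' F₂' : C(X, sphere (0 : E) 1), F₁.Homotopic F₁' ∧ F₂.Homotopic F₂' ∧
      ∀ g : G, IsPreconnected {z | F₁' z = g • F₂' z} := by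
  have := simplyConnectedSpace_sphere (E := E) (by lia)
  have : Nontrivial P := Module.nontrivial_of_finrank_pos (R := ℝ) (by lia)
  obtain ⟨F₁', F₂', h₁, h₂, ⟨q, hq⟩, hlower⟩ := D.exists_homotopic_comp_lower_eq F₁ F₂
  have hboundary : ∀ x ∈ ballBoundary P, F₁'.comp D.upper x = (1 : G) • q := fun x hx =>
    (apply_upper_eq_of_mem_ballBoundary hlower hq hx).trans (one_smul G q).symm
  obtain ⟨f, hf, hpre⟩ := exists_homotopicRel_isPreconnected_preimage hP hE
    (y := fun g : G => g • q) (fun _ _ => IsCancelSMul.right_cancel _ _ _) 1 _ hboundary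
  obtain ⟨F₁'', h₁', rfl, hlower'⟩ := D.exists_homotopic_comp_upper_eq F₁' hf
  exact ⟨F₁'', F₂', h₁.trans h₁', h₂, fun g =>
    isPreconnected_setOf_eq_smul (hlower'.trans hlower) hq (hpre g)⟩

end BallDouble

theorem exists_homotopic_isPreconnected_eq_smul_sphere {E E' G : Type*} [NormedAddCommGroup E]
    [InnerProductSpace ℝ E] [FiniteDimensional ℝ E] [NormedAddCommGroup E']
    [InnerProductSpace ℝ E'] [FiniteDimensional ℝ E'] (hE : 3 ≤ Module.finrank ℝ E)
    (hE' : 4 ≤ Module.finrank ℝ E') [Group G] [Finite G] [MulAction G (sphere (0 : E') 1)]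
    [IsCancelSMul G (sphere (0 : E') 1)] (F₁ F₂ : C(sphere (0 : E) 1, sphere (0 : E') 1)) :
    ∃ F₁' F₂' : C(sphere (0 : E) 1, sphere (0 : E') 1), F₁.Homotopic F₁' ∧ F₂.Homotopic F₂' ∧
      ∀ g : G, IsPreconnected {z | F₁' z = g • F₂' z} := by
  have : Nontrivial E := Module.nontrivial_of_finrank_pos (R := ℝ) (by lia)
  have : CompactSpace (sphere (0 : E) 1) :=
    have := FiniteDimensional.proper_real E
    inferInstance
  obtain ⟨v, hv⟩ := (NormedSpace.sphere_nonempty (x := (0 : E)) (r := 1)).2 zero_le_one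
  have : Fact (Module.finrank ℝ E = (Module.finrank ℝ E - 1) + 1) := ⟨by lia⟩
  refine (sphereDouble (norm_eq_of_mem_sphere ⟨v, hv⟩)).exists_homotopic_isPreconnected_eq_smul
    ?_ hE' F₁ F₂
  rw [Submodule.finrank_orthogonal_span_singleton
    (n := Module.finrank ℝ E - 1) (ne_zero_of_mem_unit_sphere ⟨v, hv⟩)]
  lia

/-! ### Orbit spaces -/

section ConnectedComponents

variable {X ι : Type*} [TopologicalSpace X] {c : X → ι}

lemma continuous_of_isClosed_preimage_singleton [TopologicalSpace ι] [Finite ι]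
    (hc : ∀ i, IsClosed (c ⁻¹' {i})) : Continuous c := by
  refine continuous_iff_isClosed.2 fun s _ => ?_
  rw [← biUnion_preimage_singleton]
  exact s.toFinite.isClosed_biUnion fun i _ => hc i

lemma card_le_card_connectedComponents_of_surjective [TopologicalSpace ι]
    [TotallyDisconnectedSpace ι] (hc : Continuous c) (hsurj : Function.Surjective c) :
    ENat.card ι ≤ ENat.card (ConnectedComponents X) := by
  have hlift : Function.Surjective hc.connectedComponentsLift := fun i => by
    obtain ⟨x, rfl⟩ := hsurj i
    exact ⟨x, hc.connectedComponentsLift_apply_coe x⟩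
  exact ENat.card_le_card_of_injective (Function.injective_surjInv hlift)

lemma card_connectedComponents_le_of_isPreconnected_preimage
    (hc : ∀ i, IsPreconnected (c ⁻¹' {i})) :
    ENat.card (ConnectedComponents X) ≤ ENat.card ι := by
  refine ENat.card_le_card_of_injective (f := fun x : ConnectedComponents X => c x.out)
    fun x y (hxy : c x.out = c y.out) => ?_
  rw [← Quotient.out_eq x, ← Quotient.out_eq y]
  exact ConnectedComponents.coe_eq_coe'.2 ((hc (c y.out)).subset_connectedComponent rfl hxy)

end ConnectedComponents

section OrbitSpace

variable {G Y : Type*} [Group G] [TopologicalSpace Y] [MulAction G Y]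

variable (G Y) in
/-- The projection from `Y` to its orbit space, as a bundled continuous map. -/
def orbitMk : C(Y, Quotient (MulAction.orbitRel G Y)) :=
  ⟨Quotient.mk _, continuous_quotient_mk'⟩

lemma orbitMk_eq_iff {x y : Y} : orbitMk G Y x = orbitMk G Y y ↔ ∃ g : G, x = g • y := by
  change (Quotient.mk (MulAction.orbitRel G Y) x = Quotient.mk _ y) ↔ _
  rw [Quotient.eq, MulAction.orbitRel_apply, MulAction.mem_orbit_iff]
  exact exists_congr fun g => eq_comm

lemma exists_orbitMk_comp_eq [T2Space Y] [WeaklyLocallyCompactSpace Y] [ContinuousConstSMul G Y]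
    [IsCancelSMul G Y] [Finite G] {X : Type*} [TopologicalSpace X] [SimplyConnectedSpace X]
    [LocallyPathConnectedSpace X] (f : C(X, Quotient (MulAction.orbitRel G Y))) :
    ∃ F : C(X, Y), (orbitMk G Y).comp F = f := by
  have : ProperlyDiscontinuousSMul G Y := ⟨fun _ _ => toFinite _⟩
  have hcov : IsCoveringMap (orbitMk G Y) :=
    isQuotientCoveringMap_quotientMk_of_properlyDiscontinuousSMul.isCoveringMap
  obtain ⟨x⟩ : Nonempty X := inferInstance
  obtain ⟨y, hy⟩ := Quotient.mk_surjective (f x)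
  obtain ⟨F, ⟨-, hF⟩, -⟩ := hcov.existsUnique_continuousMap_lifts f x y hy
  exact ⟨F, ContinuousMap.ext (congrFun hF)⟩

variable {X : Type*} [TopologicalSpace X] [IsCancelSMul G Y] (F₁ F₂ : C(X, Y))

variable (G) in
lemma exists_coincidence_label :
    ∃ c : {x // (orbitMk G Y).comp F₁ x = (orbitMk G Y).comp F₂ x} → G,
      ∀ x g, c x = g ↔ F₁ x = g • F₂ x := by
  choose c hc using fun x : {x // (orbitMk G Y).comp F₁ x = (orbitMk G Y).comp F₂ x} =>
    orbitMk_eq_iff.1 x.2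
  refine ⟨c, fun x g => ⟨?_, fun h => IsCancelSMul.right_cancel _ _ _ ((hc x).symm.trans h)⟩⟩
  rintro rfl
  exact hc x

variable {F₁ F₂}

lemma card_le_card_connectedComponents_coincidence [T2Space Y] [ContinuousConstSMul G Y]
    [Finite G] (hne : ∀ g : G, ∃ x, F₁ x = g • F₂ x) :
    ENat.card G ≤ ENat.card
      (ConnectedComponents {x // (orbitMk G Y).comp F₁ x = (orbitMk G Y).comp F₂ x}) := by
  obtain ⟨c, hc⟩ := exists_coincidence_label G F₁ F₂
  let _ : TopologicalSpace G := ⊥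
  have : DiscreteTopology G := ⟨rfl⟩
  refine card_le_card_connectedComponents_of_surjective
    (continuous_of_isClosed_preimage_singleton (c := c) fun g => ?_) fun g => ?_
  · simp only [preimage, mem_singleton_iff, hc]
    exact isClosed_eq (by fun_prop) (by fun_prop)
  · obtain ⟨x, hx⟩ := hne g
    exact ⟨⟨x, orbitMk_eq_iff.2 ⟨g, hx⟩⟩, (hc _ g).2 hx⟩

lemma card_connectedComponents_coincidence_le
    (hpre : ∀ g : G, IsPreconnected {x | F₁ x = g • F₂ x}) :
    ENat.card (ConnectedComponents
      {x // (orbitMk G Y).comp F₁ x = (orbitMk G Y).comp F₂ x}) ≤ ENat.card G := by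
  obtain ⟨c, hc⟩ := exists_coincidence_label G F₁ F₂
  refine card_connectedComponents_le_of_isPreconnected_preimage (c := c) fun g => ?_
  refine IsInducing.subtypeVal.isPreconnected_image.1 ?_
  convert hpre g using 1
  ext x
  refine ⟨?_, fun hx => ⟨⟨x, orbitMk_eq_iff.2 ⟨g, hx⟩⟩, (hc _ g).2 hx, rfl⟩⟩
  rintro ⟨x, hx, rfl⟩
  exact (hc x g).1 hx

lemma MCC_orbitMk_comp_le {F₁' F₂' : C(X, Y)} (h₁ : F₁.Homotopic F₁') (h₂ : F₂.Homotopic F₂')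
    (hpre : ∀ g : G, IsPreconnected {x | F₁' x = g • F₂' x}) :
    MCC ((orbitMk G Y).comp F₁) ((orbitMk G Y).comp F₂) ≤ ENat.card G :=
  (iInf₂_le _ (.comp (.refl _) h₁.symm)).trans
    ((iInf₂_le _ (.comp (.refl _) h₂.symm)).trans (card_connectedComponents_coincidence_le hpre))

end OrbitSpace

section SpaceForm

variable {n : ℕ} {G X : Type*} [Group G]
  [MulAction G (sphere (0 : EuclideanSpace ℝ (Fin (n + 1))) 1)]
  [ContinuousConstSMul G (sphere (0 : EuclideanSpace ℝ (Fin (n + 1))) 1)] [TopologicalSpace X]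

lemma orbitMk_comp_homotopic_of_forall_ne (hn : Odd n)
    {F₁ F₂ : C(X, sphere (0 : EuclideanSpace ℝ (Fin (n + 1))) 1)} {g : G}
    (hne : ∀ x, F₁ x ≠ g • F₂ x) :
    ((orbitMk G _).comp F₁).Homotopic ((orbitMk G _).comp F₂) := by
  let gF₂ : C(X, sphere (0 : EuclideanSpace ℝ (Fin (n + 1))) 1) :=
    ⟨fun x => g • F₂ x, by fun_prop⟩
  have hg : (orbitMk G _).comp gF₂ = (orbitMk G _).comp F₂ :=
    ContinuousMap.ext fun x => orbitMk_eq_iff.2 ⟨g, rfl⟩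
  exact hg ▸ .comp (.refl _) (homotopic_of_forall_ne (g := gF₂) hn hne)

variable [IsCancelSMul G (sphere (0 : EuclideanSpace ℝ (Fin (n + 1))) 1)] [Finite G]
  [SimplyConnectedSpace X] [LocallyPathConnectedSpace X]
  {f₁ f₂ : C(X, Quotient (MulAction.orbitRel G (sphere (0 : EuclideanSpace ℝ (Fin (n + 1))) 1)))}

/-- Two lifts related by `g` nowhere would be homotopic after projection, so every deck
transformation contributes to the coincidence set. -/
theorem card_le_MCC (hn : Odd n) (h : ¬ f₁.Homotopic f₂) : ENat.card G ≤ MCC f₁ f₂ := by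
  refine le_iInf₂ fun g₁ h₁ => le_iInf₂ fun g₂ h₂ => ?_
  obtain ⟨F₁, rfl⟩ := exists_orbitMk_comp_eq g₁
  obtain ⟨F₂, rfl⟩ := exists_orbitMk_comp_eq g₂
  refine card_le_card_connectedComponents_coincidence fun g => ?_
  by_contra! hne
  exact h ((h₁.symm.trans (orbitMk_comp_homotopic_of_forall_ne hn hne)).trans h₂)

end SpaceForm

theorem MCC_le_card {E E' G : Type*} [NormedAddCommGroup E] [InnerProductSpace ℝ E]
    [FiniteDimensional ℝ E] [LocallyPathConnectedSpace (sphere (0 : E) 1)]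
    [NormedAddCommGroup E'] [InnerProductSpace ℝ E'] [FiniteDimensional ℝ E']
    (hE : 3 ≤ Module.finrank ℝ E) (hE' : 4 ≤ Module.finrank ℝ E') [Group G] [Finite G]
    [MulAction G (sphere (0 : E') 1)] [ContinuousConstSMul G (sphere (0 : E') 1)]
    [IsCancelSMul G (sphere (0 : E') 1)]
    (f₁ f₂ : C(sphere (0 : E) 1, Quotient (MulAction.orbitRel G (sphere (0 : E') 1)))) :
    MCC f₁ f₂ ≤ ENat.card G := by
  have := simplyConnectedSpace_sphere (E := E) (by lia)
  have := FiniteDimensional.proper_real E'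
  obtain ⟨F₁, rfl⟩ := exists_orbitMk_comp_eq f₁
  obtain ⟨F₂, rfl⟩ := exists_orbitMk_comp_eq f₂
  obtain ⟨F₁', F₂', h₁, h₂, hpre⟩ :=
    exists_homotopic_isPreconnected_eq_smul_sphere (G := G) hE hE' F₁ F₂
  exact MCC_orbitMk_comp_le h₁ h₂ hpre

end SpaceForm

open SpaceForm in
theorem mcc_eq_card_of_not_homotopic_sphere_space_form
    (n : ℕ) (hn : 1 ≤ n) (hodd : Odd n)
    (G : Type*) [Group G] [Finite G]
    [MulAction G (Metric.sphere (0 : EuclideanSpace ℝ (Fin (n + 1))) 1)]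
    (hcont : ∀ g : G,
      Continuous fun x : Metric.sphere (0 : EuclideanSpace ℝ (Fin (n + 1))) 1 => g • x)
    (hfree : ∀ (g : G) (x : Metric.sphere (0 : EuclideanSpace ℝ (Fin (n + 1))) 1),
      g • x = x → g = 1)
    (m : ℕ) (hm : 1 < m)
    (f₁ f₂ : C(Metric.sphere (0 : EuclideanSpace ℝ (Fin (m + 1))) 1,
      Quotient (MulAction.orbitRel G (Metric.sphere (0 : EuclideanSpace ℝ (Fin (n + 1))) 1))))
    (h : ¬ f₁.Homotopic f₂) :
    MCC f₁ f₂ = (Nat.card G : ℕ∞) := by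
  have : SimplyConnectedSpace (Metric.sphere (0 : EuclideanSpace ℝ (Fin (m + 1))) 1) :=
    simplyConnectedSpace_sphere (by rw [finrank_euclideanSpace_fin]; lia)
  have : ContinuousConstSMul G (Metric.sphere (0 : EuclideanSpace ℝ (Fin (n + 1))) 1) := ⟨hcont⟩
  have : IsCancelSMul G (Metric.sphere (0 : EuclideanSpace ℝ (Fin (n + 1))) 1) :=
    isCancelSMul_iff_eq_one_of_smul_eq.2 hfree
  have hn₁ : n ≠ 1 := by
    rintro rfl
    obtain ⟨F₁, rfl⟩ := exists_orbitMk_comp_eq f₁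
    obtain ⟨F₂, rfl⟩ := exists_orbitMk_comp_eq f₂
    exact h (.comp (.refl _) (homotopic_sphere_one F₁ F₂))
  have hn₃ : 3 ≤ n := by
    obtain ⟨k, rfl⟩ := hodd
    lia
  rw [← ENat.card_eq_coe_natCard]
  exact le_antisymm (MCC_le_card (by simp; lia) (by simp; lia) f₁ f₂)
    (card_le_MCC hodd h)
end

section
/- Let n ≥ 1 be odd, let G be a finite group acting freely and continuously on the unit sphere Sⁿ ⊂ ℝⁿ⁺¹, and let N = Sⁿ/G be the orbit space with the quotient topology. Let m > 1 and let f₁, f₂ : Sᵐ → N be continuous maps that are NOT homotopic to each other. Then for EVERY pair of continuous maps f₁' homotopic to f₁ and f₂' homotopic to f₂, the coincidence set C(f₁', f₂') = {x ∈ Sᵐ | f₁'(x) = f₂'(x)} is nonempty and has at least |G| connected components. -/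
/-!
Let `q : Sⁿ → N` be the quotient map. For `m > 1` the sphere `Sᵐ` is simply connected: the punctured
spheres that contain a fixed base point are simply connected, they cover `Sᵐ`, and any two of them
have a path connected intersection. So the maps `f₁'`, `f₂'` lift through `q` to maps `F₁`, `F₂`,
and their coincidence set is the disjoint union over `g ∈ G` of the sets `{x | F₁ x = g • F₂ x}`.
These are open, because `q` is injective on small open sets, and none of them is empty: for `n` odd,
two maps into `Sⁿ` without coincidences are homotopic (push the first along great circle arcs to
the antipode of the second, then rotate by the complex scalars `exp (i π t)`), so that
`F₁ x ≠ g • F₂ x` for all `x` would make `f₁' = q ∘ F₁` homotopic to `f₂' = q ∘ (g • F₂)`.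
-/

open Metric Module Topology unitInterval

section SimplyConnectedCover

variable {X : Type*} [TopologicalSpace X]

theorem homotopic_of_isSimplyConnected_of_forall_mem {s : Set X} (hs : IsSimplyConnected s)
    {x y : X} {γ δ : Path x y} (hγ : ∀ t, γ t ∈ s) (hδ : ∀ t, δ t ∈ s) : γ.Homotopic δ := by
  have := hs.simplyConnectedSpace
  let restrict (α : Path x y) (hα : ∀ t, α t ∈ s) :
      Path (⟨x, by simpa using hα 0⟩ : s) ⟨y, by simpa using hα 1⟩ :=
    { toFun := fun t ↦ ⟨α t, hα t⟩
      source' := by simp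
      target' := by simp }
  exact (SimplyConnectedSpace.paths_homotopic (restrict γ hγ) (restrict δ hδ)).map
    ⟨Subtype.val, continuous_subtype_val⟩

theorem subpath_mem_of_Icc_subset_preimage {x y : X} {γ : Path x y} {a b : I} (hab : a ≤ b)
    {s : Set X} (h : Set.Icc a b ⊆ γ ⁻¹' s) (t : I) : γ.subpath a b t ∈ s := by
  refine Set.image_subset_iff.2 h ?_
  rw [← γ.range_subpath_of_le a b hab]
  exact Set.mem_range_self t

variable {ι : Type*} {U : ι → Set X}

theorem trans_homotopic_of_isSimplyConnected_cover (hU : ∀ i, IsSimplyConnected (U i))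
    (hUU : ∀ i j, IsPathConnected (U i ∩ U j)) {x y z : X} (hx : ∀ i, x ∈ U i)
    {α : Path x y} (hα : ∀ i (δ : Path x y), (∀ t, δ t ∈ U i) → α.Homotopic δ)
    {j : ι} {β : Path y z} (hβ : ∀ t, β t ∈ U j)
    {i : ι} {δ : Path x z} (hδ : ∀ t, δ t ∈ U i) : (α.trans β).Homotopic δ := by
  have hy : y ∈ U j := by simpa using hβ 0
  have hz : z ∈ U i ∩ U j := ⟨by simpa using hδ 1, by simpa using hβ 1⟩
  have hxy := (hU j).isPathConnected.joinedIn x (hx j) y hy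
  have hxz := (hUU i j).joinedIn x ⟨hx i, hx j⟩ z hz
  calc
    (α.trans β).Homotopic (hxy.somePath.trans β) :=
      (hα j _ hxy.somePath_mem).hcomp (.refl β)
    Path.Homotopic _ hxz.somePath :=
      homotopic_of_isSimplyConnected_of_forall_mem (hU j)
        (fun t ↦ by
          rw [Path.trans_apply]
          split_ifs
          exacts [hxy.somePath_mem _, hβ _])
        fun t ↦ (hxz.somePath_mem t).2
    Path.Homotopic _ δ :=
      homotopic_of_isSimplyConnected_of_forall_mem (hU i) (fun t ↦ (hxz.somePath_mem t).1) hδ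

theorem homotopic_of_isSimplyConnected_open_cover (hUo : ∀ i, IsOpen (U i))
    (hU : ∀ i, IsSimplyConnected (U i)) (hUU : ∀ i j, IsPathConnected (U i ∩ U j))
    (hcover : ∀ x, ∃ i, x ∈ U i) {x y : X} (hx : ∀ i, x ∈ U i) (γ : Path x y)
    {i : ι} {δ : Path x y} (hδ : ∀ t, δ t ∈ U i) : γ.Homotopic δ := by
  obtain ⟨t, ht₀, htmono, ⟨n, ht₁⟩, hsub⟩ := exists_monotone_Icc_subset_open_cover_unitInterval
    (c := fun i ↦ γ ⁻¹' U i) (fun i ↦ (hUo i).preimage γ.continuous)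
    fun s _ ↦ Set.mem_iUnion.2 (hcover (γ s))
  -- The induction needs all `i` at once: the path that replaces the first `k` pieces of `γ` is
  -- rechosen inside the member of the cover that contains the next piece.
  have hinitial : ∀ k i (δ : Path (γ 0) (γ (t k))), (∀ s, δ s ∈ U i) →
      (γ.subpath 0 (t k)).Homotopic δ := by
    intro k
    induction k with
    | zero =>
      intro i δ hδ
      have hi : Set.Icc 0 (t 0) ⊆ γ ⁻¹' U i := by simpa [ht₀] using hx i
      exact homotopic_of_isSimplyConnected_of_forall_mem (hU i)
        (subpath_mem_of_Icc_subset_preimage ht₀.ge hi) hδ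
    | succ k ih =>
      intro i δ hδ
      obtain ⟨j, hj⟩ := hsub k
      have hβ := subpath_mem_of_Icc_subset_preimage (htmono k.le_succ) hj
      exact Path.Homotopic.trans ⟨(Path.Homotopy.subpathTransSubpath γ 0 (t k) (t (k + 1))).symm⟩
        (trans_homotopic_of_isSimplyConnected_cover hU hUU (by simpa using hx) ih hβ hδ)
  have hγ := hinitial n
  rw [ht₁ n le_rfl, Path.subpath_zero_one] at hγ
  exact (hγ i (δ.cast γ.source γ.target) hδ).pathCast γ.source.symm γ.target.symm

theorem simplyConnectedSpace_of_isSimplyConnected_open_cover (hUo : ∀ i, IsOpen (U i))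
    (hU : ∀ i, IsSimplyConnected (U i)) (hUU : ∀ i j, IsPathConnected (U i ∩ U j))
    (hcover : ∀ x, ∃ i, x ∈ U i) {x₀ : X} (hx₀ : ∀ i, x₀ ∈ U i) : SimplyConnectedSpace X := by
  have hjoined : ∀ x, ∃ i, JoinedIn (U i) x₀ x := fun x ↦
    (hcover x).imp fun i hi ↦ (hU i).isPathConnected.joinedIn x₀ (hx₀ i) x hi
  rw [simply_connected_iff_paths_homotopic']
  refine ⟨pathConnectedSpace_iff_univ.2 ⟨x₀, Set.mem_univ _, fun {x} _ ↦ ?_⟩,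
    fun {x y} γ δ ↦ ?_⟩
  · obtain ⟨i, hi⟩ := hjoined x
    exact hi.mono (Set.subset_univ _)
  · obtain ⟨i, hi⟩ := hjoined x
    obtain ⟨j, hj⟩ := hjoined y
    have hloop : ∀ α : Path x y, (hi.somePath.trans α).Homotopic hj.somePath := fun α ↦
      homotopic_of_isSimplyConnected_open_cover hUo hU hUU hcover hx₀ _ hj.somePath_mem
    have hcancel : ∀ α : Path x y, α.Homotopic (hi.somePath.symm.trans hj.somePath) := fun α ↦ by
      have h := Path.Homotopic.Quotient.eq.2 (hloop α)
      rw [← Path.Homotopic.Quotient.eq, Path.Homotopic.Quotient.mk_trans, ← h]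
      simp [← Path.Homotopic.Quotient.trans_assoc]
    exact (hcancel γ).trans (hcancel δ).symm

end SimplyConnectedCover

section SphereConnectedness

variable {V : Type*} [NormedAddCommGroup V] [InnerProductSpace ℝ V]

theorem one_lt_rank_orthogonal_span_singleton (hV : 2 < Module.rank ℝ V) (v : V) :
    1 < Module.rank ℝ (ℝ ∙ v)ᗮ := by
  by_contra! hle
  refine hV.not_ge ?_
  rw [← Submodule.rank_quotient_add_rank (ℝ ∙ v),
    ((ℝ ∙ v).quotientEquivOfIsCompl _ (Submodule.isCompl_orthogonal _)).rank_eq,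
    ← one_add_one_eq_two]
  exact add_le_add hle ((rank_span_le _).trans (by simp))

theorem isSimplyConnected_compl_singleton_sphere (v : sphere (0 : V) 1) :
    IsSimplyConnected ({v}ᶜ : Set (sphere (0 : V) 1)) := by
  rw [← range_stereographic_symm (norm_eq_of_mem_sphere v) v.2, ← Set.image_univ,
    (isOpenEmbedding_stereographic_symm _).isEmbedding.isSimplyConnected_image]
  exact (Homeomorph.Set.univ _).toHomotopyEquiv.simplyConnectedSpace

theorem isPathConnected_compl_sphere_of_countable (hV : 2 < Module.rank ℝ V)
    {s : Set (sphere (0 : V) 1)} (hs : s.Countable) : IsPathConnected sᶜ := by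
  obtain rfl | ⟨v, hv⟩ := s.eq_empty_or_nonempty
  · rw [Set.compl_empty, ← pathConnectedSpace_iff_univ]
    exact isPathConnected_iff_pathConnectedSpace.1
      (isPathConnected_sphere (Cardinal.one_lt_two.trans hV) 0 zero_le_one)
  set ψ := (stereographic (norm_eq_of_mem_sphere v)).symm
  have hψ : IsOpenEmbedding ψ := isOpenEmbedding_stereographic_symm _
  have himage : ψ '' (ψ ⁻¹' s)ᶜ = sᶜ := by
    rw [← Set.preimage_compl, Set.image_preimage_eq_inter_range, range_stereographic_symm _ v.2,
      Set.inter_eq_left, Set.compl_subset_compl, Set.singleton_subset_iff]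
    exact hv
  rw [← himage]
  exact ((hs.preimage hψ.injective).isPathConnected_compl_of_one_lt_rank
    (one_lt_rank_orthogonal_span_singleton hV _)).image hψ.continuous

theorem simplyConnectedSpace_sphere (hV : 2 < Module.rank ℝ V) :
    SimplyConnectedSpace (sphere (0 : V) 1) := by
  have hne : ∀ v w : sphere (0 : V) 1, IsPathConnected ({v}ᶜ ∩ {w}ᶜ) := fun v w ↦ by
    rw [← Set.compl_union]
    exact isPathConnected_compl_sphere_of_countable hV (by simp)
  have : Nontrivial V := (rank_pos_iff_nontrivial (R := ℝ)).1 (pos_of_gt hV)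
  obtain ⟨x₀, hx₀⟩ := (NormedSpace.sphere_nonempty (x := (0 : V)) (r := 1)).2 zero_le_one
  lift x₀ to sphere (0 : V) 1 using hx₀
  refine simplyConnectedSpace_of_isSimplyConnected_open_cover
    (U := fun v : {v : sphere (0 : V) 1 // v ≠ x₀} ↦ {v.1}ᶜ) (x₀ := x₀)
    (fun _ ↦ isOpen_compl_singleton) (fun v ↦ isSimplyConnected_compl_singleton_sphere v.1)
    (fun v w ↦ hne v.1 w.1) (fun x ↦ ?_) fun v ↦ v.2.symm
  obtain ⟨v, hvx₀, hvx⟩ := (hne x₀ x).nonempty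
  exact ⟨⟨v, hvx₀⟩, Ne.symm hvx⟩

theorem locallyPathConnectedSpace_sphere {m : ℕ} (hV : finrank ℝ V = m + 1) :
    LocallyPathConnectedSpace (sphere (0 : V) 1) :=
  have : Fact (finrank ℝ V = m + 1) := ⟨hV⟩
  ChartedSpace.locallyPathConnectedSpace (EuclideanSpace ℝ (Fin m)) _

end SphereConnectedness

section SphereHomotopy

variable {V X : Type*} [NormedAddCommGroup V] [TopologicalSpace X]

theorem homotopic_of_forall_ne_neg [NormedSpace ℝ V] {f g : C(X, sphere (0 : V) 1)}
    (h : ∀ x, f x ≠ -g x) : f.Homotopic g := by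
  let L (p : I × X) : V := AffineMap.lineMap (f p.2 : V) (g p.2 : V) (p.1 : ℝ)
  have hL : Continuous L := by
    simp only [L, AffineMap.lineMap_apply_module]
    fun_prop
  have hL₀ : ∀ p, L p ≠ 0 := by
    rintro ⟨t, x⟩ hp
    have hfg : (1 - t : ℝ) • (f x : V) = (t : ℝ) • ((-g x : sphere (0 : V) 1) : V) := by
      simpa [L, AffineMap.lineMap_apply_module, add_eq_zero_iff_eq_neg] using hp
    have ht : (1 - t : ℝ) = t := by
      simpa [norm_smul, abs_of_nonneg, t.2.1, t.2.2] using congrArg norm hfg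
    have ht₀ : (t : ℝ) ≠ 0 := fun h₀ ↦ by simp [h₀] at ht
    rw [ht] at hfg
    exact h x (Subtype.ext (smul_right_injective V ht₀ hfg))
  exact ⟨{
    toFun := fun p ↦ ⟨‖L p‖⁻¹ • L p, by simp [norm_smul, hL₀ p]⟩
    continuous_toFun := continuous_induced_rng.2 <|
      (hL.norm.inv₀ fun p ↦ norm_ne_zero_iff.2 (hL₀ p)).smul hL
    map_zero_left := fun x ↦ Subtype.ext (by simp [L])
    map_one_left := fun x ↦ Subtype.ext (by simp [L]) }⟩

theorem homotopic_id_neg_sphere [NormedSpace ℝ V] {W : Type*} [NormedAddCommGroup W]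
    [NormedSpace ℂ W] (e : V ≃ₗᵢ[ℝ] W) (r : ℝ) :
    (ContinuousMap.id (sphere (0 : V) r)).Homotopic ⟨Neg.neg, continuous_neg⟩ :=
  ⟨{
    toFun := fun p ↦ ⟨e.symm (Circle.exp (Real.pi * p.1) • e p.2), by
      rw [mem_sphere_zero_iff_norm, e.symm.norm_map, Circle.norm_smul, e.norm_map,
        norm_eq_of_mem_sphere]⟩
    continuous_toFun := by fun_prop
    map_zero_left := fun x ↦ Subtype.ext (by simp)
    map_one_left := fun x ↦ Subtype.ext (by simp [Circle.smul_def]) }⟩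

variable [InnerProductSpace ℝ V] [FiniteDimensional ℝ V]

theorem nonempty_linearIsometryEquiv_complex_of_even_finrank (hV : Even (finrank ℝ V)) :
    ∃ k, Nonempty (V ≃ₗᵢ[ℝ] EuclideanSpace ℂ (Fin k)) := by
  obtain ⟨k, hk⟩ := hV
  have hfin : finrank ℝ V = finrank ℝ (EuclideanSpace ℂ (Fin k)) := by
    rw [hk, ← finrank_mul_finrank ℝ ℂ, Complex.finrank_real_complex, finrank_euclideanSpace_fin,
      two_mul]
  exact ⟨k, ⟨(stdOrthonormalBasis ℝ V).equiv (stdOrthonormalBasis ℝ _) (finCongr hfin)⟩⟩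

theorem homotopic_of_forall_ne_of_even_finrank (hV : Even (finrank ℝ V))
    {f g : C(X, sphere (0 : V) 1)} (h : ∀ x, f x ≠ g x) : f.Homotopic g := by
  obtain ⟨k, ⟨e⟩⟩ := nonempty_linearIsometryEquiv_complex_of_even_finrank hV
  let A : C(sphere (0 : V) 1, sphere (0 : V) 1) := ⟨Neg.neg, continuous_neg⟩
  have hf : f.Homotopic (A.comp g) := homotopic_of_forall_ne_neg fun x ↦ by simpa [A] using h x
  exact hf.trans ((homotopic_id_neg_sphere e 1).symm.comp (.refl g))

end SphereHomotopy

theorem card_le_card_connectedComponents_of_isLocallyConstant {X ι : Type*} [TopologicalSpace X]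
    {φ : X → ι} (hφ : IsLocallyConstant φ) (hsurj : φ.Surjective) :
    ENat.card ι ≤ ENat.card (ConnectedComponents X) := by
  let : TopologicalSpace ι := ⊥
  have : DiscreteTopology ι := ⟨rfl⟩
  have hlift : hφ.continuous.connectedComponentsLift.Surjective :=
    .of_comp (g := ((↑) : X → ConnectedComponents X)) hsurj
  exact ENat.card_le_card_of_injective (Function.injective_surjInv hlift)

theorem exists_continuousMap_lift {M E N : Type*} [TopologicalSpace M] [SimplyConnectedSpace M]
    [LocallyPathConnectedSpace M] [TopologicalSpace E] [TopologicalSpace N] {q : E → N}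
    (hq : IsCoveringMap q) (hsurj : q.Surjective) (f : C(M, N)) :
    ∃ F : C(M, E), ∀ x, q (F x) = f x := by
  obtain ⟨a⟩ : Nonempty M := inferInstance
  obtain ⟨e, he⟩ := hsurj (f a)
  obtain ⟨F, ⟨-, hF⟩, -⟩ := hq.existsUnique_continuousMap_lifts f a e he
  exact ⟨F, congrFun hF⟩

theorem isQuotientCoveringMap_quotientMk_of_finite {E G : Type*} [TopologicalSpace E] [T2Space E]
    [WeaklyLocallyCompactSpace E] [Group G] [Finite G] [MulAction G E]
    (hcont : ∀ g : G, Continuous fun x : E ↦ g • x) (hfree : ∀ (g : G) (x : E), g • x = x → g = 1) :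
    IsQuotientCoveringMap (Quotient.mk (MulAction.orbitRel G E)) G :=
  have : ContinuousConstSMul G E := ⟨hcont⟩
  have : IsCancelSMul G E := isCancelSMul_iff_eq_one_of_smul_eq.2 hfree
  isQuotientCoveringMap_quotientMk_of_properlyDiscontinuousSMul

section QuotientCovering

variable {E N G : Type*} [TopologicalSpace E] [TopologicalSpace N] [Group G] [MulAction G E]
  {q : E → N} {M : Type*} [TopologicalSpace M]

theorem isLocallyConstant_of_smul_eq (hq : IsQuotientCoveringMap q G) {φ : M → G} {F₁ F₂ : M → E}
    (hF₁ : Continuous F₁) (hF₂ : Continuous F₂) (hφ : ∀ x, φ x • F₂ x = F₁ x) :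
    IsLocallyConstant φ := by
  have := hq.toContinuousConstSMul
  refine (IsLocallyConstant.iff_eventually_eq φ).2 fun a ↦ ?_
  obtain ⟨U, hU, hdisj⟩ := hq.disjoint (F₁ a)
  have hU₁ : ∀ᶠ x in 𝓝 a, F₁ x ∈ U := hF₁.continuousAt hU
  have hU₂ : ∀ᶠ x in 𝓝 a, φ a • F₂ x ∈ U :=
    (hF₂.const_smul (φ a)).continuousAt (by simpa [hφ] using hU)
  filter_upwards [hU₁, hU₂] with x hx₁ hx₂
  have htranslate : (φ x * (φ a)⁻¹) • φ a • F₂ x = F₁ x := by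
    rw [smul_smul, inv_mul_cancel_right, hφ]
  exact mul_inv_eq_one.1 (hdisj _ ⟨F₁ x, ⟨_, hx₂, htranslate⟩, hx₁⟩)

theorem card_le_card_connectedComponents_coincidence (hq : IsQuotientCoveringMap q G)
    {f₁ f₂ : C(M, N)} {F₁ F₂ : C(M, E)} (hF₁ : ∀ x, q (F₁ x) = f₁ x)
    (hF₂ : ∀ x, q (F₂ x) = f₂ x) (hmeet : ∀ g : G, ∃ x, g • F₂ x = F₁ x) :
    ENat.card G ≤ ENat.card (ConnectedComponents {x // f₁ x = f₂ x}) := by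
  have hexists (x : {x // f₁ x = f₂ x}) : ∃ g : G, g • F₂ x = F₁ x :=
    hq.apply_eq_iff_mem_orbit.1 ((hF₁ x).trans (x.2.trans (hF₂ x).symm))
  choose φ hφ using hexists
  refine card_le_card_connectedComponents_of_isLocallyConstant
    (isLocallyConstant_of_smul_eq hq (F₁.continuous.comp continuous_subtype_val)
      (F₂.continuous.comp continuous_subtype_val) hφ) fun g ↦ ?_
  obtain ⟨x, hx⟩ := hmeet g
  have := hq.isCancelSMul
  exact ⟨⟨x, by rw [← hF₁, ← hF₂, ← hx, hq.map_smul]⟩,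
    IsCancelSMul.right_cancel _ _ _ ((hφ _).trans hx.symm)⟩

theorem homotopic_comp_of_homotopic_smul (hq : IsQuotientCoveringMap q G) {f₁ f₂ : C(M, N)}
    {F₁ F₂ K : C(M, E)} (hF₁ : ∀ x, q (F₁ x) = f₁ x) (hF₂ : ∀ x, q (F₂ x) = f₂ x) {g : G}
    (hK : ∀ x, K x = g • F₂ x) (h : F₁.Homotopic K) : f₁.Homotopic f₂ := by
  let Q : C(E, N) := ⟨q, hq.continuous⟩
  have hf₁ : Q.comp F₁ = f₁ := ContinuousMap.ext hF₁
  have hf₂ : Q.comp K = f₂ := ContinuousMap.ext fun x ↦ by simp [Q, hK, hq.map_smul, hF₂]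
  exact hf₁ ▸ hf₂ ▸ (ContinuousMap.Homotopic.refl Q).comp h

end QuotientCovering

theorem coincidence_set_lower_bound_of_not_homotopic_sphere_space_form_general
    {M V N G : Type*} [TopologicalSpace M] [SimplyConnectedSpace M] [LocallyPathConnectedSpace M]
    [NormedAddCommGroup V] [InnerProductSpace ℝ V] [FiniteDimensional ℝ V]
    (hV : Even (finrank ℝ V)) [Group G] [MulAction G (sphere (0 : V) 1)] [TopologicalSpace N]
    {q : sphere (0 : V) 1 → N} (hq : IsQuotientCoveringMap q G) {f₁ f₂ f₁' f₂' : C(M, N)}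
    (h : ¬ f₁.Homotopic f₂) (h₁ : f₁'.Homotopic f₁) (h₂ : f₂'.Homotopic f₂) :
    {x | f₁' x = f₂' x}.Nonempty ∧
      ENat.card G ≤ ENat.card (ConnectedComponents {x // f₁' x = f₂' x}) := by
  have := hq.toContinuousConstSMul
  obtain ⟨F₁, hF₁⟩ := exists_continuousMap_lift hq.isCoveringMap hq.surjective f₁'
  obtain ⟨F₂, hF₂⟩ := exists_continuousMap_lift hq.isCoveringMap hq.surjective f₂'
  have hmeet (g : G) : ∃ x, g • F₂ x = F₁ x := by
    by_contra! hne
    let K : C(M, sphere (0 : V) 1) := ⟨fun x ↦ g • F₂ x, by fun_prop⟩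
    have hF₁K : F₁.Homotopic K :=
      homotopic_of_forall_ne_of_even_finrank hV fun x ↦ (hne x).symm
    have hf : f₁'.Homotopic f₂' :=
      homotopic_comp_of_homotopic_smul hq hF₁ hF₂ (fun _ ↦ rfl) hF₁K
    exact h (h₁.symm.trans (hf.trans h₂))
  obtain ⟨x, hx⟩ := hmeet 1
  refine ⟨⟨x, by simp [← hF₁, ← hF₂, ← hx]⟩, ?_⟩
  exact card_le_card_connectedComponents_coincidence hq hF₁ hF₂ hmeet

theorem coincidence_set_lower_bound_of_not_homotopic_sphere_space_form
    (n : ℕ) (hn : 1 ≤ n) (hodd : Odd n)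
    (G : Type*) [Group G] [Finite G]
    [MulAction G (Metric.sphere (0 : EuclideanSpace ℝ (Fin (n + 1))) 1)]
    (hcont : ∀ g : G,
      Continuous fun x : Metric.sphere (0 : EuclideanSpace ℝ (Fin (n + 1))) 1 => g • x)
    (hfree : ∀ (g : G) (x : Metric.sphere (0 : EuclideanSpace ℝ (Fin (n + 1))) 1),
      g • x = x → g = 1)
    (m : ℕ) (hm : 1 < m)
    (f₁ f₂ f₁' f₂' : C(Metric.sphere (0 : EuclideanSpace ℝ (Fin (m + 1))) 1,
      Quotient (MulAction.orbitRel G (Metric.sphere (0 : EuclideanSpace ℝ (Fin (n + 1))) 1))))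
    (h : ¬ f₁.Homotopic f₂)
    (h₁ : f₁'.Homotopic f₁) (h₂ : f₂'.Homotopic f₂) :
    {x | f₁' x = f₂' x}.Nonempty ∧
      (Nat.card G : ℕ∞) ≤
        ENat.card (ConnectedComponents
          {x : Metric.sphere (0 : EuclideanSpace ℝ (Fin (m + 1))) 1 // f₁' x = f₂' x}) := by
  have : SimplyConnectedSpace (sphere (0 : EuclideanSpace ℝ (Fin (m + 1))) 1) :=
    simplyConnectedSpace_sphere (by
      rw [← finrank_eq_rank, finrank_euclideanSpace_fin]
      exact_mod_cast Nat.succ_lt_succ hm)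
  have := locallyPathConnectedSpace_sphere (V := EuclideanSpace ℝ (Fin (m + 1)))
    finrank_euclideanSpace_fin
  rw [← ENat.card_eq_coe_natCard]
  exact coincidence_set_lower_bound_of_not_homotopic_sphere_space_form_general
    (by simpa using hodd.add_one) (isQuotientCoveringMap_quotientMk_of_finite hcont hfree) h h₁ h₂
end

section
/- Let f₁, f₂ : S¹ → S¹ be continuous self-maps of the circle (the unit circle in ℂ) such that f₁ is homotopic to the map z ↦ z^{d₁} and f₂ is homotopic to the map z ↦ z^{d₂}, where d₁, d₂ ∈ ℤ (so d₁, d₂ are the degrees of f₁ and f₂). Then MCC(f₁, f₂) = |d₁ − d₂|. -/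
/-!
Dividing maps into the circle turns coincidences of `g₁` and `g₂` into roots of `g₁ / g₂`, a map
homotopic to `z ↦ z ^ d` with `d = d₁ - d₂`. If `d ≠ 0`, lifting the homotopy along `Circle.exp`
writes any such map as `r ^ d` for some `r` homotopic to the identity, and `r` is surjective because
it lifts to a self-map of `ℝ` at bounded distance from the identity. Hence the root set surjects
onto the discrete set of solutions of `z ^ d = 1`, so it has at least `|d|` components. The power
map itself attains this bound if `d ≠ 0`, and the constant map `-1` does if `d = 0`.
-/

open ContinuousMap Function

theorem enatCard_le_of_surjective {α β : Type*} {f : α → β} (hf : Surjective f) :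
    ENat.card β ≤ ENat.card α :=
  ENat.card_le_card_of_injective (injective_surjInv hf)

section ConnectedComponents

variable {X Y : Type*} [TopologicalSpace X] [TopologicalSpace Y]

theorem enatCard_connectedComponents_subtype_congr {p q : X → Prop} (h : ∀ x, p x ↔ q x) :
    ENat.card (ConnectedComponents {x // p x}) = ENat.card (ConnectedComponents {x // q x}) := by
  obtain rfl : p = q := funext fun x ↦ propext (h x)
  rfl

theorem enatCard_connectedComponents_le_enatCard :
    ENat.card (ConnectedComponents X) ≤ ENat.card X :=
  enatCard_le_of_surjective ConnectedComponents.surjective_coe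

theorem enatCard_le_enatCard_connectedComponents [TotallyDisconnectedSpace Y] {f : X → Y}
    (hf : Continuous f) (hsurj : Surjective f) :
    ENat.card Y ≤ ENat.card (ConnectedComponents X) :=
  enatCard_le_of_surjective (f := hf.connectedComponentsLift) <|
    .of_comp (g := ConnectedComponents.mk) <| by rwa [hf.connectedComponentsLift_comp_coe]

end ConnectedComponents

section TopologicalGroup

variable {X G : Type*} [TopologicalSpace X] [TopologicalSpace G]

theorem homotopic_div [Div G] [ContinuousDiv G] {f₁ f₂ g₁ g₂ : C(X, G)}
    (h₁ : f₁.Homotopic g₁) (h₂ : f₂.Homotopic g₂) : (f₁ / f₂).Homotopic (g₁ / g₂) :=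
  (Homotopic.refl ⟨fun p : G × G ↦ p.1 / p.2, by fun_prop⟩).comp (h₁.prodMk h₂)

theorem MCC_eq_iInf_div [Group G] [IsTopologicalGroup G] (f₁ f₂ : C(X, G)) :
    MCC f₁ f₂ = ⨅ (g : C(X, G)) (_ : g.Homotopic (f₁ / f₂)),
      ENat.card (ConnectedComponents {x : X // g x = 1}) := by
  refine le_antisymm (le_iInf₂ fun g hg ↦ ?_)
    (le_iInf₂ fun g₁ h₁ ↦ le_iInf₂ fun g₂ h₂ ↦ ?_)
  · have hgf : (g * f₂).Homotopic f₁ := by simpa using homotopic_div hg (.refl f₂⁻¹)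
    exact (iInf₂_le_of_le (g * f₂) hgf (iInf₂_le f₂ (.refl f₂))).trans_eq <|
      enatCard_connectedComponents_subtype_congr fun _ ↦ mul_eq_right
  · have hdiv : (g₁ / g₂).Homotopic (f₁ / f₂) := homotopic_div h₁ h₂
    exact (iInf₂_le (g₁ / g₂) hdiv).trans_eq <|
      enatCard_connectedComponents_subtype_congr fun _ ↦ div_eq_one

end TopologicalGroup

theorem enatCard_zpow_eq_one {G : Type*} [CommGroup G] {d : ℤ} [NeZero d.natAbs]
    [HasEnoughRootsOfUnity G d.natAbs] : ENat.card {z : G // z ^ d = 1} = d.natAbs := by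
  have e : {z : G // z ^ d = 1} ≃ rootsOfUnity d.natAbs G :=
    toUnits.toEquiv.subtypeEquiv fun z ↦ by simp [pow_natAbs_eq_one, ← map_zpow]
  rw [ENat.card_congr e, ENat.card_eq_coe_natCard, HasEnoughRootsOfUnity.natCard_rootsOfUnity]

section Circle

variable {X : Type*} [TopologicalSpace X]

theorem homotopic_mul_exp (f : C(X, Circle)) (φ : C(X, ℝ)) :
    (f * Circle.exp.comp φ).Homotopic f :=
  .symm ⟨{
    toFun p := f p.2 * Circle.exp (p.1 * φ p.2)
    continuous_toFun := by fun_prop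
    map_zero_left _ := by simp
    map_one_left _ := by simp }⟩

variable {f g : C(X, Circle)}

theorem exists_eq_mul_exp_of_homotopic (h : f.Homotopic g) :
    ∃ φ : C(X, ℝ), f = g * Circle.exp.comp φ := by
  obtain ⟨H⟩ := h.symm
  let K : C(unitInterval × X, Circle) := ⟨fun p ↦ H p / g p.2, by fun_prop⟩
  have hK (x : X) : K (0, x) = Circle.exp ((0 : C(X, ℝ)) x) := by simp [K]
  let L := Circle.isCoveringMap_exp.liftHomotopy K 0 hK
  have hL (x : X) : Circle.exp (L (1, x)) = f x / g x := by
    have hLK : Circle.exp (L (1, x)) = K (1, x) :=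
      congr_fun (Circle.isCoveringMap_exp.liftHomotopy_lifts K 0 hK) (1, x)
    simp [hLK, K]
  exact ⟨⟨fun x ↦ L (1, x), by fun_prop⟩, by ext1 x; simp [hL]⟩

theorem exists_homotopic_zpow_eq {d : ℤ} (hd : d ≠ 0) (h : f.Homotopic (g ^ d)) :
    ∃ r : C(X, Circle), r.Homotopic g ∧ r ^ d = f := by
  obtain ⟨φ, rfl⟩ := exists_eq_mul_exp_of_homotopic h
  refine ⟨g * Circle.exp.comp ((d : ℝ)⁻¹ • φ), homotopic_mul_exp _ _, ?_⟩
  ext1 x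
  simp [mul_zpow, ← Circle.exp_intCast_mul, hd]

theorem surjective_of_homotopic_id {r : C(Circle, Circle)} (h : r.Homotopic (.id Circle)) :
    Surjective r := by
  obtain ⟨φ, rfl⟩ := exists_eq_mul_exp_of_homotopic h
  obtain ⟨b, hb⟩ := (isCompact_range φ.continuous).bddAbove
  obtain ⟨a, ha⟩ := (isCompact_range φ.continuous).bddBelow
  intro w
  obtain ⟨s, rfl⟩ : ∃ s, Circle.exp s = w := ⟨_, Circle.exp_arg w⟩
  have hcont : Continuous fun t : ℝ ↦ t + φ (Circle.exp t) := by fun_prop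
  have hle : (s - b) + φ (Circle.exp (s - b)) ≤ s := by
    linarith [hb (Set.mem_range_self (Circle.exp (s - b)))]
  have hge : s ≤ (s - a) + φ (Circle.exp (s - a)) := by
    linarith [ha (Set.mem_range_self (Circle.exp (s - a)))]
  obtain ⟨t, ht⟩ := mem_range_of_exists_le_of_exists_ge hcont ⟨_, hle⟩ ⟨_, hge⟩
  exact ⟨Circle.exp t, by simp [← Circle.exp_add, ht]⟩

theorem natAbs_le_enatCard_connectedComponents_of_homotopic_zpow {d : ℤ}
    (hg : ∀ r : C(X, Circle), r.Homotopic g → Surjective r) (h : f.Homotopic (g ^ d)) :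
    d.natAbs ≤ ENat.card (ConnectedComponents {x : X // f x = 1}) := by
  rcases eq_or_ne d 0 with rfl | hd
  · simp
  obtain ⟨r, hr, rfl⟩ := exists_homotopic_zpow_eq hd h
  have : NeZero d.natAbs := ⟨Int.natAbs_ne_zero.mpr hd⟩
  have hcard : ENat.card {z : Circle // z ^ d = 1} = d.natAbs := enatCard_zpow_eq_one
  have : Finite {z : Circle // z ^ d = 1} := by simp [← ENat.card_lt_top, hcard]
  rw [← hcard]
  exact enatCard_le_enatCard_connectedComponents
    (r.continuous.restrictPreimage (s := {z | z ^ d = 1}))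
    (Set.restrictPreimage_surjective _ (hg r hr))

theorem exists_homotopic_zpow_enatCard_eq (d : ℤ) :
    ∃ f : C(Circle, Circle), f.Homotopic (.id Circle ^ d) ∧
      ENat.card {z : Circle // f z = 1} = d.natAbs := by
  rcases eq_or_ne d 0 with rfl | hd
  · refine ⟨_, homotopic_mul_exp _ (.const Circle Real.pi), ?_⟩
    simpa [Circle.exp_pi_ne_one, ENat.card_eq_zero_iff_empty] using Subtype.isEmpty_false
  · have : NeZero d.natAbs := ⟨Int.natAbs_ne_zero.mpr hd⟩
    exact ⟨_, .refl _, enatCard_zpow_eq_one⟩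

end Circle

theorem mcc_circle_eq_abs_sub_degree (d₁ d₂ : ℤ) (f₁ f₂ : C(Circle, Circle))
    (h₁ : f₁.Homotopic ⟨fun z => z ^ d₁, continuous_zpow d₁⟩)
    (h₂ : f₂.Homotopic ⟨fun z => z ^ d₂, continuous_zpow d₂⟩) :
    MCC f₁ f₂ = ((d₁ - d₂).natAbs : ℕ∞) := by
  have hdiv : (f₁ / f₂).Homotopic (.id Circle ^ (d₁ - d₂)) := by
    rw [zpow_sub, ← div_eq_mul_inv]
    exact homotopic_div h₁ h₂
  rw [MCC_eq_iInf_div]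
  apply le_antisymm
  · obtain ⟨g, hg, hcard⟩ := exists_homotopic_zpow_enatCard_eq (d₁ - d₂)
    have hgdiv : g.Homotopic (f₁ / f₂) := hg.trans hdiv.symm
    calc
      _ ≤ ENat.card (ConnectedComponents {z // g z = 1}) := iInf₂_le g hgdiv
      _ ≤ ENat.card {z // g z = 1} := enatCard_connectedComponents_le_enatCard
      _ = (d₁ - d₂).natAbs := hcard
  · exact le_iInf₂ fun g hg ↦ natAbs_le_enatCard_connectedComponents_of_homotopic_zpow
      (fun _ ↦ surjective_of_homotopic_id) (hg.trans hdiv)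
end
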